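/- arXiv:1811.02031 — 8 statements merged into one kernel-verified Lean document; each statement's English description precedes it below -/
import Mathlib

section
/- Let D' be a real symmetric 4×4 matrix and let η = diag(η₁,…,η₆) be a diagonal real 6×6 matrix with all diagonal entries strictly positive. Then the function w ↦ exp(iπ·tr(wᵀ(i·1₄ + D')w·η)) on the space of real 4×6 matrices is integrable with respect to Lebesgue measure, and ∫_{M_{4×6}(ℝ)} exp(iπ·tr(wᵀ(i·1₄ + D')w·η)) dw = (η₁η₂η₃η₄η₅η₆)^{−2} · det(i·1₄ + D')^{−3}. (Here det(i·1₄ + D') ≠ 0 since D' is real symmetric, so the right-hand side is well defined; the exponent −3 is an integer power, so no branch choice is involved.) -/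
/-!
The spectral theorem gives `D' = U diag(λ) Uᵀ` with `U` real orthogonal. The substitution `w = U v`
preserves Lebesgue measure on `M_{4×6}(ℝ)`, and turns the integrand into the product over all
entries of the one-variable Gaussians `exp(-π (1 - iλₖ) ηⱼ vₖⱼ²)`. Each of them is integrable because
`Re ((1 - iλₖ) ηⱼ) = ηⱼ > 0`, with integral `ηⱼ^(-1/2) (1 - iλₖ)^(-1/2)`, where the principal branch
splits because `ηⱼ` is positive. In the product over the `4 × 6` entries, each `ηⱼ^(-1/2)` occurs
four times and each `(1 - iλₖ)^(-1/2)` six times, so all square roots disappear, and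
`∏ₖ (1 - iλₖ) = i⁻⁴ ∏ₖ (i + λₖ) = det (i + D')`.
-/

open MeasureTheory Matrix

/-- The Gaussian integrand `w ↦ exp(iπ · tr(wᵀ (i·1₄ + D') w · η))` on real 4×6 matrices. -/
noncomputable def gaussIntegrand (D' : Matrix (Fin 4) (Fin 4) ℝ) (η : Fin 6 → ℝ)
    (w : Fin 4 → Fin 6 → ℝ) : ℂ :=
  Complex.exp ((Real.pi : ℂ) * Complex.I *
    Matrix.trace
      (((Matrix.of w).map (Complex.ofReal))ᵀ *
        (Complex.I • (1 : Matrix (Fin 4) (Fin 4) ℂ) + D'.map Complex.ofReal) *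
        ((Matrix.of w).map (Complex.ofReal)) *
        Matrix.diagonal fun j => (η j : ℂ)))

/-- Left multiplication `w ↦ U w` on real `m × n` matrices, seen as functions `m → n → ℝ`. -/
def leftMul {m n : Type*} [Fintype m] (U : Matrix m m ℝ) :
    (m → n → ℝ) →ₗ[ℝ] (m → n → ℝ) where
  toFun w := U * Matrix.of w
  map_add' v w := Matrix.mul_add U (Matrix.of v) (Matrix.of w)
  map_smul' c w := Matrix.mul_smul U c (Matrix.of w)

lemma of_leftMul {m n : Type*} [Fintype m] (U : Matrix m m ℝ) (w : m → n → ℝ) :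
    Matrix.of (leftMul U w) = U * Matrix.of w := rfl

lemma sum_sq_eq_trace {m n : Type*} [Fintype m] [Fintype n] (w : m → n → ℝ) :
    ∑ i, ∑ j, w i j ^ 2 = Matrix.trace ((Matrix.of w)ᵀ * Matrix.of w) := by
  rw [Finset.sum_comm]
  simp [Matrix.trace, Matrix.mul_apply, sq]

/-- Left multiplication by an orthogonal matrix preserves Lebesgue measure: it scales the measure by
a constant, and it maps the unit ball of the Frobenius norm, whose measure is finite and nonzero,
onto itself. -/
lemma measurePreserving_leftMul {m n : Type*} [Fintype m] [Fintype n] [DecidableEq m]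
    (U : Matrix m m ℝ) (hU : Uᵀ * U = 1) :
    MeasurePreserving (leftMul (n := n) U) volume volume := by
  have hdet : LinearMap.det (leftMul (n := n) U) ≠ 0 := by
    have h : (leftMul (n := n) Uᵀ) ∘ₗ (leftMul U) = LinearMap.id := by
      refine LinearMap.ext fun w => ?_
      change Uᵀ * (U * Matrix.of w) = Matrix.of w
      rw [← Matrix.mul_assoc, hU, Matrix.one_mul]
    have h2 := congrArg LinearMap.det h
    rw [LinearMap.det_comp, LinearMap.det_id] at h2
    exact right_ne_zero_of_mul_eq_one h2
  let B : Set (m → n → ℝ) := {w | ∑ i, ∑ j, w i j ^ 2 < 1}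
  have hBinv : leftMul U ⁻¹' B = B := by
    ext w
    change (∑ i, ∑ j, (leftMul U w) i j ^ 2 < 1) ↔ (∑ i, ∑ j, w i j ^ 2 < 1)
    rw [sum_sq_eq_trace, sum_sq_eq_trace, of_leftMul, Matrix.transpose_mul, Matrix.mul_assoc,
      ← Matrix.mul_assoc Uᵀ, hU, Matrix.one_mul]
  have hBopen : IsOpen B := isOpen_lt (by fun_prop) continuous_const
  have hBpos : volume B ≠ 0 := (hBopen.measure_pos volume ⟨0, by simp [B]⟩).ne'
  have hBfin : volume B ≠ ⊤ := by
    have hsub : B ⊆ Metric.closedBall 0 1 := by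
      intro w hw
      rw [mem_closedBall_zero_iff, pi_norm_le_iff_of_nonneg zero_le_one]
      intro i
      rw [pi_norm_le_iff_of_nonneg zero_le_one]
      intro j
      have h1 : w i j ^ 2 ≤ ∑ j, w i j ^ 2 :=
        Finset.single_le_sum (f := fun j => w i j ^ 2) (fun _ _ => sq_nonneg _) (Finset.mem_univ j)
      have h2 : ∑ j, w i j ^ 2 ≤ ∑ i, ∑ j, w i j ^ 2 :=
        Finset.single_le_sum (f := fun i => ∑ j, w i j ^ 2)
          (fun _ _ => Finset.sum_nonneg fun _ _ => sq_nonneg _) (Finset.mem_univ i)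
      have h3 : ∑ i, ∑ j, w i j ^ 2 < 1 := hw
      rw [Real.norm_eq_abs, ← sq_le_one_iff_abs_le_one]
      linarith
    exact ((measure_mono hsub).trans_lt measure_closedBall_lt_top).ne
  have hc : ENNReal.ofReal |(LinearMap.det (leftMul (n := n) U))⁻¹| = 1 := by
    have h := Measure.addHaar_preimage_linearMap volume hdet B
    rw [hBinv] at h
    exact (ENNReal.mul_eq_right hBpos hBfin).1 h.symm
  refine ⟨(LinearMap.continuous_of_finiteDimensional _).measurable, ?_⟩
  rw [Measure.map_linearMap_addHaar_eq_smul_addHaar volume hdet, hc, one_smul]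

/-- The one-variable Gaussian integral attached to an eigenvalue `l` and a weight `e > 0`. -/
lemma gauss_one (l e : ℝ) (he : 0 < e) :
    Integrable (fun x : ℝ => Complex.exp (-(Real.pi * (1 - Complex.I * l) * e) * (x : ℂ) ^ 2)) ∧
    ∫ x : ℝ, Complex.exp (-(Real.pi * (1 - Complex.I * l) * e) * (x : ℂ) ^ 2) =
      ((e⁻¹ : ℝ) : ℂ) ^ (1 / 2 : ℂ) * ((1 - Complex.I * l)⁻¹) ^ (1 / 2 : ℂ) := by
  have hre : 0 < (Real.pi * (1 - Complex.I * l) * e : ℂ).re := by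
    have : (Real.pi * (1 - Complex.I * l) * e : ℂ).re = Real.pi * e := by simp
    rw [this]; positivity
  refine ⟨integrable_cexp_neg_mul_sq hre, ?_⟩
  have h1 : (1 - Complex.I * l : ℂ) ≠ 0 := by
    intro h
    simpa using congrArg Complex.re h
  have h2 : (Real.pi : ℂ) ≠ 0 := by exact_mod_cast Real.pi_ne_zero
  have h3 : (e : ℂ) ≠ 0 := by exact_mod_cast he.ne'
  have he' : 0 < e⁻¹ := inv_pos.2 he
  have h4 : ((e⁻¹ : ℝ) : ℂ) ≠ 0 := by exact_mod_cast he'.ne'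
  have h5 : (Real.pi / (Real.pi * (1 - Complex.I * l) * e) : ℂ) =
      ((e⁻¹ : ℝ) : ℂ) * (1 - Complex.I * l)⁻¹ := by
    push_cast
    field_simp
  rw [integral_gaussian_complex hre, h5,
    Complex.cpow_def_of_ne_zero (mul_ne_zero h4 (inv_ne_zero h1)), Complex.cpow_def_of_ne_zero h4,
    Complex.cpow_def_of_ne_zero (inv_ne_zero h1), Complex.log_ofReal_mul he' (inv_ne_zero h1),
    Complex.ofReal_log he'.le, add_mul, Complex.exp_add]

/-- After diagonalisation, the integrand is a product of one-variable Gaussians. -/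
lemma gaussIntegrand_leftMul (D' U : Matrix (Fin 4) (Fin 4) ℝ) (l : Fin 4 → ℝ) (hU : Uᵀ * U = 1)
    (hD : Uᵀ * D' * U = Matrix.diagonal l) (η : Fin 6 → ℝ) (v : Fin 4 → Fin 6 → ℝ) :
    gaussIntegrand D' η (leftMul U v) =
      ∏ k, ∏ j, Complex.exp (-(Real.pi * (1 - Complex.I * l k) * η j) * (v k j : ℂ) ^ 2) := by
  have hUc : (U.map Complex.ofReal)ᵀ * U.map Complex.ofReal = 1 := by
    have := congrArg (fun M => M.map Complex.ofRealHom) hU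
    simp only [Matrix.map_mul, Matrix.transpose_map, Matrix.map_one, map_zero, map_one] at this
    exact this
  have hDc : (U.map Complex.ofReal)ᵀ * D'.map Complex.ofReal * U.map Complex.ofReal =
      Matrix.diagonal fun k => (l k : ℂ) := by
    have := congrArg (fun M => M.map Complex.ofRealHom) hD
    simp only [Matrix.map_mul, Matrix.transpose_map, Matrix.diagonal_map,
      Complex.ofRealHom_eq_coe, map_zero] at this
    exact this
  have hw : (Matrix.of (leftMul U v)).map Complex.ofReal =
      U.map Complex.ofReal * (Matrix.of v).map Complex.ofReal := by
    rw [of_leftMul]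
    exact Matrix.map_mul (f := Complex.ofRealHom)
  have hconj : (U.map Complex.ofReal)ᵀ *
      (Complex.I • (1 : Matrix (Fin 4) (Fin 4) ℂ) + D'.map Complex.ofReal) * U.map Complex.ofReal =
      Matrix.diagonal fun k => Complex.I + l k := by
    rw [Matrix.mul_add, Matrix.add_mul, hDc, Matrix.mul_smul, Matrix.mul_one, Matrix.smul_mul, hUc]
    ext a b
    by_cases h : a = b
    · subst h; simp
    · simp [h]
  have htr : Matrix.trace
      (((Matrix.of (leftMul U v)).map (Complex.ofReal))ᵀ *
        (Complex.I • (1 : Matrix (Fin 4) (Fin 4) ℂ) + D'.map Complex.ofReal) *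
        ((Matrix.of (leftMul U v)).map (Complex.ofReal)) *
        Matrix.diagonal fun j => (η j : ℂ)) =
      ∑ k, ∑ j, (Complex.I + l k) * η j * (v k j : ℂ) ^ 2 := by
    have hassoc : (U.map Complex.ofReal * (Matrix.of v).map Complex.ofReal)ᵀ *
        (Complex.I • (1 : Matrix (Fin 4) (Fin 4) ℂ) + D'.map Complex.ofReal) *
        (U.map Complex.ofReal * (Matrix.of v).map Complex.ofReal) =
        ((Matrix.of v).map Complex.ofReal)ᵀ * (Matrix.diagonal fun k => Complex.I + (l k : ℂ)) *
          (Matrix.of v).map Complex.ofReal := by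
      rw [← hconj, Matrix.transpose_mul]
      simp only [Matrix.mul_assoc]
    rw [hw, hassoc, Finset.sum_comm]
    simp only [Matrix.trace, Matrix.diag_apply, Matrix.mul_diagonal]
    refine Finset.sum_congr rfl fun j _ => ?_
    rw [Matrix.mul_apply, Finset.sum_mul]
    refine Finset.sum_congr rfl fun k _ => ?_
    simp only [Matrix.mul_diagonal, Matrix.transpose_apply, Matrix.map_apply, Matrix.of_apply]
    ring
  rw [gaussIntegrand, htr]
  simp only [← Complex.exp_sum, Finset.mul_sum]
  congr 1
  refine Finset.sum_congr rfl fun k _ => Finset.sum_congr rfl fun j _ => ?_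
  linear_combination (Real.pi * η j * (v k j : ℂ) ^ 2) * Complex.I_mul_I

/-- The determinant of `i + D'` in terms of a real diagonalisation of `D'`; `i⁴ = 1` allows to
replace `i + λ` by `1 - iλ`. -/
lemma det_eq_prod (D' U : Matrix (Fin 4) (Fin 4) ℝ) (l : Fin 4 → ℝ)
    (hU : U * Uᵀ = 1) (hD : D' = U * Matrix.diagonal l * Uᵀ) :
    Matrix.det (Complex.I • (1 : Matrix (Fin 4) (Fin 4) ℂ) + D'.map Complex.ofReal) =
      ∏ k, (1 - Complex.I * l k) := by
  have hUc : U.map Complex.ofReal * (U.map Complex.ofReal)ᵀ = 1 := by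
    have := congrArg (fun M => M.map Complex.ofRealHom) hU
    simp only [Matrix.map_mul, Matrix.transpose_map, Matrix.map_one, map_zero, map_one] at this
    exact this
  have hDc : D'.map Complex.ofReal = U.map Complex.ofReal *
      (Matrix.diagonal fun k => (l k : ℂ)) * (U.map Complex.ofReal)ᵀ := by
    have := congrArg (fun M => M.map Complex.ofRealHom) hD
    simp only [Matrix.map_mul, Matrix.transpose_map, Matrix.diagonal_map,
      Complex.ofRealHom_eq_coe, map_zero] at this
    exact this
  have hfac : Complex.I • (1 : Matrix (Fin 4) (Fin 4) ℂ) + D'.map Complex.ofReal =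
      U.map Complex.ofReal * (Matrix.diagonal fun k => Complex.I + (l k : ℂ)) *
        (U.map Complex.ofReal)ᵀ := by
    have hd : (Matrix.diagonal fun k => Complex.I + (l k : ℂ)) =
        Complex.I • (1 : Matrix (Fin 4) (Fin 4) ℂ) + Matrix.diagonal fun k => (l k : ℂ) := by
      ext a b
      by_cases h : a = b
      · subst h; simp
      · simp [h]
    rw [hd, Matrix.mul_add, Matrix.add_mul, ← hDc, Matrix.mul_smul, Matrix.mul_one,
      Matrix.smul_mul, hUc]
  have hdet := congrArg Matrix.det hUc
  rw [Matrix.det_mul, Matrix.det_one] at hdet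
  rw [hfac, Matrix.det_mul, Matrix.det_mul, mul_right_comm, hdet, one_mul, Matrix.det_diagonal]
  have hI (k : Fin 4) : Complex.I + l k = Complex.I * (1 - Complex.I * l k) := by
    linear_combination (l k : ℂ) * Complex.I_mul_I
  simp only [hI, Finset.prod_mul_distrib, Finset.prod_const, Finset.card_univ, Fintype.card_fin,
    Complex.I_pow_four, one_mul]

lemma exists_real_diagonalization (D' : Matrix (Fin 4) (Fin 4) ℝ) (hD' : D'.IsSymm) :
    ∃ (U : Matrix (Fin 4) (Fin 4) ℝ) (l : Fin 4 → ℝ), Uᵀ * U = 1 ∧ U * Uᵀ = 1 ∧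
      D' = U * Matrix.diagonal l * Uᵀ := by
  have hH : D'.IsHermitian := by
    rw [Matrix.IsHermitian, Matrix.conjTranspose_eq_transpose_of_trivial]; exact hD'
  have hs : (star hH.eigenvectorUnitary : Matrix (Fin 4) (Fin 4) ℝ) =
      (hH.eigenvectorUnitary : Matrix (Fin 4) (Fin 4) ℝ)ᵀ := by
    rw [Matrix.star_eq_conjTranspose, Matrix.conjTranspose_eq_transpose_of_trivial]
  refine ⟨hH.eigenvectorUnitary, hH.eigenvalues, ?_, ?_, ?_⟩
  · rw [← hs]; exact Unitary.coe_star_mul_self _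
  · rw [← hs]; exact Unitary.coe_mul_star_self _
  · have h := hH.spectral_theorem
    rw [Unitary.conjStarAlgAut_apply, hs] at h
    exact h

theorem stmt_0 (D' : Matrix (Fin 4) (Fin 4) ℝ) (hD' : D'.IsSymm)
    (η : Fin 6 → ℝ) (hη : ∀ j, 0 < η j) :
    Integrable (gaussIntegrand D' η) volume ∧
    ∫ w : Fin 4 → Fin 6 → ℝ, gaussIntegrand D' η w =
      ((∏ j, η j : ℝ) : ℂ) ^ (-2 : ℤ) *
        (Matrix.det
            (Complex.I • (1 : Matrix (Fin 4) (Fin 4) ℂ) + D'.map Complex.ofReal)) ^ (-3 : ℤ) := by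
  obtain ⟨U, l, hU, hU', hD⟩ := exists_real_diagonalization D' hD'
  have hdiag : Uᵀ * D' * U = Matrix.diagonal l := by
    rw [hD, ← Matrix.mul_assoc, ← Matrix.mul_assoc, hU, Matrix.one_mul, Matrix.mul_assoc, hU,
      Matrix.mul_one]
  have hmp := measurePreserving_leftMul (n := Fin 6) U hU
  have hemb : MeasurableEmbedding (leftMul (n := Fin 6) U) := by
    refine (LinearMap.continuous_of_finiteDimensional _).measurableEmbedding ?_
    refine Function.LeftInverse.injective (g := leftMul Uᵀ) fun w => ?_
    change Uᵀ * (U * Matrix.of w) = Matrix.of w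
    rw [← Matrix.mul_assoc, hU, Matrix.one_mul]
  have hcomp : gaussIntegrand D' η ∘ leftMul U = fun v => ∏ k, ∏ j,
      Complex.exp (-(Real.pi * (1 - Complex.I * l k) * η j) * (v k j : ℂ) ^ 2) :=
    funext fun v => gaussIntegrand_leftMul D' U l hU hdiag η v
  constructor
  · rw [← hmp.integrable_comp_emb hemb, hcomp]
    refine Integrable.fintype_prod (f := fun k (x : Fin 6 → ℝ) => ∏ j,
      Complex.exp (-(Real.pi * (1 - Complex.I * l k) * η j) * (x j : ℂ) ^ 2)) fun k => ?_
    exact Integrable.fintype_prod (f := fun j (x : ℝ) =>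
      Complex.exp (-(Real.pi * (1 - Complex.I * l k) * η j) * (x : ℂ) ^ 2))
      fun j => (gauss_one (l k) (η j) (hη j)).1
  · rw [← hmp.integral_comp hemb, det_eq_prod D' U l hU' hD]
    change ∫ v, (gaussIntegrand D' η ∘ leftMul U) v = _
    rw [hcomp, integral_fintype_prod_volume_eq_prod (fun k (x : Fin 6 → ℝ) => ∏ j,
      Complex.exp (-(Real.pi * (1 - Complex.I * l k) * η j) * (x j : ℂ) ^ 2))]
    simp_rw [fun k => integral_fintype_prod_volume_eq_prod (fun j (x : ℝ) =>
      Complex.exp (-(Real.pi * (1 - Complex.I * l k) * η j) * (x : ℂ) ^ 2)),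
      fun k j => (gauss_one (l k) (η j) (hη j)).2, Finset.prod_mul_distrib]
    have hsq (z : ℂ) : (z ^ (1 / 2 : ℂ)) ^ 2 = z := by
      simp
    have h4 (z : ℂ) : (z ^ (1 / 2 : ℂ)) ^ 4 = z ^ 2 := by
      rw [show 4 = 2 * 2 from rfl, pow_mul, hsq]
    have h6 (z : ℂ) : (z ^ (1 / 2 : ℂ)) ^ 6 = z ^ 3 := by
      rw [show 6 = 2 * 3 from rfl, pow_mul, hsq]
    simp only [Finset.prod_const, Finset.card_univ, Fintype.card_fin, ← Finset.prod_pow, h4, h6]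
    rw [_root_.zpow_neg, _root_.zpow_neg]
    norm_cast
    simp only [Finset.prod_pow, Finset.prod_inv_distrib, inv_pow]
end

section
/- For integers a, b and a positive integer c, let d = gcd(a,c) (with gcd(0,c) = c). If d does not divide b, then G(a,b,c) = 0. If d divides b, then G(a,b,c) = d · G(a/d, b/d, c/d). -/
/-!
Put `d = gcd(a, c)`, `a = d a'`, `c = d m`, and split the summation index as `j = k m + r` with
`k < d` and `r < m`. Since `a m` is a multiple of `c`, the phase `a j² + b j` is congruent to
`a r² + b r + b m k` modulo `c`, so the Gauss sum is the product of `∑_{k<d} exp(-2πi b k / d)` and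
a sum over `r < m` (`generalizedGaussSum_factor`). The first factor is a sum of powers of a `d`-th
root of unity: it is `0` when `d ∤ b` (`sum_exp_pow_eq_zero`) and `d` when `d ∣ b`. In the latter
case the common factor `d` cancels in every phase of the second factor, leaving the reduced Gauss
sum.
-/

open scoped BigOperators

/-- The generalized Gauss sum `G(a,b,c) = ∑_{j=0}^{c-1} exp(-2πi (a j² + b j)/c)`. -/
noncomputable def generalizedGaussSum (a b : ℤ) (c : ℕ) : ℂ :=
  ∑ j ∈ Finset.range c,
    Complex.exp (-2 * Real.pi * Complex.I *
      (((a * (j : ℤ) ^ 2 + b * (j : ℤ) : ℤ) : ℂ) / (c : ℂ)))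

/-- Decomposition of a range into `d` consecutive blocks of length `m`. -/
lemma sum_range_mul_blocks (f : ℕ → ℂ) (d m : ℕ) :
    ∑ j ∈ Finset.range (d * m), f j =
      ∑ k ∈ Finset.range d, ∑ r ∈ Finset.range m, f (k * m + r) := by
  induction d with
  | zero => simp
  | succ d ih => rw [Finset.sum_range_succ, ← ih, Nat.succ_mul, Finset.sum_range_add]

/-- Writing `j = k * m + r`, the quadratic part of the phase depends on `r` only, modulo `d * m`,
so the sum over `j` factors. -/
lemma generalizedGaussSum_factor (a b : ℤ) (d m : ℕ) (hd : 0 < d) (hm : 0 < m) :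
    generalizedGaussSum (d * a) b (d * m) =
      (∑ k ∈ Finset.range d, Complex.exp (-2 * Real.pi * Complex.I * (b / d)) ^ k) *
        ∑ r ∈ Finset.range m, Complex.exp (-2 * Real.pi * Complex.I *
          (((d * a * (r : ℤ) ^ 2 + b * (r : ℤ) : ℤ) : ℂ) / ((d * m : ℕ) : ℂ))) := by
  have hd' : (d : ℂ) ≠ 0 := by exact_mod_cast hd.ne'
  have hm' : (m : ℂ) ≠ 0 := by exact_mod_cast hm.ne'
  rw [generalizedGaussSum, sum_range_mul_blocks, Finset.sum_mul_sum]
  refine Finset.sum_congr rfl fun k _ => Finset.sum_congr rfl fun r _ => ?_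
  rw [← Complex.exp_nat_mul, ← Complex.exp_add, Complex.exp_eq_exp_iff_exists_int]
  -- `d a ((k m + r)² - r²) = (d m) · a (k² m + 2 k r)`
  refine ⟨-(a * (k ^ 2 * m + 2 * k * r)), ?_⟩
  push_cast
  field_simp
  ring

/-- The sum of the powers of a nontrivial `d`-th root of unity vanishes. -/
lemma sum_exp_pow_eq_zero (b : ℤ) (d : ℕ) (hd : 0 < d) (h : ¬ (d : ℤ) ∣ b) :
    ∑ k ∈ Finset.range d, Complex.exp (-2 * Real.pi * Complex.I * (b / d)) ^ k = 0 := by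
  have hd' : (d : ℂ) ≠ 0 := by exact_mod_cast hd.ne'
  have hne : Complex.exp (-2 * Real.pi * Complex.I * (b / d)) ≠ 1 := by
    rw [Ne, Complex.exp_eq_one_iff]
    rintro ⟨n, hn⟩
    refine h ⟨-n, ?_⟩
    have h2 : (2 * Real.pi * Complex.I) * (b : ℂ) = (2 * Real.pi * Complex.I) * (d * -n) := by
      field_simp at hn
      linear_combination (-2 * (Real.pi : ℂ) * Complex.I) * hn
    exact_mod_cast mul_left_cancel₀ Complex.two_pi_I_ne_zero h2
  rw [geom_sum_eq hne, ← Complex.exp_nat_mul]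
  have h1 : Complex.exp ((d : ℂ) * (-2 * Real.pi * Complex.I * (b / d))) = 1 := by
    rw [Complex.exp_eq_one_iff]
    refine ⟨-b, ?_⟩
    push_cast
    field_simp
  rw [h1, sub_self, zero_div]

theorem stmt_1 (a b : ℤ) (c : ℕ) (hc : 0 < c) :
    (¬ ((Int.gcd a c : ℤ) ∣ b) → generalizedGaussSum a b c = 0) ∧
    (((Int.gcd a c : ℤ) ∣ b) →
      generalizedGaussSum a b c =
        (Int.gcd a c : ℂ) *
          generalizedGaussSum (a / (Int.gcd a c : ℤ)) (b / (Int.gcd a c : ℤ))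
            (c / Int.gcd a c)) := by
  obtain ⟨d, hd⟩ : ∃ d, d = Int.gcd a c := ⟨_, rfl⟩
  have hd0 : 0 < d := hd ▸ Int.gcd_pos_of_ne_zero_right a (by exact_mod_cast hc.ne')
  obtain ⟨a', rfl⟩ : (d : ℤ) ∣ a := hd ▸ Int.gcd_dvd_left ..
  obtain ⟨m, rfl⟩ : d ∣ c := by
    have h : (d : ℤ) ∣ c := hd ▸ Int.gcd_dvd_right ..
    exact_mod_cast h
  have hm0 : 0 < m := Nat.pos_of_mul_pos_left hc
  have hdZ : (d : ℤ) ≠ 0 := by exact_mod_cast hd0.ne'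
  have hdC : (d : ℂ) ≠ 0 := by exact_mod_cast hd0.ne'
  have hmC : (m : ℂ) ≠ 0 := by exact_mod_cast hm0.ne'
  rw [← hd, generalizedGaussSum_factor a' b d m hd0 hm0]
  refine ⟨fun h => by rw [sum_exp_pow_eq_zero b d hd0 h, zero_mul], ?_⟩
  rintro ⟨b', rfl⟩
  rw [Int.mul_ediv_cancel_left _ hdZ, Int.mul_ediv_cancel_left _ hdZ, Nat.mul_div_cancel_left _ hd0,
    generalizedGaussSum]
  have h1 : Complex.exp (-2 * Real.pi * Complex.I * (((d * b' : ℤ) : ℂ) / d)) = 1 := by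
    rw [Complex.exp_eq_one_iff]
    refine ⟨-b', ?_⟩
    push_cast
    field_simp
  congr 1
  · simp only [h1, one_pow, Finset.sum_const, Finset.card_range, nsmul_eq_mul, mul_one]
  · refine Finset.sum_congr rfl fun r _ => ?_
    congr 2
    push_cast
    field_simp
end

section
/- Let a, b, c be integers with c ≥ 1, gcd(a,c) = 1 and ac odd, and let a' be any integer with 4a'a ≡ 1 (mod c). Then G(a,b,c) = ε(c) · √c · (−a | c) · exp(2πi · a' b² / c), where (· | c) is the Jacobi symbol and ε(c) = 1 if c ≡ 1 (mod 4), ε(c) = i if c ≡ 3 (mod 4). In particular G(a,b,c) ≠ 0. (For c = 1 both sides equal 1.) -/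
/-!
Write `S(n, m) = ∑_{j<n} exp(2πi m j² / n)`. Completing the square modulo `c`, with `2a'b` as the
shift, reduces `G(a,b,c)` to `S(c, -a)`, and it remains to evaluate `S(n, m)` for odd `n`
coprime to `m`.

*Dependence on `m`.* `S(n, m) = (m | n) S(n, 1)` holds by induction on `n`. For a prime this
is the count `1 + χ(y)` of square roots. For an odd prime `p` not dividing `m`,
`S(p² d, m) = p S(d, m)`, and for coprime `p`, `d` one has
`S(pd, m) = S(d, mp) S(p, md)`; comparing the latter with the case `m = 1` makes the extra symbols
`(p | d)` and `(d | p)` cancel.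

*The value of `S(n, 1)`.* Gauss's identity for the alternating sum of Gaussian binomials,
`∑_j (-1)^j [2N choose j]_q = ∏_{k<N} (1 - q^(2k+1))`, taken at `q = exp(-4πi/n)` with `n = 2N + 1`,
becomes `S(n, 1) = ∏_{k<N} 2i sin(2π(2k+1)/n)`. Counting negative sines shows that `S(n, 1)` is a
positive multiple of `ε(n)`, and orthogonality of characters gives `|S(n, 1)|² = n`.
-/

open scoped BigOperators

/-- `ε(c) = 1` if `c ≡ 1 (mod 4)` and `ε(c) = i` if `c ≡ 3 (mod 4)`. -/
noncomputable def epsFactor (c : ℕ) : ℂ :=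
  if c % 4 = 1 then 1 else Complex.I

/-! ### Sums over a period -/

/-- Splitting `j < a * b` as `j = y + b * z` with `y < b`, `z < a`. -/
lemma sum_range_mul_split (f : ℕ → ℂ) (a b : ℕ) :
    ∑ j ∈ Finset.range (a * b), f j =
      ∑ y ∈ Finset.range b, ∑ z ∈ Finset.range a, f (y + b * z) := by
  induction a with
  | zero => simp
  | succ a ih =>
    simp only [Finset.sum_range_succ (n := a), Finset.sum_add_distrib]
    rw [Nat.succ_mul, Finset.sum_range_add, ih]
    congr 1
    refine Finset.sum_congr rfl fun y _ => ?_
    rw [mul_comm a b, add_comm]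

/-- The additive character `k ↦ exp(2πi k / n)` on `ℤ`. -/
noncomputable def ee (n : ℕ) (k : ℤ) : ℂ :=
  Complex.exp (2 * Real.pi * Complex.I * ((k : ℂ) / (n : ℂ)))

lemma ee_add (n : ℕ) (k l : ℤ) : ee n (k + l) = ee n k * ee n l := by
  unfold ee
  rw [← Complex.exp_add]
  congr 1
  push_cast
  ring

@[simp] lemma ee_zero (n : ℕ) : ee n 0 = 1 := by simp [ee]

lemma ee_ne_zero (n : ℕ) (k : ℤ) : ee n k ≠ 0 := Complex.exp_ne_zero _

lemma ee_eq_one_iff {n : ℕ} (hn : n ≠ 0) (k : ℤ) : ee n k = 1 ↔ (n : ℤ) ∣ k := by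
  have hn' : (n : ℂ) ≠ 0 := by exact_mod_cast hn
  unfold ee
  rw [Complex.exp_eq_one_iff]
  have hpi : (2 * Real.pi * Complex.I : ℂ) ≠ 0 := Complex.two_pi_I_ne_zero
  constructor
  · rintro ⟨m, hm⟩
    refine ⟨m, ?_⟩
    rw [mul_comm (m : ℂ)] at hm
    have h := mul_left_cancel₀ hpi hm
    rw [div_eq_iff hn'] at h
    have h' : (k : ℂ) = ((m * n : ℤ) : ℂ) := by push_cast; exact h
    rw [mul_comm]
    exact_mod_cast h'
  · rintro ⟨m, rfl⟩
    refine ⟨m, ?_⟩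
    push_cast
    field_simp

lemma ee_congr {n : ℕ} (hn : n ≠ 0) {k l : ℤ} (h : k ≡ l [ZMOD n]) : ee n k = ee n l := by
  have h1 : ee n (k - l) = 1 := (ee_eq_one_iff hn _).2 h.symm.dvd
  rw [← sub_add_cancel k l, ee_add, h1, one_mul]

lemma ee_mul_nat (n : ℕ) (k : ℤ) (z : ℕ) : ee n (k * z) = ee n k ^ z := by
  induction z with
  | zero => simp
  | succ z ih => rw [pow_succ, ← ih, ← ee_add]; push_cast; ring_nf

lemma ee_mul_mul {p : ℕ} (hp : p ≠ 0) (n : ℕ) (k : ℤ) : ee (p * n) (p * k) = ee n k := by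
  have hp' : (p : ℂ) ≠ 0 := by exact_mod_cast hp
  unfold ee
  push_cast
  rw [mul_div_mul_left _ _ hp']

lemma conj_ee (n : ℕ) (k : ℤ) : (starRingEnd ℂ) (ee n k) = ee n (-k) := by
  unfold ee
  rw [← Complex.exp_conj]
  congr 1
  simp only [map_mul, map_div₀, map_ofNat, Complex.conj_ofReal, Complex.conj_I, map_intCast,
    map_natCast]
  push_cast
  ring

/-- Orthogonality of additive characters. -/
lemma sum_ee {n : ℕ} (hn : n ≠ 0) (k : ℤ) :
    ∑ z ∈ Finset.range n, ee n (k * z) = if (n : ℤ) ∣ k then (n : ℂ) else 0 := by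
  simp only [ee_mul_nat]
  split_ifs with h
  · simp [(ee_eq_one_iff hn k).2 h]
  · have h1 : ee n k ≠ 1 := fun h' => h ((ee_eq_one_iff hn k).1 h')
    rw [geom_sum_eq h1, ← ee_mul_nat, (ee_eq_one_iff hn _).2 (dvd_mul_left _ _)]
    simp

/-- A sum of a periodic function over a period, as a sum over `ZMod n`. -/
lemma sum_range_eq_sum_zmod {n : ℕ} [NeZero n] (h : ℤ → ℂ) (F : ZMod n → ℂ)
    (hF : ∀ x : ℤ, F x = h x) :
    ∑ j ∈ Finset.range n, h j = ∑ x : ZMod n, F x := by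
  refine Finset.sum_bij (fun j _ => (j : ZMod n)) (fun _ _ => Finset.mem_univ _) ?_ ?_ ?_
  · intro a ha b hb hab
    rw [ZMod.natCast_eq_natCast_iff'] at hab
    rwa [Nat.mod_eq_of_lt (Finset.mem_range.1 ha), Nat.mod_eq_of_lt (Finset.mem_range.1 hb)] at hab
  · intro x _
    exact ⟨x.val, Finset.mem_range.2 (ZMod.val_lt x), ZMod.natCast_zmod_val x⟩
  · intro j _
    have := hF j
    rw [← this]; simp

/-- The sum of an `n`-periodic function over a period is invariant under affine substitutions
with unit slope. -/
lemma sum_affine {n : ℕ} (hn : n ≠ 0) (h : ℤ → ℂ)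
    (hh : ∀ x y : ℤ, x ≡ y [ZMOD n] → h x = h y) (u v : ℤ) (hu : IsCoprime u (n : ℤ)) :
    ∑ j ∈ Finset.range n, h (u * j + v) = ∑ j ∈ Finset.range n, h j := by
  have : NeZero n := ⟨hn⟩
  have hF : ∀ x : ℤ, h (((x : ZMod n)).val : ℤ) = h x := by
    intro x
    apply hh
    rw [← ZMod.intCast_eq_intCast_iff]
    simp
  rw [sum_range_eq_sum_zmod h (fun x => h (x.val : ℤ)) hF,
    sum_range_eq_sum_zmod (fun x => h (u * x + v))
      (fun x => h (((u : ZMod n) * x + v).val : ℤ))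
      (fun x => by rw [← hF (u * x + v)]; push_cast; rfl)]
  obtain ⟨w, t, hw⟩ := hu
  have hw' : (w : ZMod n) * u = 1 := by
    have := congrArg (Int.cast : ℤ → ZMod n) hw
    push_cast at this
    simpa using this
  refine Function.Bijective.sum_comp (e := fun x : ZMod n => (u : ZMod n) * x + v) ?_
    (fun x => h (x.val : ℤ))
  constructor
  · intro x y hxy
    have h1 : (u : ZMod n) * x = u * y := by simpa using hxy
    calc x = w * (u * x) := by rw [← mul_assoc, hw', one_mul]
      _ = w * (u * y) := by rw [h1]
      _ = y := by rw [← mul_assoc, hw', one_mul]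
  · intro y
    refine ⟨w * (y - v), ?_⟩
    have : (u : ZMod n) * (w * (y - v)) = (w * u) * (y - v) := by ring
    simp only [this, hw']
    ring

/-- The pure quadratic Gauss sum `∑_{j<n} exp(2πi m j² / n)`. -/
noncomputable def qs (n : ℕ) (m : ℤ) : ℂ := ∑ j ∈ Finset.range n, ee n (m * (j : ℤ) ^ 2)

lemma ee_quad_congr {n : ℕ} (hn : n ≠ 0) (m : ℤ) (x y : ℤ) (h : x ≡ y [ZMOD n]) :
    ee n (m * x ^ 2) = ee n (m * y ^ 2) :=
  ee_congr hn ((h.pow 2).mul_left m)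

/-! ### Dependence on the multiplier -/

/-- Writing `j = y + p * d * z` and summing over `z < p` keeps only the `y` divisible by `p`. -/
lemma qs_sq_mul {p d : ℕ} (hp : p.Prime) (hp2 : p ≠ 2) (hd : d ≠ 0) (m : ℤ)
    (hm : ¬ (p : ℤ) ∣ m) : qs (p * (p * d)) m = p * qs d m := by
  have hp0 : p ≠ 0 := hp.ne_zero
  have hpI : Prime (p : ℤ) := Nat.prime_iff_prime_int.1 hp
  have hn : p * (p * d) ≠ 0 := by positivity
  unfold qs
  rw [sum_range_mul_split]
  have inner : ∀ y : ℕ, ∑ z ∈ Finset.range p,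
      ee (p * (p * d)) (m * (((y + p * d * z : ℕ) : ℤ)) ^ 2)
      = ee (p * (p * d)) (m * (y : ℤ) ^ 2) * if p ∣ y then (p : ℂ) else 0 := by
    intro y
    have h1 : ∀ z : ℕ, ee (p * (p * d)) (m * (((y + p * d * z : ℕ) : ℤ)) ^ 2)
        = ee (p * (p * d)) (m * (y : ℤ) ^ 2) * ee p (2 * m * y * z) := by
      intro z
      have h2 : ee (p * (p * d)) (((p * d : ℕ) : ℤ) * (2 * m * y * z)) = ee p (2 * m * y * z) := by
        rw [mul_comm p (p * d)]
        exact ee_mul_mul (by positivity) p _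
      rw [← h2, ← ee_add]
      apply ee_congr hn
      refine (Int.modEq_iff_dvd.2 ⟨-(m * d * z ^ 2), ?_⟩)
      push_cast
      ring
    simp only [h1]
    rw [← Finset.mul_sum, sum_ee hp0]
    congr 1
    have : (p : ℤ) ∣ 2 * m * y ↔ p ∣ y := by
      constructor
      · intro h
        rcases hpI.dvd_or_dvd h with h | h
        · rcases hpI.dvd_or_dvd h with h | h
          · exfalso
            have h' : p ∣ 2 := by exact_mod_cast h
            exact hp2 ((Nat.prime_dvd_prime_iff_eq hp Nat.prime_two).1 h')
          · exact absurd h hm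
        · exact_mod_cast h
      · intro h
        exact Dvd.dvd.mul_left (by exact_mod_cast h) _
    simp only [this]
  rw [Finset.sum_congr rfl fun y _ => inner y, mul_comm p d, sum_range_mul_split, Finset.mul_sum]
  -- Only the multiple `y = p * z` with offset `0` survives.
  have hp1 : 0 < p := hp.pos
  rw [Finset.sum_eq_single_of_mem 0 (Finset.mem_range.2 hp1)]
  · refine Finset.sum_congr rfl fun z _ => ?_
    rw [zero_add, if_pos (dvd_mul_right _ _), mul_comm (p : ℂ)]
    congr 1
    have h3 : p * (d * p) = (p * p) * d := by ring
    rw [h3, ← ee_mul_mul (p := p * p) (by positivity) d]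
    congr 1
    push_cast
    ring
  · intro y hy hy0
    refine Finset.sum_eq_zero fun z _ => ?_
    rw [if_neg, mul_zero]
    rw [Nat.dvd_add_left (dvd_mul_right _ _)]
    exact fun h => hy0 (Nat.eq_zero_of_dvd_of_lt h (Finset.mem_range.1 hy))

/-- Chinese remaindering: `j = d * y + p * x`. -/
lemma qs_coprime_mul {p d : ℕ} (hp : p ≠ 0) (hd : d ≠ 0) (h : Nat.Coprime p d) (m : ℤ) :
    qs (p * d) m = qs d (m * p) * qs p (m * d) := by
  have hn : p * d ≠ 0 := by positivity
  have hcop : IsCoprime (d : ℤ) (p : ℤ) := (Nat.isCoprime_iff_coprime.2 h).symm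
  -- The sum over a class modulo `p`, a `p`-periodic function of the representative.
  set H : ℤ → ℂ := fun y => ∑ x ∈ Finset.range d, ee (p * d) (m * (y + p * x) ^ 2) with hH
  have hper : ∀ x y : ℤ, x ≡ y [ZMOD p] → H x = H y := by
    intro x y hxy
    obtain ⟨t, ht⟩ := hxy.dvd
    have hy : y = x + p * t := by linarith
    have := sum_affine hd (fun z => ee (p * d) (m * (x + p * z) ^ 2)) (by
      intro a b hab
      apply ee_quad_congr hn
      apply Int.ModEq.add_left
      have := hab.mul_left' (c := (p : ℤ))
      push_cast
      exact this) 1 t isCoprime_one_left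
    simp only [hH]
    rw [← this]
    refine Finset.sum_congr rfl fun z _ => ?_
    rw [hy]
    ring_nf
  have h1 : qs (p * d) m = ∑ y ∈ Finset.range p, H y := by
    unfold qs
    rw [mul_comm p d, sum_range_mul_split, mul_comm d p]
    simp [hH]
  rw [h1, ← sum_affine hp H hper d 0 hcop]
  unfold qs
  rw [mul_comm, Finset.sum_mul]
  refine Finset.sum_congr rfl fun y _ => ?_
  simp only [hH]
  rw [Finset.mul_sum]
  refine Finset.sum_congr rfl fun x _ => ?_
  have e1 : ee p (m * d * (y : ℤ) ^ 2) = ee (p * d) (d * (m * d * (y : ℤ) ^ 2)) := by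
    rw [mul_comm p d]; exact (ee_mul_mul hd p _).symm
  rw [e1, ← ee_mul_mul hp d (m * p * (x : ℤ) ^ 2), ← ee_add]
  apply ee_congr hn
  refine Int.modEq_iff_dvd.2 ⟨-(2 * m * x * y), ?_⟩
  push_cast
  ring

lemma qs_prime {p : ℕ} (hp : p.Prime) (hp2 : p ≠ 2) (m : ℤ) (hm : ¬ (p : ℤ) ∣ m) :
    qs p m = (jacobiSym m p : ℂ) * qs p 1 := by
  have : Fact p.Prime := ⟨hp⟩
  have hp0 := hp.ne_zero
  have hchar : ringChar (ZMod p) ≠ 2 := by rwa [ZMod.ringChar_zmod_n]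
  -- Group the `x` by the value `y = x²`, which has `1 + χ(y)` square roots.
  have key : ∀ k : ℤ, ¬ (p : ℤ) ∣ k → qs p k =
      ∑ y : ZMod p, (quadraticChar (ZMod p) y : ℂ) * ee p (k * (y.val : ℤ)) := by
    intro k hk
    have hval : ∀ x : ℤ, ((x : ZMod p).val : ℤ) ≡ x [ZMOD p] := by
      intro x
      rw [← ZMod.intCast_eq_intCast_iff]
      simp
    have h1 : qs p k = ∑ x : ZMod p, ee p (k * ((x ^ 2).val : ℤ)) := by
      refine sum_range_eq_sum_zmod (fun x => ee p (k * x ^ 2))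
        (fun x => ee p (k * ((x ^ 2).val : ℤ))) fun x => ?_
      apply ee_congr hp0
      have := hval (x ^ 2)
      push_cast at this
      exact this.mul_left k
    have h2 : ∑ y : ZMod p, ee p (k * (y.val : ℤ)) = 0 := by
      rw [← sum_range_eq_sum_zmod (fun x => ee p (k * x)) (fun y => ee p (k * (y.val : ℤ)))
        (fun x => ee_congr hp0 ((hval x).mul_left k)), sum_ee hp0, if_neg hk]
    rw [h1, ← Finset.sum_fiberwise (s := Finset.univ) (g := fun x : ZMod p => x ^ 2)]
    have h3 : ∀ y : ZMod p, ∑ x with x ^ 2 = y, ee p (k * ((x ^ 2).val : ℤ)) =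
        ((quadraticChar (ZMod p) y : ℂ) + 1) * ee p (k * (y.val : ℤ)) := by
      intro y
      have hc := quadraticChar_card_sqrts hchar y
      rw [Finset.sum_congr rfl (g := fun _ => ee p (k * (y.val : ℤ)))]
      · rw [Finset.sum_const, nsmul_eq_mul]
        congr 1
        have hs : ({x : ZMod p | x ^ 2 = y} : Set (ZMod p)).toFinset
            = Finset.univ.filter (fun x : ZMod p => x ^ 2 = y) := by
          ext; simp
        rw [hs] at hc
        exact_mod_cast hc
      · intro x hx
        rw [(Finset.mem_filter.1 hx).2]
    rw [Finset.sum_congr rfl fun y _ => h3 y]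
    simp only [add_mul, one_mul, Finset.sum_add_distrib, h2, add_zero]
  have hone : ¬ (p : ℤ) ∣ 1 := by
    intro h
    exact hp.one_lt.ne' (by exact_mod_cast Int.eq_one_of_dvd_one (by positivity) h)
  have hm0 : (m : ZMod p) ≠ 0 := by rwa [Ne, ZMod.intCast_zmod_eq_zero_iff_dvd]
  have hj : jacobiSym m p = quadraticChar (ZMod p) (m : ZMod p) := by
    rw [← jacobiSym.legendreSym.to_jacobiSym]; rfl
  have hsq : (quadraticChar (ZMod p) (m : ZMod p) : ℂ) * quadraticChar (ZMod p) (m : ZMod p) = 1 := by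
    have := quadraticChar_sq_one hm0
    rw [← sq]
    exact_mod_cast this
  rw [key m hm, key 1 hone, hj, Finset.mul_sum,
    ← Function.Bijective.sum_comp (mulLeft_bijective₀ (m : ZMod p) hm0)
      (fun y => (quadraticChar (ZMod p) (m : ZMod p) : ℂ) *
        ((quadraticChar (ZMod p) y : ℂ) * ee p (1 * (y.val : ℤ))))]
  refine Finset.sum_congr rfl fun y _ => ?_
  rw [map_mul, Int.cast_mul, ← mul_assoc, ← mul_assoc, hsq, one_mul]
  congr 1
  apply ee_congr hp0
  rw [← ZMod.intCast_eq_intCast_iff]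
  simp

/-- Induction on `n`, removing a prime `p`: if `p²` divides `n` use `qs_sq_mul`, otherwise
Chinese remaindering. -/
lemma qs_eq_jacobi (n : ℕ) (hodd : Odd n) (m : ℤ) (hm : IsCoprime m (n : ℤ)) :
    qs n m = (jacobiSym m n : ℂ) * qs n 1 := by
  induction n using Nat.strong_induction_on generalizing m with
  | _ n ih =>
    rcases eq_or_ne n 1 with rfl | hn1
    · simp [qs]
    obtain ⟨p, hp, d, rfl⟩ := Nat.exists_prime_and_dvd hn1
    have hn0 : p * d ≠ 0 := by rintro h; rw [h] at hodd; exact absurd hodd (by decide)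
    have hd0 : d ≠ 0 := right_ne_zero_of_mul hn0
    obtain ⟨hpo, hdo⟩ := Nat.odd_mul.1 hodd
    have hp2 : p ≠ 2 := by rintro rfl; exact absurd hpo (by decide)
    have hpI : Prime (p : ℤ) := Nat.prime_iff_prime_int.1 hp
    push_cast at hm
    have hmp : IsCoprime m (p : ℤ) := hm.of_mul_right_left
    have hmd : IsCoprime m (d : ℤ) := hm.of_mul_right_right
    have nd : ∀ k : ℤ, IsCoprime k (p : ℤ) → ¬ (p : ℤ) ∣ k := fun k hk h =>
      hpI.not_isUnit (hk.isUnit_of_dvd' h dvd_rfl)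
    have hlt : d < p * d := by
      have := hp.two_le
      nlinarith [Nat.pos_of_ne_zero hd0]
    have : NeZero p := ⟨hp.ne_zero⟩
    have : NeZero d := ⟨hd0⟩
    by_cases hpd : p ∣ d
    · obtain ⟨f, rfl⟩ := hpd
      have hf0 : f ≠ 0 := right_ne_zero_of_mul hd0
      have : NeZero f := ⟨hf0⟩
      push_cast at hmd
      rw [qs_sq_mul hp hp2 hf0 m (nd m hmp), qs_sq_mul hp hp2 hf0 1 (nd 1 isCoprime_one_left),
        ih f (lt_of_le_of_lt (Nat.le_mul_of_pos_left f hp.pos) hlt)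
          (Nat.odd_mul.1 hdo).2 m hmd.of_mul_right_right,
        jacobiSym.mul_right, jacobiSym.mul_right, ← mul_assoc (jacobiSym m p), ← sq,
        jacobiSym.sq_one (Int.isCoprime_iff_gcd_eq_one.1 hmp)]
      push_cast
      ring
    · have hc : Nat.Coprime p d := (Nat.Prime.coprime_iff_not_dvd hp).2 hpd
      have hcI : IsCoprime (p : ℤ) (d : ℤ) := Nat.isCoprime_iff_coprime.2 hc
      rw [qs_coprime_mul hp.ne_zero hd0 hc, qs_coprime_mul hp.ne_zero hd0 hc,
        ih d hlt hdo (m * p) (hmd.mul_left hcI), ih d hlt hdo (1 * p) (isCoprime_one_left.mul_left hcI),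
        qs_prime hp hp2 (m * d) (nd _ (hmp.mul_left hcI.symm)),
        qs_prime hp hp2 (1 * d) (nd _ (isCoprime_one_left.mul_left hcI.symm)),
        jacobiSym.mul_right, jacobiSym.mul_left, jacobiSym.mul_left, one_mul, one_mul]
      push_cast
      ring

/-! ### Gauss's product formula and the sign -/

/-- The Gaussian binomial coefficient `[m choose j]_q`, as a ratio of products; division by zero
does not occur when `q` has multiplicative order larger than `j`. -/
noncomputable def qb (q : ℂ) (m j : ℕ) : ℂ :=
  ∏ i ∈ Finset.range j, (1 - q ^ (m - i)) / (1 - q ^ (i + 1))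

lemma qb_succ {q : ℂ} (m j : ℕ) (h : q ^ (j + 1) ≠ 1) :
    (1 - q ^ (j + 1)) * qb q m (j + 1) = (1 - q ^ (m - j)) * qb q m j := by
  have : 1 - q ^ (j + 1) ≠ 0 := sub_ne_zero.2 h.symm
  unfold qb
  rw [Finset.prod_range_succ]
  field_simp

lemma qb_eq_zero {q : ℂ} {m j : ℕ} (h : m < j) : qb q m j = 0 :=
  Finset.prod_eq_zero (Finset.mem_range.2 h) (by simp)

/-- The absorption rule `[m+1 choose j] (1 - q^(m+1-j)) = (1 - q^(m+1)) [m choose j]`, from which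
both the Pascal rule and the recursion for `altSum` follow. -/
lemma qb_absorb {q : ℂ} (m j : ℕ) (hj : j ≤ m + 1) (hq : ∀ i, 0 < i → i ≤ j → q ^ i ≠ 1) :
    (1 - q ^ (m + 1 - j)) * qb q (m + 1) j = (1 - q ^ (m + 1)) * qb q m j := by
  induction j with
  | zero => simp [qb]
  | succ j ih =>
    have ih := ih (by omega) (fun i h1 h2 => hq i h1 (by omega))
    have h0 : q ^ (j + 1) ≠ 1 := hq _ (by omega) le_rfl
    have h1 := qb_succ (m + 1) j h0
    have h2 := qb_succ m j h0
    have h3 : 1 - q ^ (j + 1) ≠ 0 := sub_ne_zero.2 h0.symm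
    apply mul_left_cancel₀ h3
    rw [Nat.add_sub_add_right]
    linear_combination (1 - q ^ (m - j)) * h1 - (1 - q ^ (m + 1)) * h2 + (1 - q ^ (m - j)) * ih

/-- The Pascal rule for Gaussian binomials. -/
lemma qb_pascal {q : ℂ} (m j : ℕ) (hj : j ≤ m) (hq : ∀ i, 0 < i → i ≤ j + 1 → q ^ i ≠ 1) :
    qb q (m + 1) (j + 1) = qb q m (j + 1) + q ^ (m - j) * qb q m j := by
  have h0 : q ^ (j + 1) ≠ 1 := hq _ (by omega) le_rfl
  have h1 := qb_succ (m + 1) j h0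
  have h2 := qb_succ m j h0
  have h4 := qb_absorb m j (by omega) (fun i h1 h2 => hq i h1 (by omega))
  have h3 : 1 - q ^ (j + 1) ≠ 0 := sub_ne_zero.2 h0.symm
  apply mul_left_cancel₀ h3
  have h5 : q ^ (m + 1) = q ^ (m - j) * q ^ (j + 1) := by
    rw [← pow_add]; congr 1; omega
  rw [h5] at h4
  linear_combination h1 - h2 + h4

/-- The alternating sum of a row of Gaussian binomials. -/
noncomputable def altSum (q : ℂ) (m : ℕ) : ℂ :=
  ∑ j ∈ Finset.range (m + 1), (-1) ^ j * qb q m j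

lemma altSum_add_two {q : ℂ} (m : ℕ) (hq : ∀ i, 0 < i → i ≤ m + 2 → q ^ i ≠ 1) :
    altSum q (m + 2) = (1 - q ^ (m + 1)) * altSum q m := by
  have h1 : altSum q (m + 2) =
      ∑ j ∈ Finset.range (m + 2), (-1) ^ j * ((1 - q ^ (m + 1 - j)) * qb q (m + 1) j) := by
    have hz : qb q (m + 1) (m + 2) = 0 := qb_eq_zero (by omega)
    have hs : ∑ j ∈ Finset.range (m + 2), (-1 : ℂ) ^ j * qb q (m + 1) j =
        ∑ j ∈ Finset.range (m + 2), (-1 : ℂ) ^ (j + 1) * qb q (m + 1) (j + 1) + 1 := by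
      have := Finset.sum_range_succ' (fun j => (-1 : ℂ) ^ j * qb q (m + 1) j) (m + 2)
      rw [Finset.sum_range_succ, hz] at this
      simpa [qb] using this
    unfold altSum
    rw [Finset.sum_range_succ']
    have h2 : ∀ j ∈ Finset.range (m + 2), (-1 : ℂ) ^ (j + 1) * qb q (m + 2) (j + 1) =
        (-1 : ℂ) ^ (j + 1) * qb q (m + 1) (j + 1) -
          (-1) ^ j * (q ^ (m + 1 - j) * qb q (m + 1) j) := by
      intro j hj
      have hj := Finset.mem_range.1 hj
      rw [qb_pascal (m + 1) j (by omega) (fun i h1 h2 => hq i h1 (by omega))]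
      ring
    rw [Finset.sum_congr rfl h2, Finset.sum_sub_distrib]
    simp only [sub_mul, mul_sub, one_mul, Finset.sum_sub_distrib]
    rw [hs]
    simp [qb]
    ring
  rw [h1, Finset.sum_congr rfl (g := fun j => (1 - q ^ (m + 1)) * ((-1) ^ j * qb q m j))]
  · rw [← Finset.mul_sum, Finset.sum_range_succ, qb_eq_zero (Nat.lt_succ_self m)]
    simp [altSum]
  · intro j hj
    have hj := Finset.mem_range.1 hj
    rw [qb_absorb m j (by omega) (fun i h1 h2 => hq i h1 (by omega))]
    ring

lemma altSum_even {q : ℂ} (N : ℕ) (hq : ∀ i, 0 < i → i ≤ 2 * N → q ^ i ≠ 1) :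
    altSum q (2 * N) = ∏ k ∈ Finset.range N, (1 - q ^ (2 * k + 1)) := by
  induction N with
  | zero => simp [altSum, qb]
  | succ N ih =>
    rw [Nat.mul_succ, altSum_add_two _ (fun i h1 h2 => hq i h1 (by omega)),
      ih (fun i h1 h2 => hq i h1 (by omega)), Finset.prod_range_succ, mul_comm]

lemma qs_one_eq_prod (N : ℕ) : qs (2 * N + 1) 1 =
    ∏ k ∈ Finset.range N,
      (2 * Complex.I * (Real.sin (2 * Real.pi * (2 * k + 1) / (2 * N + 1)) : ℂ)) := by
  set n := 2 * N + 1 with hn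
  have hn0 : n ≠ 0 := by omega
  set q := ee n (-2) with hq
  have hqpow : ∀ i : ℕ, q ^ i = ee n (-2 * i) := fun i => (ee_mul_nat n (-2) i).symm
  have hq1 : ∀ i, 0 < i → i ≤ 2 * N → q ^ i ≠ 1 := by
    intro i hi hi2
    rw [hqpow, Ne, ee_eq_one_iff hn0, neg_mul, dvd_neg]
    intro h
    have h' : n ∣ 2 * i := by exact_mod_cast h
    have hc : Nat.Coprime n 2 := by
      rw [Nat.coprime_two_right]; exact ⟨N, hn⟩
    have := Nat.le_of_dvd hi (hc.dvd_of_dvd_mul_left h')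
    omega
  -- At a root of unity of order `n` the last row of Gaussian binomials consists of monomials.
  have hrow : ∀ j, j ≤ 2 * N → (-1) ^ j * qb q (2 * N) j = ee n ((j : ℤ) * (j + 1)) := by
    intro j
    induction j with
    | zero => intro _; simp [qb]
    | succ j ih =>
      intro hj
      have ih := ih (by omega)
      have h0 : q ^ (j + 1) ≠ 1 := hq1 _ (by omega) hj
      have h3 : 1 - q ^ (j + 1) ≠ 0 := sub_ne_zero.2 h0.symm
      have h1 := qb_succ (2 * N) j h0
      have h4 : q ^ (2 * N - j) = ee n (2 * (j + 1)) := by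
        rw [hqpow]
        apply ee_congr hn0
        refine Int.modEq_iff_dvd.2 ⟨2, ?_⟩
        push_cast [Nat.cast_sub (show j ≤ 2 * N by omega), hn]
        ring
      have h5 : ee n (2 * (j + 1)) * q ^ (j + 1) = 1 := by
        rw [hqpow, ← ee_add]
        push_cast
        ring_nf
        simp
      have h6 : ee n (((j + 1 : ℕ) : ℤ) * ((j + 1 : ℕ) + 1))
          = ee n ((j : ℤ) * (j + 1)) * ee n (2 * (j + 1)) := by
        rw [← ee_add]; congr 1; push_cast; ring
      rw [h6, ← ih]
      rw [h4] at h1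
      apply mul_left_cancel₀ h3
      rw [pow_succ]
      linear_combination (-1) ^ j * (-1) * h1 + (-1) ^ j * qb q (2 * N) j * h5
  have hsum : ∑ j ∈ Finset.range n, ee n ((j : ℤ) * (j + 1)) =
      ∏ k ∈ Finset.range N, (1 - q ^ (2 * k + 1)) := by
    rw [← altSum_even N hq1]
    unfold altSum
    refine Finset.sum_congr rfl fun j hj => (hrow j ?_).symm
    have := Finset.mem_range.1 hj
    omega
  have hS : qs n 1 = ee n ((N + 1) ^ 2) * ∑ j ∈ Finset.range n, ee n ((j : ℤ) * (j + 1)) := by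
    unfold qs
    rw [← sum_affine hn0 (fun x => ee n (1 * x ^ 2)) (ee_quad_congr hn0 1) 1 (N + 1)
      isCoprime_one_left, Finset.mul_sum]
    refine Finset.sum_congr rfl fun j _ => ?_
    rw [← ee_add]
    apply ee_congr hn0
    refine Int.modEq_iff_dvd.2 ⟨-j, ?_⟩
    push_cast [hn]
    ring
  have hfac : ∀ k : ℕ, 1 - q ^ (2 * k + 1) = ee n (-(2 * k + 1)) *
      (2 * Complex.I * (Real.sin (2 * Real.pi * (2 * k + 1) / (2 * N + 1)) : ℂ)) := by
    intro k
    have h1 : ee n (2 * k + 1) - ee n (-(2 * k + 1)) =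
        2 * Complex.I * (Real.sin (2 * Real.pi * (2 * k + 1) / (2 * N + 1)) : ℂ) := by
      rw [Complex.ofReal_sin, Complex.sin]
      unfold ee
      have e1 : (2 * Real.pi * Complex.I * (((2 * k + 1 : ℤ) : ℂ) / (n : ℂ))) =
          ((2 * Real.pi * (2 * k + 1) / (2 * N + 1) : ℝ) : ℂ) * Complex.I := by
        push_cast [hn]; ring
      have e2 : (2 * Real.pi * Complex.I * (((-(2 * k + 1) : ℤ) : ℂ) / (n : ℂ))) =
          -((2 * Real.pi * (2 * k + 1) / (2 * N + 1) : ℝ) : ℂ) * Complex.I := by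
        push_cast [hn]; ring
      rw [e1, e2]
      linear_combination (Complex.exp (((2 * Real.pi * (2 * k + 1) / (2 * N + 1) : ℝ) : ℂ) * Complex.I) -
        Complex.exp (-((2 * Real.pi * (2 * k + 1) / (2 * N + 1) : ℝ) : ℂ) * Complex.I)) * Complex.I_sq
    rw [← h1, mul_sub, ← ee_add, ← ee_add, hqpow]
    rw [neg_add_cancel, ee_zero, ← neg_add]
    congr 2
    push_cast
    ring
  have hprodE : ∀ M : ℕ, ∏ k ∈ Finset.range M, ee n (-(2 * (k : ℤ) + 1)) = ee n (-(M : ℤ) ^ 2) := by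
    intro M
    induction M with
    | zero => simp
    | succ M ih =>
      rw [Finset.prod_range_succ, ih, ← ee_add]; congr 1; push_cast; ring
  rw [hS, hsum, Finset.prod_congr rfl fun k _ => hfac k, Finset.prod_mul_distrib, hprodE,
    ← mul_assoc, ← ee_add, (ee_eq_one_iff hn0 _).2, one_mul]
  refine ⟨1, ?_⟩
  push_cast [hn]
  ring

/-- The last `⌊N/2⌋` of the sines in the product formula are negative, the others positive. -/
lemma sin_prod_sign (N : ℕ) : ∃ r : ℝ, 0 < r ∧
    ∏ k ∈ Finset.range N, (2 * Real.sin (2 * Real.pi * (2 * k + 1) / (2 * N + 1)))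
      = (-1) ^ (N / 2) * r := by
  have hsplit : N = (N - N / 2) + N / 2 := by omega
  set M := N - N / 2 with hM
  set L := N / 2 with hL
  have hpos : (0 : ℝ) < 2 * N + 1 := by positivity
  set s : ℕ → ℝ := fun k => 2 * Real.sin (2 * Real.pi * (2 * k + 1) / (2 * N + 1)) with hs
  have h1 : ∀ k ∈ Finset.range M, 0 < s k := by
    intro k hk
    have hk := Finset.mem_range.1 hk
    have hk' : (2 * (2 * k + 1) : ℝ) < 2 * N + 1 := by
      have : 2 * (2 * k + 1) < 2 * N + 1 := by omega
      exact_mod_cast this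
    have : 0 < Real.sin (2 * Real.pi * (2 * k + 1) / (2 * N + 1)) := by
      apply Real.sin_pos_of_pos_of_lt_pi
      · positivity
      · rw [div_lt_iff₀ hpos]
        nlinarith [Real.pi_pos]
    simp only [hs]
    linarith
  have h2 : ∀ k ∈ Finset.range L, 0 < -s (M + k) := by
    intro k hk
    have hk := Finset.mem_range.1 hk
    have hk1 : (2 * N + 1 : ℝ) < 2 * (2 * ((M + k : ℕ) : ℝ) + 1) := by
      have : 2 * N + 1 < 2 * (2 * (M + k) + 1) := by omega
      exact_mod_cast this
    have hk2 : (2 * ((M + k : ℕ) : ℝ) + 1) < 2 * N + 1 := by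
      have : 2 * (M + k) + 1 < 2 * N + 1 := by omega
      exact_mod_cast this
    have : Real.sin (2 * Real.pi * (2 * ((M + k : ℕ) : ℝ) + 1) / (2 * N + 1)) < 0 := by
      rw [← Real.sin_sub_two_pi]
      apply Real.sin_neg_of_neg_of_neg_pi_lt
      · rw [sub_neg, div_lt_iff₀ hpos]
        nlinarith [Real.pi_pos]
      · rw [neg_lt_sub_iff_lt_add, ← sub_lt_iff_lt_add', lt_div_iff₀ hpos]
        nlinarith [Real.pi_pos]
    simp only [hs]
    linarith
  refine ⟨(∏ k ∈ Finset.range M, s k) * ∏ k ∈ Finset.range L, -s (M + k),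
    mul_pos (Finset.prod_pos h1) (Finset.prod_pos h2), ?_⟩
  change ∏ k ∈ Finset.range N, s k = _
  have h3 : ∏ k ∈ Finset.range N, s k =
      (∏ k ∈ Finset.range M, s k) * ∏ k ∈ Finset.range L, s (M + k) := by
    conv_lhs => rw [hsplit]
    exact Finset.prod_range_add _ _ _
  have h4 : ((-1 : ℝ) ^ L) * (-1) ^ L = 1 := by rw [← mul_pow]; simp
  rw [h3, Finset.prod_neg, Finset.card_range]
  linear_combination (-(∏ k ∈ Finset.range M, s k) * ∏ k ∈ Finset.range L, s (M + k)) * h4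

/-- `|S(n, 1)|² = n`: substitute `x + y` for `x` in the double sum and sum over `y` first. -/
lemma qs_mul_conj (n : ℕ) (hodd : Odd n) : qs n 1 * (starRingEnd ℂ) (qs n 1) = n := by
  have hn : n ≠ 0 := by rintro rfl; simp at hodd
  have h1 : ∀ y : ℕ, qs n 1 * ee n (-(y : ℤ) ^ 2) =
      ∑ x ∈ Finset.range n, ee n ((x : ℤ) ^ 2) * ee n (2 * x * y) := by
    intro y
    unfold qs
    rw [← sum_affine hn (fun x => ee n (1 * x ^ 2)) (ee_quad_congr hn 1) 1 y
      isCoprime_one_left, Finset.sum_mul]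
    refine Finset.sum_congr rfl fun x _ => ?_
    rw [← ee_add, ← ee_add]
    congr 1
    ring
  have h2 : (starRingEnd ℂ) (qs n 1) = ∑ y ∈ Finset.range n, ee n (-(y : ℤ) ^ 2) := by
    unfold qs
    rw [map_sum]
    refine Finset.sum_congr rfl fun x _ => ?_
    rw [conj_ee, one_mul]
  rw [h2, Finset.mul_sum, Finset.sum_congr rfl fun y _ => h1 y, Finset.sum_comm]
  simp only [← Finset.mul_sum, sum_ee hn]
  rw [Finset.sum_eq_single_of_mem 0 (Finset.mem_range.2 (Nat.pos_of_ne_zero hn))]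
  · simp
  · intro x hx hx0
    rw [if_neg, mul_zero]
    intro h
    have h' : n ∣ 2 * x := by exact_mod_cast h
    have := (Nat.coprime_two_right.2 hodd).dvd_of_dvd_mul_left h'
    exact hx0 (Nat.eq_zero_of_dvd_of_lt this (Finset.mem_range.1 hx))

lemma qs_one (n : ℕ) (hodd : Odd n) : qs n 1 = epsFactor n * (Real.sqrt n : ℂ) := by
  obtain ⟨N, rfl⟩ := hodd
  obtain ⟨r, hr, hprod⟩ := sin_prod_sign N
  have hI : Complex.I ^ N * (-1) ^ (N / 2) = epsFactor (2 * N + 1) := by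
    unfold epsFactor
    have h1 : ∀ k : ℕ, ((-1 : ℂ) ^ k) * (-1) ^ k = 1 := fun k => by rw [← mul_pow]; simp
    rcases Nat.even_or_odd' N with ⟨k, rfl | rfl⟩
    · rw [if_pos (by omega), pow_mul, Complex.I_sq, Nat.mul_div_cancel_left k two_pos, h1]
    · rw [if_neg (by omega), pow_succ, pow_mul, Complex.I_sq,
        show (2 * k + 1) / 2 = k by omega, mul_right_comm, h1, one_mul]
  have hform : qs (2 * N + 1) 1 = epsFactor (2 * N + 1) * (r : ℂ) := by
    have hc := congrArg (Complex.ofReal) hprod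
    rw [qs_one_eq_prod, ← hI]
    push_cast at hc ⊢
    rw [mul_assoc, ← hc, ← Finset.card_range N, ← Finset.prod_const, Finset.card_range,
      ← Finset.prod_mul_distrib]
    refine Finset.prod_congr rfl fun k _ => ?_
    ring
  have hnorm := qs_mul_conj (2 * N + 1) ⟨N, rfl⟩
  have heps : epsFactor (2 * N + 1) * (starRingEnd ℂ) (epsFactor (2 * N + 1)) = 1 := by
    unfold epsFactor
    split_ifs <;> simp
  have hr2 : r ^ 2 = ((2 * N + 1 : ℕ) : ℝ) := by
    rw [hform, map_mul, Complex.conj_ofReal] at hnorm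
    have : ((r ^ 2 : ℝ) : ℂ) = (((2 * N + 1 : ℕ) : ℝ) : ℂ) := by
      rw [Complex.ofReal_natCast, ← hnorm]
      push_cast
      linear_combination (-(r : ℂ) ^ 2) * heps
    exact_mod_cast this
  rw [hform, ← hr2, Real.sqrt_sq hr.le]

/-! ### Completing the square -/

/-- With `4a'a ≡ 1`, one has `a j² + b j ≡ a (j + 2a'b)² - a' b²` modulo `c`. -/
lemma generalizedGaussSum_eq (a b : ℤ) (c : ℕ) (hc : c ≠ 0) (a' : ℤ)
    (ha' : 4 * a' * a ≡ 1 [ZMOD (c : ℤ)]) :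
    generalizedGaussSum a b c = qs c (-a) * ee c (a' * b ^ 2) := by
  unfold qs generalizedGaussSum
  rw [← sum_affine hc (fun x => ee c (-a * x ^ 2)) (ee_quad_congr hc (-a)) 1 (2 * a' * b)
    isCoprime_one_left, Finset.sum_mul]
  refine Finset.sum_congr rfl fun j _ => ?_
  have h1 : Complex.exp (-2 * Real.pi * Complex.I *
      (((a * (j : ℤ) ^ 2 + b * (j : ℤ) : ℤ) : ℂ) / (c : ℂ))) =
      ee c (-(a * (j : ℤ) ^ 2 + b * (j : ℤ))) := by
    unfold ee
    congr 1
    push_cast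
    ring
  rw [h1, ← ee_add]
  apply ee_congr hc
  obtain ⟨t, ht⟩ := ha'.dvd
  refine Int.modEq_iff_dvd.2 ⟨t * (b * j + a' * b ^ 2), ?_⟩
  linear_combination (b * j + a' * b ^ 2) * ht

theorem stmt_2 (a b : ℤ) (c : ℕ) (hc : 1 ≤ c) (hgcd : Int.gcd a c = 1)
    (hodd : Odd (a * (c : ℤ))) (a' : ℤ) (ha' : 4 * a' * a ≡ 1 [ZMOD (c : ℤ)]) :
    generalizedGaussSum a b c =
      epsFactor c * (Real.sqrt c : ℂ) * (jacobiSym (-a) c : ℂ) *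
        Complex.exp (2 * Real.pi * Complex.I * (((a' * b ^ 2 : ℤ) : ℂ) / (c : ℂ))) ∧
    generalizedGaussSum a b c ≠ 0 := by
  have hc0 : c ≠ 0 := by omega
  have hco : Odd c := by exact_mod_cast (Int.odd_mul.1 hodd).2
  have hcop : IsCoprime (-a) (c : ℤ) := (Int.isCoprime_iff_gcd_eq_one.2 hgcd).neg_left
  have hmain : generalizedGaussSum a b c =
      epsFactor c * (Real.sqrt c : ℂ) * (jacobiSym (-a) c : ℂ) *
        Complex.exp (2 * Real.pi * Complex.I * (((a' * b ^ 2 : ℤ) : ℂ) / (c : ℂ))) := by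
    rw [generalizedGaussSum_eq a b c hc0 a' ha', qs_eq_jacobi c hco (-a) hcop, qs_one c hco]
    unfold ee
    ring
  refine ⟨hmain, ?_⟩
  have : NeZero c := ⟨hc0⟩
  have h1 : epsFactor c ≠ 0 := by
    unfold epsFactor
    split_ifs
    · exact one_ne_zero
    · exact Complex.I_ne_zero
  have h2 : (Real.sqrt c : ℂ) ≠ 0 := by
    have : (0 : ℝ) < c := by exact_mod_cast hc
    exact_mod_cast (Real.sqrt_pos.2 this).ne'
  have h3 : (jacobiSym (-a) c : ℂ) ≠ 0 := by
    exact_mod_cast jacobiSym.ne_zero (Int.isCoprime_iff_gcd_eq_one.1 hcop)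
  rw [hmain]
  exact mul_ne_zero (mul_ne_zero (mul_ne_zero h1 h2) h3) (Complex.exp_ne_zero _)
end

section
/- Fix an odd prime ℓ and a non-square unit z ∈ ℤ_ℓ^×, and let Λ = diag(ℓ^{k₁}Λ₁, …, ℓ^{k_r}Λ_r) be a standard block form with 0 ≤ k₁ < k₂ < ⋯ < k_r and blocks Λ_i of sizes n_i, n = n₁ + ⋯ + n_r. Then for every symmetric n×n matrix A' over ℤ_ℓ there exists D ∈ GL_n(ℤ_ℓ) such that Λ + ℓ^{k_r + 1} A' = D Λ Dᵀ; that is, Λ + ℓ^{k_r+1}A' is ℤ_ℓ-congruent to Λ. -/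
/-!
Write `K = k_r`. The matrix `Λ` is diagonal and every diagonal entry divides `ℓ ^ K`, so it suffices
to show that `diag(d) + ℓ ^ (K + 1) A` is congruent to `diag(d)` whenever every `d i` divides `ℓ ^ K`
and `A` is symmetric (`exists_congruence_diagonal`). This goes by symmetric Gaussian elimination,
i.e. by induction on the size (`congruence_step`). The pivot is `d + ℓ ^ (K + 1) a = d (1 + ℓ q a)`
with `ℓ ^ K = d q`, and `1 + ℓ q a` is the square of a unit by Hensel's lemma, since `ℓ` is odd
(`exists_sq_eq_one_add`). The off-diagonal entries in the pivot column are divisible by `ℓ d`, so the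
Schur complement differs from the remaining diagonal matrix by a symmetric multiple of
`ℓ ^ (K + 1)`, and the induction continues.
-/

open Matrix

/-- The standard block form `Λ = diag(ℓ^{k₁}Λ₁, …, ℓ^{k_r}Λ_r)` as a block diagonal matrix,
indexed by `Σ i, Fin (n i)`. -/
noncomputable def stdBlockForm (ℓ : ℕ) [Fact ℓ.Prime] (r : ℕ) (k : Fin r → ℕ)
    (n : Fin r → ℕ) (Λb : ∀ i : Fin r, Matrix (Fin (n i)) (Fin (n i)) ℤ_[ℓ]) :
    Matrix ((i : Fin r) × Fin (n i)) ((i : Fin r) × Fin (n i)) ℤ_[ℓ] :=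
  Matrix.blockDiagonal' fun i => (ℓ : ℤ_[ℓ]) ^ (k i) • Λb i

/-- For odd `ℓ`, every element of `1 + ℓ ℤ_ℓ` is the square of a unit. -/
lemma exists_sq_eq_one_add (ℓ : ℕ) [Fact ℓ.Prime] (hℓ : ℓ ≠ 2) (x : ℤ_[ℓ]) :
    ∃ s t : ℤ_[ℓ], s * t = 1 ∧ s * s = 1 + ℓ * x := by
  have hp : ℓ.Prime := Fact.out
  have hx : ‖(ℓ : ℤ_[ℓ]) * x‖ < 1 := by
    rw [norm_mul]
    exact mul_lt_one_of_nonneg_of_lt_one_left (norm_nonneg _)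
      (by simpa using inv_lt_one_of_one_lt₀ (by exact_mod_cast hp.one_lt)) (PadicInt.norm_le_one x)
  have h2 : ‖(2 : ℤ_[ℓ])‖ = 1 := by
    have h : IsUnit ((2 : ℕ) : ℤ_[ℓ]) := by
      rw [PadicInt.isUnit_iff, PadicInt.norm_natCast_eq_one_iff]
      exact (Nat.coprime_primes hp Nat.prime_two).2 hℓ
    simpa using PadicInt.isUnit_iff.1 h
  obtain ⟨s, hs, -⟩ := hensels_lemma (p := ℓ)
    (F := (Polynomial.X ^ 2 - Polynomial.C (1 + (ℓ : ℤ_[ℓ]) * x) : Polynomial ℤ_[ℓ])) (a := 1)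
    (by
      have h2' : ‖(1 : ℤ_[ℓ]) + 1‖ = 1 := by rw [one_add_one_eq_two, h2]
      simpa [h2'] using hx)
  have hs' : s * s = 1 + ℓ * x := by
    simp at hs
    linear_combination hs
  have hu : IsUnit (1 + (ℓ : ℤ_[ℓ]) * x) := by
    rw [PadicInt.isUnit_iff]
    have := PadicInt.norm_add_eq_max_of_ne (p := ℓ) (q := 1) (r := ℓ * x)
      (by rw [norm_one]; exact hx.ne')
    rw [this, norm_one, max_eq_left hx.le]
  rw [← hs'] at hu
  obtain ⟨t, ht⟩ := (isUnit_of_mul_isUnit_left hu).exists_right_inv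
  exact ⟨s, t, ht, hs'⟩

/-- Every matrix `diag(d) + ℓ ^ (K + 1) A` with `A` symmetric, indexed by `α`, and all `d i`
dividing `ℓ ^ K`, is `ℤ_ℓ`-congruent to `diag(d)`. The decidable equality is universally quantified
so that the property does not depend on a choice of instance. -/
def DiagonalCongruence (ℓ : ℕ) [Fact ℓ.Prime] (K : ℕ) (α : Type) [Fintype α] : Prop :=
  ∀ (_ : DecidableEq α) (d : α → ℤ_[ℓ]), (∀ i, d i ∣ (ℓ : ℤ_[ℓ]) ^ K) →
    ∀ A : Matrix α α ℤ_[ℓ], A.IsSymm →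
      ∃ D : Matrix α α ℤ_[ℓ], IsUnit D.det ∧
        diagonal d + (ℓ : ℤ_[ℓ]) ^ (K + 1) • A = D * diagonal d * Dᵀ

lemma DiagonalCongruence.of_equiv {ℓ : ℕ} [Fact ℓ.Prime] {K : ℕ} {α β : Type} [Fintype α]
    [Fintype β] (e : α ≃ β) (h : DiagonalCongruence ℓ K α) : DiagonalCongruence ℓ K β := by
  classical
  intro _ d hd A hA
  obtain ⟨D, hD, hE⟩ := h inferInstance (d ∘ e) (fun i => hd _) (A.submatrix e e) (hA.submatrix e)
  refine ⟨D.submatrix e.symm e.symm, by rwa [det_submatrix_equiv_self], ?_⟩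
  have h1 := congrArg (fun M => M.submatrix e.symm e.symm) hE
  have h2 : (diagonal (d ∘ e)).submatrix e.symm e.symm = diagonal d := by
    rw [submatrix_diagonal_equiv]
    congr 1
    ext i
    simp
  have h3 : (A.submatrix e e).submatrix e.symm e.symm = A := by
    ext i j
    simp
  simp only [submatrix_add, submatrix_smul, ← submatrix_mul_equiv _ _ _ e.symm _] at h1
  simp only [Pi.add_apply, Pi.smul_apply, h2, h3] at h1
  rw [h1, transpose_submatrix]

/-- One step of symmetric Gaussian elimination, with the pivot in the last coordinate: the
transformation is block upper triangular, its lower right entry is a square root of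
`pivot / d`, and its upper left block comes from the Schur complement. -/
lemma congruence_step {ℓ : ℕ} [Fact ℓ.Prime] (hℓ : ℓ ≠ 2) {K : ℕ} {α : Type} [Fintype α]
    (h : DiagonalCongruence ℓ K α) : DiagonalCongruence ℓ K (α ⊕ Unit) := by
  classical
  intro inst d hd A hA
  obtain rfl : inst = instDecidableEqSum := Subsingleton.elim _ _
  obtain ⟨q, hq⟩ := hd (Sum.inr ())
  set δ := d (Sum.inr ()) with hδ
  set a := A (Sum.inr ()) (Sum.inr ()) with ha
  set b : α → ℤ_[ℓ] := fun i => A (Sum.inl i) (Sum.inr ()) with hb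
  have hA' : ∀ i, A (Sum.inr ()) (Sum.inl i) = b i := fun i => hA.apply _ _
  obtain ⟨s, t, hst, hss⟩ := exists_sq_eq_one_add ℓ hℓ (q * a)
  obtain ⟨E, hE, hEq⟩ := h inferInstance (fun i => d (Sum.inl i)) (fun i => hd _)
    (of fun i j => A (Sum.inl i) (Sum.inl j) - ℓ * q * t ^ 2 * (b i * b j)) (by
      ext i j
      simp only [transpose_apply, of_apply]
      rw [hA.apply, mul_comm (b j)])
  refine ⟨fromBlocks E (of fun i _ => ℓ * q * b i * t) 0 (of fun _ _ => s), ?_, ?_⟩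
  · rw [det_fromBlocks_zero₂₁, det_unique (of fun (_ _ : Unit) => s)]
    exact hE.mul (IsUnit.of_mul_eq_one t hst)
  · have hd' : diagonal d = fromBlocks (diagonal fun i => d (Sum.inl i)) 0 0
        (diagonal fun _ : Unit => δ) := by
      rw [fromBlocks_diagonal]
      congr 1
      ext (i | i) <;> rfl
    have hAb : A = fromBlocks (of fun i j => A (Sum.inl i) (Sum.inl j)) (of fun i _ => b i)
        (of fun _ j => b j) (of fun _ _ => a) := by
      ext (i | i) (j | j)
      · rfl
      · rfl
      · exact hA' j
      · rfl
    rw [hd', fromBlocks_transpose, fromBlocks_multiply, fromBlocks_multiply]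
    conv_lhs => rw [hAb]
    rw [fromBlocks_smul, fromBlocks_add]
    simp only [Matrix.mul_zero, Matrix.zero_mul, add_zero, zero_add, transpose_zero]
    rw [← hEq, fromBlocks_inj]
    refine ⟨?_, ?_, ?_, ?_⟩
    · ext i j
      simp [Matrix.mul_apply, pow_succ, hq, Matrix.diagonal]
      ring
    · ext i j
      simp [Matrix.mul_apply, pow_succ, hq, Matrix.diagonal]
      linear_combination (- δ * q * ℓ * b i) * hst
    · ext i j
      simp [Matrix.mul_apply, pow_succ, hq, Matrix.diagonal]
      linear_combination (- δ * q * ℓ * b j) * hst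
    · ext i j
      simp [Matrix.mul_apply, pow_succ, hq, Matrix.diagonal]
      linear_combination (- δ) * hss

lemma exists_congruence_diagonal {ℓ : ℕ} [Fact ℓ.Prime] (hℓ : ℓ ≠ 2) (K : ℕ) (α : Type)
    [Fintype α] : DiagonalCongruence ℓ K α := by
  refine Fintype.induction_empty_option (P := fun α _ => DiagonalCongruence ℓ K α) ?_ ?_ ?_ α
  · intro α β _ e h
    let _ : Fintype α := Fintype.ofEquiv β e.symm
    exact DiagonalCongruence.of_equiv e h
  · intro _ d _ A _
    exact ⟨1, by simp, Subsingleton.elim _ _⟩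
  · intro α _ h
    exact (congruence_step hℓ h).of_equiv (Equiv.optionEquivSumPUnit α).symm

theorem stmt_4 (ℓ : ℕ) [Fact ℓ.Prime] (hℓ : ℓ ≠ 2)
    -- a non-square unit `z ∈ ℤ_ℓ^×`
    (z : ℤ_[ℓ]) (hz : IsUnit z) (hznsq : ¬ ∃ y : ℤ_[ℓ], y * y = z)
    -- the data of a standard block form: `0 ≤ k₁ < k₂ < ⋯ < k_r`, block sizes `n i ≥ 1`,
    -- each block either the identity or `diag(1, …, 1, z)`
    (r : ℕ) (hr : 0 < r) (k : Fin r → ℕ) (hk : StrictMono k)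
    (n : Fin r → ℕ) (hn : ∀ i, 0 < n i)
    (Λb : ∀ i : Fin r, Matrix (Fin (n i)) (Fin (n i)) ℤ_[ℓ])
    (hΛb : ∀ i, Λb i = 1 ∨
      Λb i = Matrix.diagonal (fun j : Fin (n i) => if (j : ℕ) = n i - 1 then z else 1))
    -- an arbitrary symmetric matrix `A'` over `ℤ_ℓ`
    (A' : Matrix ((i : Fin r) × Fin (n i)) ((i : Fin r) × Fin (n i)) ℤ_[ℓ])
    (hA' : A'.IsSymm) :
    -- `Λ + ℓ^{k_r+1} A'` is `ℤ_ℓ`-congruent to `Λ`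
    ∃ D : Matrix ((i : Fin r) × Fin (n i)) ((i : Fin r) × Fin (n i)) ℤ_[ℓ],
      IsUnit D.det ∧
      stdBlockForm ℓ r k n Λb +
          (ℓ : ℤ_[ℓ]) ^ (k ⟨r - 1, Nat.sub_lt hr Nat.one_pos⟩ + 1) • A' =
        D * stdBlockForm ℓ r k n Λb * Dᵀ := by
  set K := k ⟨r - 1, Nat.sub_lt hr Nat.one_pos⟩ with hK
  have hw : ∀ i, ∃ w : Fin (n i) → ℤ_[ℓ], (∀ j, IsUnit (w j)) ∧ Λb i = diagonal w := by
    intro i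
    rcases hΛb i with h | h
    · exact ⟨fun _ => 1, fun _ => isUnit_one, by rw [h, diagonal_one]⟩
    · refine ⟨_, fun j => ?_, h⟩
      split_ifs
      exacts [hz, isUnit_one]
  choose w hwu hw using hw
  have hΛ : stdBlockForm ℓ r k n Λb =
      diagonal fun x : (i : Fin r) × Fin (n i) => (ℓ : ℤ_[ℓ]) ^ k x.1 * w x.1 x.2 := by
    rw [stdBlockForm,
      ← blockDiagonal'_diagonal fun i (j : Fin (n i)) => (ℓ : ℤ_[ℓ]) ^ k i * w i j]
    congr 1
    ext1 i
    rw [hw i, ← diagonal_smul]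
    rfl
  rw [hΛ]
  refine exists_congruence_diagonal hℓ K _ _ _ (fun x => ?_) A' hA'
  refine (hwu x.1 x.2).mul_right_dvd.2 (pow_dvd_pow _ (hk.monotone ?_))
  rw [Fin.le_def]
  exact Nat.le_sub_one_of_lt x.1.isLt
end

section
/- Fix an odd prime ℓ and a non-square unit z ∈ ℤ_ℓ^×, and let Λ = diag(ℓ^{k₁}Λ₁, …, ℓ^{k_r}Λ_r) be a standard block form with 0 ≤ k₁ < ⋯ < k_r, block sizes n_i, n = Σ n_i. Then a symmetric n×n matrix A over ℤ_ℓ is ℤ_ℓ-congruent to Λ if and only if the reduction of A modulo ℓ^{k_r+1} is (ℤ/ℓ^{k_r+1})-congruent to the reduction of Λ modulo ℓ^{k_r+1}. -/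
/-!
The forward direction is reduction modulo `ℓ^(K+1)`, where `K = k_r`. For the converse, the lift of a
congruence modulo `ℓ^(K+1)` is improved by Newton's method and a compactness argument finishes.

Everything rests on two properties of `Λ`: it is symmetric, and it divides `ℓ^K`, i.e. `N Λ = ℓ^K`
for some `N` (`exists_mul_stdBlockForm`).

* Newton step (`newton_step`): if `A = D Λ Dᵀ + ℓ^m E` with `m > K` and `D` invertible, put
  `Y = ½ ℓ^(m-K) E D⁻ᵀ N`, which makes sense as `ℓ ≠ 2`. Then `Y Λ Dᵀ = ½ ℓ^m E`, so
  `A - (D+Y) Λ (D+Y)ᵀ = - Y Λ Yᵀ`, which is divisible by `ℓ^(2(m-K)) ℓ^K`, hence by `ℓ^(m+1)`. As `Y ≡ 0` modulo `ℓ`, `D + Y` stays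
  invertible.
* Compactness (`congruent_of_approx`): `GL_n(ℤ_ℓ)` is closed in the compact space of matrices, so
  the set of all `D Λ Dᵀ` with `D` invertible is compact, hence closed. It contains elements
  arbitrarily close to `A`, so it contains `A`.
-/

open Matrix

/-- An `ℓ`-adically small perturbation preserves invertibility. -/
lemma isUnit_det_add_smul {ℓ : ℕ} [Fact ℓ.Prime] {ι : Type*} [Fintype ι] [DecidableEq ι]
    {D : Matrix ι ι ℤ_[ℓ]} (hD : IsUnit D.det) (Y : Matrix ι ι ℤ_[ℓ]) :
    IsUnit (D + (ℓ : ℤ_[ℓ]) • Y).det := by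
  have hmap : (IsLocalRing.residue ℤ_[ℓ]).mapMatrix (D + (ℓ : ℤ_[ℓ]) • Y) =
      (IsLocalRing.residue ℤ_[ℓ]).mapMatrix D := by
    have h0 : IsLocalRing.residue ℤ_[ℓ] (ℓ : ℤ_[ℓ]) = 0 := by
      rw [IsLocalRing.residue_eq_zero_iff, PadicInt.maximalIdeal_eq_span_p]
      exact Ideal.mem_span_singleton_self _
    ext i j
    simp only [RingHom.mapMatrix_apply, Matrix.map_apply, Matrix.add_apply, Matrix.smul_apply,
      smul_eq_mul, map_add, map_mul, h0, zero_mul, add_zero]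
  rw [← isUnit_map_iff (IsLocalRing.residue ℤ_[ℓ]), RingHom.map_det, hmap, ← RingHom.map_det]
  exact hD.map _

/-- Newton's method for `D ↦ D Λ Dᵀ`, at precision `ℓ^m` with `m = K + 1 + t`. -/
lemma newton_step {ℓ : ℕ} [Fact ℓ.Prime] {ι : Type*} [Fintype ι] [DecidableEq ι] {K t : ℕ}
    {c : ℤ_[ℓ]} (hc : c + c = 1) {L N A D E : Matrix ι ι ℤ_[ℓ]} (hL : L.IsSymm)
    (hN : N * L = (ℓ : ℤ_[ℓ]) ^ K • (1 : Matrix ι ι ℤ_[ℓ])) (hA : A.IsSymm)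
    (hD : IsUnit D.det) (h : A = D * L * Dᵀ + (ℓ : ℤ_[ℓ]) ^ (K + 1 + t) • E) :
    ∃ D' E' : Matrix ι ι ℤ_[ℓ], IsUnit D'.det ∧
      A = D' * L * D'ᵀ + (ℓ : ℤ_[ℓ]) ^ (K + 1 + (t + 1)) • E' := by
  have hL' : Lᵀ = L := hL
  have hℓ0 : (ℓ : ℤ_[ℓ]) ≠ 0 := Nat.cast_ne_zero.mpr (Fact.out : ℓ.Prime).ne_zero
  have hE : Eᵀ = E := by
    have h1 : (ℓ : ℤ_[ℓ]) ^ (K + 1 + t) • E = A - D * L * Dᵀ := by rw [h]; abel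
    have h2 : (ℓ : ℤ_[ℓ]) ^ (K + 1 + t) • Eᵀ = (ℓ : ℤ_[ℓ]) ^ (K + 1 + t) • E := by
      rw [← Matrix.transpose_smul, h1, Matrix.transpose_sub, hA.eq]
      simp only [Matrix.transpose_mul, Matrix.transpose_transpose, hL', Matrix.mul_assoc]
    ext i j
    have h3 := congrFun (congrFun h2 i) j
    simp only [Matrix.smul_apply, smul_eq_mul] at h3
    exact mul_left_cancel₀ (pow_ne_zero _ hℓ0) h3
  have hDt : IsUnit Dᵀ.det := by rwa [Matrix.det_transpose]
  -- `Z` is the Newton correction stripped of its power of `ℓ`.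
  set Z : Matrix ι ι ℤ_[ℓ] := c • (E * (Dᵀ)⁻¹ * N) with hZ
  have hZL : Z * L = (ℓ : ℤ_[ℓ]) ^ K • (c • (E * (Dᵀ)⁻¹)) := by
    rw [hZ, Matrix.smul_mul, Matrix.mul_assoc, hN, Matrix.mul_smul, Matrix.mul_one, smul_comm]
  have hZD : Z * L * Dᵀ = (ℓ : ℤ_[ℓ]) ^ K • (c • E) := by
    rw [hZL, Matrix.smul_mul, Matrix.smul_mul, Matrix.mul_assoc, Matrix.nonsing_inv_mul _ hDt,
      Matrix.mul_one]
  have hDZ : D * L * Zᵀ = (ℓ : ℤ_[ℓ]) ^ K • (c • E) := by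
    have := congrArg Matrix.transpose hZD
    simpa only [Matrix.transpose_mul, Matrix.transpose_transpose, hL', Matrix.transpose_smul, hE,
      Matrix.mul_assoc] using this
  refine ⟨D + (ℓ : ℤ_[ℓ]) • ((ℓ : ℤ_[ℓ]) ^ t • Z),
    -((ℓ : ℤ_[ℓ]) ^ t • (c • (E * (Dᵀ)⁻¹) * Zᵀ)), isUnit_det_add_smul hD _, ?_⟩
  have hc' : (ℓ : ℤ_[ℓ]) ^ (K + 1 + t) • E = ((ℓ : ℤ_[ℓ]) * ℓ ^ t * ℓ ^ K * (c + c)) • E := by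
    rw [hc]; congr 1; ring
  rw [h, hc']
  simp only [Matrix.transpose_add, Matrix.transpose_smul, Matrix.add_mul, Matrix.mul_add,
    Matrix.smul_mul, Matrix.mul_smul, hZD, hDZ]
  rw [hZL]
  simp only [Matrix.smul_mul]
  module

/-- The orbit of `L` under `GL_n(ℤ_ℓ)` is compact, so approximate congruences of every precision
yield an exact one. -/
lemma congruent_of_approx {ℓ : ℕ} [Fact ℓ.Prime] {ι : Type*} [Fintype ι] [DecidableEq ι]
    {a : ℕ} {L A : Matrix ι ι ℤ_[ℓ]}
    (h : ∀ t : ℕ, ∃ D E : Matrix ι ι ℤ_[ℓ], IsUnit D.det ∧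
      A = D * L * Dᵀ + (ℓ : ℤ_[ℓ]) ^ (a + t) • E) :
    ∃ D : Matrix ι ι ℤ_[ℓ], IsUnit D.det ∧ A = D * L * Dᵀ := by
  have hcl : IsClosed {D : Matrix ι ι ℤ_[ℓ] | IsUnit D.det} := by
    simp only [PadicInt.isUnit_iff]
    exact isClosed_eq (continuous_id.matrix_det.norm) continuous_const
  have : CompactSpace (Matrix ι ι ℤ_[ℓ]) := inferInstanceAs (CompactSpace (ι → ι → ℤ_[ℓ]))
  have hcont : Continuous fun D : Matrix ι ι ℤ_[ℓ] => D * L * Dᵀ :=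
    (continuous_id.matrix_mul continuous_const).matrix_mul continuous_id.matrix_transpose
  have hS := (hcl.isCompact.image hcont).isClosed
  choose D E hD hE using h
  have hlim : Filter.Tendsto (fun t => D t * L * (D t)ᵀ) Filter.atTop (nhds A) := by
    have heq : ∀ t, D t * L * (D t)ᵀ = A - (ℓ : ℤ_[ℓ]) ^ (a + t) • E t := fun t =>
      eq_sub_of_add_eq (hE t).symm
    have hp : Filter.Tendsto (fun t : ℕ => ‖(ℓ : ℤ_[ℓ])‖ ^ (a + t)) Filter.atTop (nhds 0) := by
      have := tendsto_pow_atTop_nhds_zero_of_lt_one (norm_nonneg (ℓ : ℤ_[ℓ]))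
        (PadicInt.mem_nonunits.mp PadicInt.p_nonunit)
      exact this.comp (Filter.tendsto_atTop_mono (fun t => Nat.le_add_left t a) Filter.tendsto_id)
    simp only [heq]
    refine tendsto_pi_nhds.mpr fun i => tendsto_pi_nhds.mpr fun j => ?_
    have h0 : Filter.Tendsto (fun t => (ℓ : ℤ_[ℓ]) ^ (a + t) * E t i j) Filter.atTop (nhds 0) := by
      refine squeeze_zero_norm (fun t => ?_) hp
      rw [norm_mul, norm_pow]
      exact mul_le_of_le_one_right (by positivity) (PadicInt.norm_le_one _)
    simpa using (tendsto_const_nhds (x := A i j)).sub h0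
  obtain ⟨D', hD', h'⟩ := hS.mem_of_tendsto hlim
    (Filter.Eventually.of_forall fun t => ⟨D t, hD t, rfl⟩)
  exact ⟨D', hD', h'.symm⟩

/-- A block form with invertible blocks and exponents at most `K` divides `ℓ^K`. -/
lemma exists_mul_stdBlockForm (ℓ : ℕ) [Fact ℓ.Prime] (r : ℕ) (k n : Fin r → ℕ)
    (Λb : ∀ i : Fin r, Matrix (Fin (n i)) (Fin (n i)) ℤ_[ℓ]) (hΛ : ∀ i, IsUnit (Λb i).det)
    (K : ℕ) (hK : ∀ i, k i ≤ K) :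
    ∃ N, N * stdBlockForm ℓ r k n Λb = (ℓ : ℤ_[ℓ]) ^ K • 1 := by
  refine ⟨Matrix.blockDiagonal' fun i => (ℓ : ℤ_[ℓ]) ^ (K - k i) • (Λb i)⁻¹, ?_⟩
  rw [stdBlockForm, ← Matrix.blockDiagonal'_mul, ← Matrix.blockDiagonal'_one,
    ← Matrix.blockDiagonal'_smul]
  congr 1
  funext i
  rw [Matrix.smul_mul, Matrix.mul_smul, Matrix.nonsing_inv_mul _ (hΛ i), smul_smul, ← pow_add,
    Nat.sub_add_cancel (hK i)]
  rfl

theorem stmt_5 (ℓ : ℕ) [Fact ℓ.Prime] (hℓ : ℓ ≠ 2)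
    -- a non-square unit `z ∈ ℤ_ℓ^×`
    (z : ℤ_[ℓ]) (hz : IsUnit z) (hznsq : ¬ ∃ y : ℤ_[ℓ], y * y = z)
    -- the data of a standard block form
    (r : ℕ) (hr : 0 < r) (k : Fin r → ℕ) (hk : StrictMono k)
    (n : Fin r → ℕ) (hn : ∀ i, 0 < n i)
    (Λb : ∀ i : Fin r, Matrix (Fin (n i)) (Fin (n i)) ℤ_[ℓ])
    (hΛb : ∀ i, Λb i = 1 ∨
      Λb i = Matrix.diagonal (fun j : Fin (n i) => if (j : ℕ) = n i - 1 then z else 1))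
    -- a symmetric matrix `A` over `ℤ_ℓ`
    (A : Matrix ((i : Fin r) × Fin (n i)) ((i : Fin r) × Fin (n i)) ℤ_[ℓ])
    (hA : A.IsSymm) :
    -- `A` is `ℤ_ℓ`-congruent to `Λ` iff `A mod ℓ^{k_r+1}` is
    -- `(ℤ/ℓ^{k_r+1})`-congruent to `Λ mod ℓ^{k_r+1}`
    (∃ D : Matrix ((i : Fin r) × Fin (n i)) ((i : Fin r) × Fin (n i)) ℤ_[ℓ],
        IsUnit D.det ∧ A = D * stdBlockForm ℓ r k n Λb * Dᵀ) ↔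
    (∃ D : Matrix ((i : Fin r) × Fin (n i)) ((i : Fin r) × Fin (n i))
        (ZMod (ℓ ^ (k ⟨r - 1, Nat.sub_lt hr Nat.one_pos⟩ + 1))),
        IsUnit D.det ∧
        A.map (PadicInt.toZModPow (k ⟨r - 1, Nat.sub_lt hr Nat.one_pos⟩ + 1)) =
          D * (stdBlockForm ℓ r k n Λb).map
              (PadicInt.toZModPow (k ⟨r - 1, Nat.sub_lt hr Nat.one_pos⟩ + 1)) * Dᵀ) := by
  classical
  set K := k ⟨r - 1, Nat.sub_lt hr Nat.one_pos⟩ with hKdef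
  set L := stdBlockForm ℓ r k n Λb with hLdef
  set φ := PadicInt.toZModPow (p := ℓ) (K + 1) with hφ
  have hℓp : ℓ.Prime := Fact.out
  constructor
  · rintro ⟨D, hD, h⟩
    refine ⟨D.map φ, ?_, ?_⟩
    · have := hD.map φ
      rwa [RingHom.map_det] at this
    · rw [h, Matrix.map_mul, Matrix.map_mul, Matrix.transpose_map]
  · rintro ⟨D, hD, h⟩
    have hK : ∀ i, k i ≤ K := fun i => hk.monotone (Fin.le_def.mpr (by simp; omega))
    have hunit : ∀ i, IsUnit (Λb i).det := by
      intro i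
      rcases hΛb i with h | h <;> rw [h]
      · simp
      · rw [Matrix.det_diagonal]
        refine IsUnit.prod_univ_iff.mpr fun j => ?_
        split_ifs
        · exact hz
        · exact isUnit_one
    have hLs : L.IsSymm := by
      rw [Matrix.IsSymm, hLdef, stdBlockForm, Matrix.blockDiagonal'_transpose]
      congr 1
      funext i
      rcases hΛb i with h | h <;> simp [h]
    obtain ⟨N, hN⟩ := exists_mul_stdBlockForm ℓ r k n Λb hunit K hK
    obtain ⟨c, hc⟩ : ∃ c : ℤ_[ℓ], c + c = 1 := by
      have h2 : IsUnit ((2 : ℕ) : ℤ_[ℓ]) := by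
        rw [PadicInt.isUnit_iff, PadicInt.norm_natCast_eq_one_iff]
        exact (Nat.coprime_primes hℓp Nat.prime_two).mpr hℓ
      obtain ⟨c, hc⟩ := h2.exists_right_inv
      exact ⟨c, by rw [← hc]; push_cast; ring⟩
    have hsurj : Function.Surjective φ := ZMod.ringHom_surjective φ
    have : Nontrivial (ZMod (ℓ ^ (K + 1))) :=
      ZMod.nontrivial_iff.mpr (Nat.one_lt_pow (Nat.succ_ne_zero _) hℓp.one_lt).ne'
    have : IsLocalHom φ := IsLocalHom.of_surjective φ hsurj
    -- `D.map s` is an entrywise lift of `D`; its determinant is a unit since `φ` is local.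
    choose s hs using hsurj
    have hlift : (D.map s).map φ = D := by ext i j; simp [hs]
    refine congruent_of_approx (a := K + 1) fun t => ?_
    induction t with
    | zero =>
      have hker : ∀ i j, ∃ e, (A - D.map s * L * (D.map s)ᵀ) i j = (ℓ : ℤ_[ℓ]) ^ (K + 1) * e := by
        intro i j
        refine Ideal.mem_span_singleton.mp ?_
        rw [← PadicInt.ker_toZModPow, RingHom.mem_ker]
        have h0 : (A - D.map s * L * (D.map s)ᵀ).map φ = 0 := by
          rw [Matrix.map_sub _ (map_sub φ), Matrix.map_mul, Matrix.map_mul, Matrix.transpose_map,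
            hlift, h, sub_self]
        exact congrFun (congrFun h0 i) j
      choose e he using hker
      refine ⟨D.map s, Matrix.of e, ?_, ?_⟩
      · rw [← isUnit_map_iff φ, RingHom.map_det, RingHom.mapMatrix_apply, hlift]
        exact hD
      · rw [← sub_eq_iff_eq_add']
        ext i j
        simpa using he i j
    | succ t ih =>
      obtain ⟨D', E', hD', h'⟩ := ih
      exact newton_step hc hLs hN hA hD' h'
end

section
/- Let ℓ be an odd prime, n ≥ 1, s ≥ 1, and Λ a symmetric n×n integer matrix with ℓ ∤ det(Λ). Then the reduction homomorphism O(Λ, ℤ/ℓ^{s+1}) → O(Λ, ℤ/ℓ^s) is surjective and every fiber has exactly ℓ^{n(n−1)/2} elements; consequently #O(Λ, ℤ/ℓ^{s+1}) = ℓ^{s·n(n−1)/2} · #O(Λ, ℤ/ℓ). Moreover, the kernel of this homomorphism consists exactly of the matrices 1ₙ + ℓ^s D with D ∈ M_n(ℤ/ℓ) satisfying DᵀΛ + ΛD ≡ 0 (mod ℓ), a set of cardinality ℓ^{n(n−1)/2}. -/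
/-!
The reduction `ℤ/ℓ^{s+1} → ℤ/ℓ^s` is a small extension: its kernel is generated by `c = ℓ^s`,
where `c² = 0` and `c r = 0` exactly when `r` vanishes in the residue field `ℤ/ℓ`. All matrices
reducing to the same `g₀` differ by some `c X`, and modulo `c²`

  `(g + c X)ᵀ S (g + c X) = gᵀ S g + c (Xᵀ S g + gᵀ S X)`.

If `g` is any lift of an orthogonal `g₀`, then `gᵀ S g = S + c T` with `c T` symmetric, and
`X = -½ g S⁻¹ T` corrects `g` to an orthogonal matrix (`SmallExt.exists_lift`).
If `g` is itself orthogonal, the substitution `X = g S⁻¹ Y` turns the condition on `X` into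
`Y + Yᵀ = 0` over `ℤ/ℓ`, so each fiber is in bijection with the skew-symmetric matrices over `ℤ/ℓ`
(`SmallExt.card_fiber`), of which there are `ℓ^{n(n-1)/2}` because `ℓ` is odd (`card_skew`).
The order formula follows by induction on `s`, and the kernel is the fiber over `1`.
-/

open Matrix

/-- The orthogonal group `O(S, R) = {g ∈ GL_n(R) : gᵀ S g = S}` of a symmetric matrix `S`,
as a set of matrices. -/
def orthSet {R : Type*} [CommRing R] {n : ℕ} (S : Matrix (Fin n) (Fin n) R) :
    Set (Matrix (Fin n) (Fin n) R) :=
  {g | IsUnit g.det ∧ gᵀ * S * g = S}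

/-! ### Small extensions and orthogonal groups -/

/-- A small extension `φ : R → R₀` with residue ring `F`: the kernel of `φ` is the principal
ideal `(c)`, which has square zero and annihilator `ker ρ`, so that it is isomorphic to `F`. -/
structure SmallExt {R R₀ F : Type*} [CommRing R] [CommRing R₀] [CommRing F]
    (φ : R →+* R₀) (ρ : R →+* F) (c : R) : Prop where
  phi_surj : Function.Surjective φ
  rho_surj : Function.Surjective ρ
  phi_eq_zero : ∀ r, φ r = 0 ↔ ∃ t, r = c * t
  mul_eq_zero : ∀ r, c * r = 0 ↔ ρ r = 0
  sq_zero : c * c = 0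

section General

variable {R R₀ F : Type*} [CommRing R] [CommRing R₀] [CommRing F] {n : ℕ}

/-- Over a form with unit determinant, the equation `gᵀ S g = S` forces `g` to be invertible. -/
lemma mem_orthSet_iff {S : Matrix (Fin n) (Fin n) R} (hS : IsUnit S.det)
    (g : Matrix (Fin n) (Fin n) R) : g ∈ orthSet S ↔ gᵀ * S * g = S := by
  refine ⟨fun h => h.2, fun h => ⟨?_, h⟩⟩
  have h1 := congrArg Matrix.det h
  rw [det_mul] at h1
  exact isUnit_of_mul_isUnit_right (h1 ▸ hS)

lemma map_mem_orthSet (φ : R →+* R₀) {S g : Matrix (Fin n) (Fin n) R} (h : g ∈ orthSet S) :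
    g.map φ ∈ orthSet (S.map φ) := by
  refine ⟨?_, ?_⟩
  · have := h.1.map φ
    rwa [RingHom.map_det] at this
  · rw [← transpose_map, ← Matrix.map_mul, ← Matrix.map_mul, h.2]

/-- A skew-symmetric matrix is determined freely by its entries above the diagonal; the entry at
`(i, j)` with `i < j` is indexed by `⟨j, i⟩`. -/
lemma card_skew [NoZeroDivisors F] (h2 : (2 : F) ≠ 0) :
    Nat.card {Y : Matrix (Fin n) (Fin n) F // Yᵀ + Y = 0} = Nat.card F ^ (n * (n - 1) / 2) := by
  have e : {Y : Matrix (Fin n) (Fin n) F // Yᵀ + Y = 0} ≃ ((Σ j : Fin n, Fin j.val) → F) :=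
    { toFun := fun Y p => Y.1 ⟨p.2.val, p.2.isLt.trans p.1.isLt⟩ p.1
      invFun := fun f => ⟨Matrix.of fun i j =>
        if h : i.val < j.val then f ⟨j, ⟨i.val, h⟩⟩
        else if h : j.val < i.val then - f ⟨i, ⟨j.val, h⟩⟩ else 0, by
          ext i j
          simp only [Matrix.add_apply, transpose_apply, of_apply, Matrix.zero_apply]
          rcases lt_trichotomy i.val j.val with h | h | h
          · simp [h, h.not_gt]
          · simp [h]
          · simp [h, h.not_gt]⟩
      left_inv := by
        rintro ⟨Y, hY⟩
        have hij : ∀ i j, Y j i + Y i j = 0 := fun i j => congrFun (congrFun hY i) j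
        ext i j
        simp only [of_apply]
        split_ifs with h h'
        · rfl
        · exact (eq_neg_of_add_eq_zero_right (hij i j)).symm
        · have : i = j := Fin.ext (by omega)
          subst this
          have h3 := hij i i
          rw [← two_mul] at h3
          exact ((_root_.mul_eq_zero.mp h3).resolve_left h2).symm
      right_inv := by
        intro f
        ext ⟨j, i⟩
        exact dif_pos i.isLt }
  rw [Nat.card_congr e, Nat.card_fun]
  congr 1
  rw [Nat.card_eq_fintype_card, Fintype.card_sigma]
  simp only [Fintype.card_fin]
  rw [Fin.sum_univ_eq_sum_range (fun i => i) n, Finset.sum_range_id]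

namespace SmallExt

variable {φ : R →+* R₀} {ρ : R →+* F} {c : R}

lemma smul_eq_zero (H : SmallExt φ ρ c)
    (A : Matrix (Fin n) (Fin n) R) : c • A = 0 ↔ A.map ρ = 0 := by
  simp only [← Matrix.ext_iff, Matrix.smul_apply, smul_eq_mul, Matrix.zero_apply, map_apply,
    H.mul_eq_zero]

lemma map_eq_iff (H : SmallExt φ ρ c) (A B : Matrix (Fin n) (Fin n) R) :
    A.map φ = B.map φ ↔ ∃ X : Matrix (Fin n) (Fin n) R, A = B + c • X := by
  constructor
  · intro h
    have : ∀ i j, ∃ t, A i j - B i j = c * t := fun i j => by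
      rw [← H.phi_eq_zero, map_sub, sub_eq_zero]
      exact congrFun (congrFun h i) j
    choose X hX using this
    refine ⟨Matrix.of X, ?_⟩
    ext i j
    simp [← hX]
  · rintro ⟨X, rfl⟩
    ext i j
    simp [(H.phi_eq_zero c).2 ⟨1, by simp⟩]

lemma smul_eq_smul_iff (H : SmallExt φ ρ c) (A B : Matrix (Fin n) (Fin n) R) :
    c • A = c • B ↔ A.map ρ = B.map ρ := by
  rw [← sub_eq_zero, ← smul_sub, H.smul_eq_zero, Matrix.map_sub ρ (map_sub ρ), sub_eq_zero]

lemma expand (H : SmallExt φ ρ c)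
    {S : Matrix (Fin n) (Fin n) R} (hS : Sᵀ = S) (g X : Matrix (Fin n) (Fin n) R) :
    (g + c • X)ᵀ * S * (g + c • X) = gᵀ * S * g + c • ((gᵀ * S * X)ᵀ + gᵀ * S * X) := by
  have h : (gᵀ * S * X)ᵀ = Xᵀ * S * g := by
    rw [transpose_mul, transpose_mul, transpose_transpose, hS, Matrix.mul_assoc]
  rw [h, transpose_add, transpose_smul]
  simp only [Matrix.add_mul, Matrix.mul_add, Matrix.smul_mul, Matrix.mul_smul, smul_add, smul_smul,
    H.sq_zero, zero_smul, add_zero]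
  abel

/-- Near an orthogonal `g`, orthogonality of `g + c X` is a linear condition over `F`. -/
lemma add_smul_mem_iff (H : SmallExt φ ρ c)
    {S : Matrix (Fin n) (Fin n) R} (hS : Sᵀ = S) (hdet : IsUnit S.det)
    {g : Matrix (Fin n) (Fin n) R} (hg : g ∈ orthSet S) (X : Matrix (Fin n) (Fin n) R) :
    g + c • X ∈ orthSet S ↔ ((gᵀ * S * X).map ρ)ᵀ + (gᵀ * S * X).map ρ = 0 := by
  rw [mem_orthSet_iff hdet, H.expand hS, hg.2, add_eq_left, H.smul_eq_zero,
    Matrix.map_add ρ (map_add ρ), transpose_map]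

lemma exists_lift (H : SmallExt φ ρ c)
    {S : Matrix (Fin n) (Fin n) R} (hS : Sᵀ = S) (hdet : IsUnit S.det)
    (h2 : IsUnit (2 : R)) {g₀ : Matrix (Fin n) (Fin n) R₀} (hg₀ : g₀ ∈ orthSet (S.map φ)) :
    ∃ g ∈ orthSet S, g.map φ = g₀ := by
  obtain ⟨g, rfl⟩ : ∃ g : Matrix (Fin n) (Fin n) R, g.map φ = g₀ := by
    choose f hf using H.phi_surj
    exact ⟨g₀.map f, by ext i j; simp [hf]⟩
  obtain ⟨T, hT⟩ := (H.map_eq_iff (gᵀ * S * g) S).1 (by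
    rw [Matrix.map_mul, Matrix.map_mul, transpose_map, hg₀.2])
  obtain ⟨u, hu⟩ := h2.exists_left_inv
  have hTsymm : c • Tᵀ = c • T := by
    have h1 : (gᵀ * S * g)ᵀ = gᵀ * S * g := by
      rw [transpose_mul, transpose_mul, transpose_transpose, hS, Matrix.mul_assoc]
    rw [hT, transpose_add, transpose_smul, hS] at h1
    exact add_left_cancel h1
  have hX : c • (gᵀ * S * (-(u • (g * S⁻¹ * T)))) = -(u • (c • T)) := by
    have h1 : gᵀ * S * (g * S⁻¹ * T) = T + c • (T * S⁻¹ * T) := by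
      rw [← Matrix.mul_assoc, ← Matrix.mul_assoc, hT, Matrix.add_mul, Matrix.add_mul,
        Matrix.mul_nonsing_inv _ hdet, Matrix.one_mul, Matrix.smul_mul, Matrix.smul_mul]
    rw [Matrix.mul_neg, Matrix.mul_smul, h1, smul_neg, smul_comm c u, smul_add, smul_smul c c,
      H.sq_zero, zero_smul, add_zero]
  refine ⟨g + c • (-(u • (g * S⁻¹ * T))), ?_, ((H.map_eq_iff _ _).2 ⟨_, rfl⟩)⟩
  rw [mem_orthSet_iff hdet, H.expand hS, smul_add, ← transpose_smul, hX, hT, transpose_neg,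
    transpose_smul, transpose_smul, hTsymm, ← neg_add, ← add_smul, ← mul_two, hu, one_smul]
  abel

/-- The bijection sends a skew-symmetric `Y` to `g + c g S⁻¹ Y`, for a fixed orthogonal lift `g`
of `g₀`; its inverse sends `g + c X` to the residue of `gᵀ S X`. -/
lemma card_fiber (H : SmallExt φ ρ c)
    {S : Matrix (Fin n) (Fin n) R} (hS : Sᵀ = S) (hdet : IsUnit S.det)
    (h2 : IsUnit (2 : R)) {g₀ : Matrix (Fin n) (Fin n) R₀} (hg₀ : g₀ ∈ orthSet (S.map φ)) :
    Nat.card {g : Matrix (Fin n) (Fin n) R // g ∈ orthSet S ∧ g.map φ = g₀} =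
      Nat.card {Y : Matrix (Fin n) (Fin n) F // Yᵀ + Y = 0} := by
  obtain ⟨g, hg, rfl⟩ := H.exists_lift hS hdet h2 hg₀
  choose σ hσ using H.rho_surj
  have hσm : ∀ Y : Matrix (Fin n) (Fin n) F, (Y.map σ).map ρ = Y := fun Y => by
    ext i j; simp [hσ]
  have hinv : ∀ X : Matrix (Fin n) (Fin n) R, gᵀ * S * (g * S⁻¹ * X) = X := fun X => by
    rw [← Matrix.mul_assoc, ← Matrix.mul_assoc, hg.2, Matrix.mul_nonsing_inv _ hdet, Matrix.one_mul]
  have hinv' : ∀ X : Matrix (Fin n) (Fin n) R, g * S⁻¹ * (gᵀ * S * X) = X := fun X => by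
    have h1 : gᵀ * S * (g * S⁻¹) = 1 := by simpa using hinv 1
    rw [← Matrix.mul_assoc, mul_eq_one_comm.1 h1, Matrix.one_mul]
  symm
  refine Nat.card_congr (Equiv.ofBijective (fun Y => ⟨g + c • (g * S⁻¹ * Y.1.map σ), ?_, ?_⟩)
    ⟨?_, ?_⟩)
  · rw [H.add_smul_mem_iff hS hdet hg, hinv, hσm]
    exact Y.2
  · exact (H.map_eq_iff _ _).2 ⟨_, rfl⟩
  · rintro ⟨Y, hY⟩ ⟨Y', hY'⟩ h
    have h1 := add_left_cancel (congrArg Subtype.val h)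
    have h3 := congrArg (fun M => gᵀ * S * M) h1
    simp only [Matrix.mul_smul, hinv] at h3
    rw [H.smul_eq_smul_iff, hσm, hσm] at h3
    exact Subtype.ext h3
  · rintro ⟨h, hh, hφ⟩
    obtain ⟨X, rfl⟩ := (H.map_eq_iff _ _).1 hφ
    refine ⟨⟨(gᵀ * S * X).map ρ, (H.add_smul_mem_iff hS hdet hg X).1 hh⟩, Subtype.ext ?_⟩
    dsimp only
    congr 1
    conv_rhs => rw [← hinv' X]
    rw [← Matrix.mul_smul, ← Matrix.mul_smul, (H.smul_eq_smul_iff _ _).2 (hσm _)]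

lemma kernel_eq (H : SmallExt φ ρ c)
    {S : Matrix (Fin n) (Fin n) R} (hS : Sᵀ = S) (hdet : IsUnit S.det)
    {σ : F → R} (hσ : ∀ x, ρ (σ x) = x) :
    {g : Matrix (Fin n) (Fin n) R | g ∈ orthSet S ∧ g.map φ = 1} =
      {g | ∃ D : Matrix (Fin n) (Fin n) F,
        Dᵀ * S.map ρ + S.map ρ * D = 0 ∧ g = 1 + c • D.map σ} := by
  have h1 : (1 : Matrix (Fin n) (Fin n) R) ∈ orthSet S := by
    rw [mem_orthSet_iff hdet]; simp
  have hφ1 : (1 : Matrix (Fin n) (Fin n) R).map φ = 1 := by simp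
  have key : ∀ X : Matrix (Fin n) (Fin n) R, 1 + c • X ∈ orthSet S ↔
      (X.map ρ)ᵀ * S.map ρ + S.map ρ * X.map ρ = 0 := fun X => by
    rw [H.add_smul_mem_iff hS hdet h1, transpose_one, Matrix.one_mul, Matrix.map_mul,
      transpose_mul, ← transpose_map (f := ρ) (M := S), hS]
  have hσm : ∀ Y : Matrix (Fin n) (Fin n) F, (Y.map σ).map ρ = Y := fun Y => by
    ext i j; simp [hσ]
  ext g
  constructor
  · rintro ⟨hg, hφ⟩
    rw [← hφ1] at hφ
    obtain ⟨X, rfl⟩ := (H.map_eq_iff _ _).1 hφ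
    exact ⟨X.map ρ, (key X).1 hg, by rw [(H.smul_eq_smul_iff _ _).2 (hσm (X.map ρ))]⟩
  · rintro ⟨D, hD, rfl⟩
    refine ⟨(key _).2 (by rwa [hσm]), ?_⟩
    rw [(H.map_eq_iff _ _).2 ⟨_, rfl⟩, hφ1]

end SmallExt
end General

/-! ### Reduction between powers of a prime -/

/-- The small extension `ℤ/ℓ^{s+1} → ℤ/ℓ^s` with residue field `ℤ/ℓ`; `s ≥ 1` is needed
for `(ℓ^s)² = 0`. -/
lemma smallExt_zmod (ℓ : ℕ) [Fact ℓ.Prime] (s : ℕ) (hs : 1 ≤ s) :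
    SmallExt (ZMod.castHom (pow_dvd_pow ℓ (Nat.le_succ s)) (ZMod (ℓ ^ s)))
      (ZMod.castHom (dvd_pow_self ℓ (Nat.succ_ne_zero s)) (ZMod ℓ))
      ((ℓ : ZMod (ℓ ^ (s + 1))) ^ s) := by
  have hpos : 0 < ℓ ^ s := pow_pos (Fact.out : ℓ.Prime).pos s
  refine ⟨ZMod.castHom_surjective _, ZMod.castHom_surjective _, ?_, ?_, ?_⟩
  · intro r
    obtain ⟨k, rfl⟩ := ZMod.natCast_zmod_surjective r
    rw [map_natCast, ZMod.natCast_eq_zero_iff]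
    constructor
    · rintro ⟨t, rfl⟩
      exact ⟨t, by push_cast; rfl⟩
    · rintro ⟨t, ht⟩
      have h1 := congrArg (ZMod.castHom (pow_dvd_pow ℓ (Nat.le_succ s)) (ZMod (ℓ ^ s))) ht
      have h0 : (ℓ : ZMod (ℓ ^ s)) ^ s = 0 := by
        rw [← Nat.cast_pow, ZMod.natCast_self]
      rwa [map_natCast, map_mul, map_pow, map_natCast, h0, zero_mul,
        ZMod.natCast_eq_zero_iff] at h1
  · intro r
    obtain ⟨k, rfl⟩ := ZMod.natCast_zmod_surjective r
    rw [map_natCast, ZMod.natCast_eq_zero_iff, ← Nat.cast_pow, ← Nat.cast_mul,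
      ZMod.natCast_eq_zero_iff, pow_succ]
    exact Nat.mul_dvd_mul_iff_left hpos
  · rw [← Nat.cast_pow, ← Nat.cast_mul, ZMod.natCast_eq_zero_iff, ← pow_add]
    exact pow_dvd_pow ℓ (by omega)

lemma isUnit_intCast_zmod (ℓ : ℕ) [Fact ℓ.Prime] (k : ℕ) {a : ℤ} (ha : ¬ (ℓ : ℤ) ∣ a) :
    IsUnit (a : ZMod (ℓ ^ k)) := by
  have h : IsCoprime (a : ℤ) ((ℓ ^ k : ℕ) : ℤ) := by
    push_cast
    exact (((Nat.prime_iff_prime_int.1 Fact.out).coprime_iff_not_dvd).2 ha).symm.pow_right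
  obtain ⟨x, y, hxy⟩ := h
  refine IsUnit.of_mul_eq_one (x : ZMod (ℓ ^ k)) ?_
  have h1 := congrArg (Int.cast : ℤ → ZMod (ℓ ^ k)) hxy
  rw [Int.cast_add, Int.cast_mul, Int.cast_mul, Int.cast_natCast, ZMod.natCast_self] at h1
  simpa [mul_comm] using h1

lemma map_intCast_map {m k n : ℕ} (f : ZMod m →+* ZMod k) (Λ : Matrix (Fin n) (Fin n) ℤ) :
    (Λ.map (Int.cast : ℤ → ZMod m)).map f = Λ.map (Int.cast : ℤ → ZMod k) := by
  ext i j
  simp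

lemma isUnit_det_map_intCast (ℓ : ℕ) [Fact ℓ.Prime] (k : ℕ) {n : ℕ}
    {Λ : Matrix (Fin n) (Fin n) ℤ} (hdet : ¬ (ℓ : ℤ) ∣ Λ.det) :
    IsUnit (Λ.map (Int.cast : ℤ → ZMod (ℓ ^ k))).det := by
  have h := RingHom.map_det (Int.castRingHom (ZMod (ℓ ^ k))) Λ
  have h1 := isUnit_intCast_zmod ℓ k hdet
  rw [← eq_intCast (Int.castRingHom (ZMod (ℓ ^ k))), h] at h1
  exact h1

lemma not_dvd_two {ℓ : ℕ} [Fact ℓ.Prime] (hℓ : ℓ ≠ 2) : ¬ (ℓ : ℤ) ∣ 2 := by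
  intro h
  exact hℓ ((Nat.prime_dvd_prime_iff_eq Fact.out Nat.prime_two).1 (by exact_mod_cast h))

lemma card_fiber_zmod (ℓ : ℕ) [Fact ℓ.Prime] (hℓ : ℓ ≠ 2) {n s : ℕ} (hs : 1 ≤ s)
    {Λ : Matrix (Fin n) (Fin n) ℤ} (hΛ : Λ.IsSymm) (hdet : ¬ (ℓ : ℤ) ∣ Λ.det)
    {g₀ : Matrix (Fin n) (Fin n) (ZMod (ℓ ^ s))}
    (hg₀ : g₀ ∈ orthSet (Λ.map (Int.cast : ℤ → ZMod (ℓ ^ s)))) :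
    Nat.card {g₁ : Matrix (Fin n) (Fin n) (ZMod (ℓ ^ (s + 1))) //
      g₁ ∈ orthSet (Λ.map (Int.cast : ℤ → ZMod (ℓ ^ (s + 1)))) ∧
        g₁.map (ZMod.castHom (pow_dvd_pow ℓ (Nat.le_succ s)) (ZMod (ℓ ^ s))) = g₀} =
      ℓ ^ (n * (n - 1) / 2) := by
  have h2 : IsUnit (2 : ZMod (ℓ ^ (s + 1))) := by
    exact_mod_cast isUnit_intCast_zmod ℓ (s + 1) (not_dvd_two hℓ)
  have h2' : (2 : ZMod ℓ) ≠ 0 := by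
    intro h
    exact not_dvd_two hℓ ((ZMod.intCast_zmod_eq_zero_iff_dvd 2 ℓ).1 (by exact_mod_cast h))
  rw [(smallExt_zmod ℓ s hs).card_fiber (hΛ.map _) (isUnit_det_map_intCast ℓ _ hdet) h2
    (by rwa [map_intCast_map]), card_skew h2', Nat.card_zmod]

lemma card_orthSet_succ (ℓ : ℕ) [Fact ℓ.Prime] (hℓ : ℓ ≠ 2) {n s : ℕ} (hs : 1 ≤ s)
    {Λ : Matrix (Fin n) (Fin n) ℤ} (hΛ : Λ.IsSymm) (hdet : ¬ (ℓ : ℤ) ∣ Λ.det) :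
    Nat.card {g : Matrix (Fin n) (Fin n) (ZMod (ℓ ^ (s + 1))) //
        g ∈ orthSet (Λ.map (Int.cast : ℤ → ZMod (ℓ ^ (s + 1))))} =
      ℓ ^ (n * (n - 1) / 2) * Nat.card {g : Matrix (Fin n) (Fin n) (ZMod (ℓ ^ s)) //
        g ∈ orthSet (Λ.map (Int.cast : ℤ → ZMod (ℓ ^ s)))} := by
  have : NeZero (ℓ ^ s) := ⟨(pow_pos (Fact.out : ℓ.Prime).pos s).ne'⟩
  have : NeZero (ℓ ^ (s + 1)) := ⟨(pow_pos (Fact.out : ℓ.Prime).pos (s + 1)).ne'⟩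
  classical
  have : Fintype {g : Matrix (Fin n) (Fin n) (ZMod (ℓ ^ s)) //
      g ∈ orthSet (Λ.map (Int.cast : ℤ → ZMod (ℓ ^ s)))} := Fintype.ofFinite _
  let red : {g : Matrix (Fin n) (Fin n) (ZMod (ℓ ^ (s + 1))) //
        g ∈ orthSet (Λ.map (Int.cast : ℤ → ZMod (ℓ ^ (s + 1))))} →
      {g : Matrix (Fin n) (Fin n) (ZMod (ℓ ^ s)) //
        g ∈ orthSet (Λ.map (Int.cast : ℤ → ZMod (ℓ ^ s)))} := fun g =>
    ⟨g.1.map (ZMod.castHom (pow_dvd_pow ℓ (Nat.le_succ s)) (ZMod (ℓ ^ s))), by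
      have := map_mem_orthSet (ZMod.castHom (pow_dvd_pow ℓ (Nat.le_succ s)) (ZMod (ℓ ^ s))) g.2
      rwa [map_intCast_map] at this⟩
  have hfib : ∀ g₀, Nat.card {g // red g = g₀} = ℓ ^ (n * (n - 1) / 2) := fun g₀ => by
    rw [← card_fiber_zmod ℓ hℓ hs hΛ hdet g₀.2]
    refine Nat.card_congr (Equiv.trans (Equiv.subtypeEquivRight fun g => ?_)
      (Equiv.subtypeSubtypeEquivSubtypeInter _ _))
    exact Subtype.ext_iff
  rw [← Nat.card_congr (Equiv.sigmaFiberEquiv red), Nat.card_sigma, Finset.sum_congr rfl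
    (fun g₀ _ => hfib g₀), Finset.sum_const, Finset.card_univ, smul_eq_mul, mul_comm,
    Nat.card_eq_fintype_card]

lemma card_orthSet_pow (ℓ : ℕ) [Fact ℓ.Prime] (hℓ : ℓ ≠ 2) {n : ℕ}
    {Λ : Matrix (Fin n) (Fin n) ℤ} (hΛ : Λ.IsSymm) (hdet : ¬ (ℓ : ℤ) ∣ Λ.det) (s : ℕ) :
    Nat.card {g : Matrix (Fin n) (Fin n) (ZMod (ℓ ^ (s + 1))) //
        g ∈ orthSet (Λ.map (Int.cast : ℤ → ZMod (ℓ ^ (s + 1))))} =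
      ℓ ^ (s * (n * (n - 1) / 2)) * Nat.card {g : Matrix (Fin n) (Fin n) (ZMod ℓ) //
        g ∈ orthSet (Λ.map (Int.cast : ℤ → ZMod ℓ))} := by
  induction s with
  | zero =>
    -- `ZMod (ℓ ^ 1)` and `ZMod ℓ` agree only up to rewriting the modulus.
    have : ∀ m, m = ℓ → Nat.card {g : Matrix (Fin n) (Fin n) (ZMod m) //
        g ∈ orthSet (Λ.map (Int.cast : ℤ → ZMod m))} =
      Nat.card {g : Matrix (Fin n) (Fin n) (ZMod ℓ) //
        g ∈ orthSet (Λ.map (Int.cast : ℤ → ZMod ℓ))} := by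
      rintro m rfl; rfl
    rw [this _ (by simp), zero_mul, pow_zero, one_mul]
  | succ s ih =>
    rw [card_orthSet_succ ℓ hℓ (Nat.succ_pos s) hΛ hdet, ih, ← mul_assoc, ← pow_add]
    congr 2
    ring

theorem stmt_6 (ℓ : ℕ) [Fact ℓ.Prime] (hℓ : ℓ ≠ 2) (n : ℕ) (hn : 1 ≤ n) (s : ℕ) (hs : 1 ≤ s)
    (Λ : Matrix (Fin n) (Fin n) ℤ) (hΛ : Λ.IsSymm) (hdet : ¬ (ℓ : ℤ) ∣ Λ.det) :
    -- the reduction map mod `ℓ^s`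
    ∀ π : Matrix (Fin n) (Fin n) (ZMod (ℓ ^ (s + 1))) → Matrix (Fin n) (Fin n) (ZMod (ℓ ^ s)),
      π = (fun g => g.map (ZMod.castHom (pow_dvd_pow ℓ (Nat.le_succ s)) (ZMod (ℓ ^ s)))) →
      -- (a) `π` maps `O(Λ, ℤ/ℓ^{s+1})` into `O(Λ, ℤ/ℓ^s)`, surjectively
      ((∀ g₁ ∈ orthSet (Λ.map (Int.cast : ℤ → ZMod (ℓ ^ (s + 1)))),
          π g₁ ∈ orthSet (Λ.map (Int.cast : ℤ → ZMod (ℓ ^ s)))) ∧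
        (∀ g₀ ∈ orthSet (Λ.map (Int.cast : ℤ → ZMod (ℓ ^ s))),
          ∃ g₁ ∈ orthSet (Λ.map (Int.cast : ℤ → ZMod (ℓ ^ (s + 1)))), π g₁ = g₀) ∧
        -- (b) every fiber has exactly `ℓ^{n(n−1)/2}` elements
        (∀ g₀ ∈ orthSet (Λ.map (Int.cast : ℤ → ZMod (ℓ ^ s))),
          Nat.card {g₁ : Matrix (Fin n) (Fin n) (ZMod (ℓ ^ (s + 1))) //
              g₁ ∈ orthSet (Λ.map (Int.cast : ℤ → ZMod (ℓ ^ (s + 1)))) ∧ π g₁ = g₀} =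
            ℓ ^ (n * (n - 1) / 2)) ∧
        -- (c) `#O(Λ, ℤ/ℓ^{s+1}) = ℓ^{s·n(n−1)/2} · #O(Λ, ℤ/ℓ)`
        (Nat.card {g₁ : Matrix (Fin n) (Fin n) (ZMod (ℓ ^ (s + 1))) //
              g₁ ∈ orthSet (Λ.map (Int.cast : ℤ → ZMod (ℓ ^ (s + 1))))} =
            ℓ ^ (s * (n * (n - 1) / 2)) *
              Nat.card {g : Matrix (Fin n) (Fin n) (ZMod ℓ) //
                g ∈ orthSet (Λ.map (Int.cast : ℤ → ZMod ℓ))}) ∧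
        -- (d) the kernel consists exactly of the matrices `1 + ℓ^s D` with
        --     `Dᵀ Λ + Λ D ≡ 0 (mod ℓ)`, and it has `ℓ^{n(n−1)/2}` elements
        ({g₁ : Matrix (Fin n) (Fin n) (ZMod (ℓ ^ (s + 1))) |
              g₁ ∈ orthSet (Λ.map (Int.cast : ℤ → ZMod (ℓ ^ (s + 1)))) ∧ π g₁ = 1} =
            {g₁ : Matrix (Fin n) (Fin n) (ZMod (ℓ ^ (s + 1))) |
              ∃ D : Matrix (Fin n) (Fin n) (ZMod ℓ),
                Dᵀ * Λ.map (Int.cast : ℤ → ZMod ℓ) + Λ.map (Int.cast : ℤ → ZMod ℓ) * D = 0 ∧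
                g₁ = 1 + (ℓ : ZMod (ℓ ^ (s + 1))) ^ s •
                  D.map (ZMod.cast : ZMod ℓ → ZMod (ℓ ^ (s + 1)))} ∧
          Nat.card {g₁ : Matrix (Fin n) (Fin n) (ZMod (ℓ ^ (s + 1))) //
              g₁ ∈ orthSet (Λ.map (Int.cast : ℤ → ZMod (ℓ ^ (s + 1)))) ∧ π g₁ = 1} =
            ℓ ^ (n * (n - 1) / 2))) := by
  rintro π rfl
  have H := smallExt_zmod ℓ s hs
  have hS : (Λ.map (Int.cast : ℤ → ZMod (ℓ ^ (s + 1))))ᵀ = Λ.map Int.cast := hΛ.map _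
  have hu := isUnit_det_map_intCast ℓ (s + 1) hdet
  have h2 : IsUnit (2 : ZMod (ℓ ^ (s + 1))) := by
    exact_mod_cast isUnit_intCast_zmod ℓ (s + 1) (not_dvd_two hℓ)
  refine ⟨fun g hg => ?_, fun g₀ hg₀ => ?_, fun g₀ hg₀ => card_fiber_zmod ℓ hℓ hs hΛ hdet hg₀,
    card_orthSet_pow ℓ hℓ hΛ hdet s, ?_, card_fiber_zmod ℓ hℓ hs hΛ hdet ?_⟩
  · have := map_mem_orthSet (ZMod.castHom (pow_dvd_pow ℓ (Nat.le_succ s)) (ZMod (ℓ ^ s))) hg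
    rwa [map_intCast_map] at this
  · exact H.exists_lift hS hu h2 (by rwa [map_intCast_map])
  · have hσ : ∀ x : ZMod ℓ, ZMod.castHom (dvd_pow_self ℓ (Nat.succ_ne_zero s)) (ZMod ℓ)
        (ZMod.cast x : ZMod (ℓ ^ (s + 1))) = x := fun x => by
      rw [ZMod.cast_eq_val, map_natCast, ZMod.natCast_zmod_val]
    have hk := H.kernel_eq hS hu hσ
    rwa [map_intCast_map] at hk
  · rw [mem_orthSet_iff (isUnit_det_map_intCast ℓ s hdet)]
    simp
end

section
/- Fix an odd prime ℓ and a non-square unit z ∈ ℤ_ℓ^× (equivalently, an integer z that is a non-residue mod ℓ), and let Λ = diag(ℓ^{k₁}Λ₁, …, ℓ^{k_r}Λ_r) be a standard block form with 0 ≤ k₁ < ⋯ < k_r, block sizes n_i with n₁ + ⋯ + n_r = 4. Then, working modulo ℓ^{k_r+1}, #{D ∈ GL₄(ℤ/ℓ^{k_r+1}) : D Λ Dᵀ = Λ} = ∏_{1≤j<i≤r} ℓ^{(k_r+1+k_j)·n_i n_j} · ∏_{i=1}^{r} ℓ^{k_i n_i(n_i+1)/2 + k_r n_i(n_i−1)/2}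 · #O(Λ_i, ℤ/ℓ). -/
/-!
For odd `ℓ` the form `Λ` is diagonal, `Λ = ∑ ℓ ^ (w a) u_a x_a²` with `ℓ`-adic units `u_a`, and the
number of isometries modulo `ℓ ^ N` is computed for every `N` exceeding all `w a`, by induction on
`N` (`cnt_diagonal`).

The tool is a square root. If `ℓ` is nilpotent and `2` is invertible, then `1 + ℓY` has a square
root `W` that is a polynomial in `Y`. When `YS` is symmetric, i.e. `YS = SYᵀ`, the same identity
holds for `W`, so `W S Wᵀ = W² S = S + ℓYS`: Gram matrices differing by such a perturbation are
equivalent (`exists_isom`).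

Write `Λ = diag(U, ℓM)` with `U` unimodular. Every isometry factors uniquely as
`diag(A, E) * (1, X; -Y, 1)` with `X` an arbitrary matrix and `Y = ℓ M Xᵀ U⁻¹`, where `A` and `E`
carry perturbations of `U` and `ℓM` of the above kind to `U` and `ℓM`. Hence the count is the number
of matrices `X` times the counts for `U` and for `ℓM` (`cnt_fromBlocks`).

The count for `ℓM` modulo `ℓ ^ (N + 1)` is that for `M` modulo `ℓ ^ N` times the number of lifts of
a matrix (`cnt_smul`). For `U`, the map `g ↦ g U gᵀ` sends the matrices that are isometries modulo
`ℓ` onto the symmetric matrices congruent to `U` modulo `ℓ`, with fibres of equal size, again by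
the square root (`cnt_lift`). The resulting recursion is that of the stated product
(`formula_succ`).
-/

open Matrix

/-- The standard block form `Λ = diag(ℓ^{k₁}Λ₁, …, ℓ^{k_r}Λ_r)` (here with integer entries),
as a block diagonal matrix indexed by `Σ i, Fin (n i)`. -/
def stdBlockFormZ (ℓ : ℕ) (r : ℕ) (k : Fin r → ℕ) (n : Fin r → ℕ)
    (Λb : ∀ i : Fin r, Matrix (Fin (n i)) (Fin (n i)) ℤ) :
    Matrix ((i : Fin r) × Fin (n i)) ((i : Fin r) × Fin (n i)) ℤ :=
  Matrix.blockDiagonal' fun i => (ℓ : ℤ) ^ (k i) • Λb i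

/-! ### Isometries over a commutative ring -/

lemma card_matrix {R α β : Type} [Fintype α] [Fintype β] : Nat.card (Matrix α β R) =
    Nat.card R ^ (Fintype.card α * Fintype.card β) := by
  rw [← Nat.card_congr (Matrix.of (m := α) (n := β) (α := R)), Nat.card_fun, Nat.card_fun,
    ← pow_mul, Nat.card_eq_fintype_card (α := α), Nat.card_eq_fintype_card (α := β), mul_comm]

section Generic

variable {R : Type} [CommRing R] {ι κ α β : Type}
  [Fintype ι] [DecidableEq ι] [Fintype κ] [DecidableEq κ]
  [Fintype α] [DecidableEq α] [Fintype β] [DecidableEq β]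

/-- The isometries from the Gram matrix `S` to the Gram matrix `T`: invertible `D` with
`D S Dᵀ = T`. -/
abbrev Isom (S T : Matrix ι ι R) : Type :=
  {D : Matrix ι ι R // IsUnit D.det ∧ D * S * Dᵀ = T}

/-- The order of the orthogonal group of `S`, in the convention `D S Dᵀ = S`. -/
noncomputable def cnt (S : Matrix ι ι R) : ℕ := Nat.card (Isom S S)

lemma det_isUnit_one_add {p : R} (hp : IsNilpotent p)
    (Y : Matrix ι ι R) : IsUnit (1 + p • Y).det := by
  rw [← Matrix.isUnit_iff_isUnit_det]
  obtain ⟨k, hk⟩ := hp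
  exact IsNilpotent.isUnit_one_add ⟨k, by rw [smul_pow, hk, zero_smul]⟩

/-- If the Gram matrices `S` and `(1 + pY)S` are symmetric with `p` nilpotent and `2` invertible,
they are equivalent: the square root of `1 + pY` as a polynomial in `Y` is an isometry. -/
lemma exists_isom {p : R} (hp : IsNilpotent p) (h2 : IsUnit (2 : R)) (S Y : Matrix ι ι R)
    (hY : Y * S = S * Yᵀ) :
    ∃ P : Matrix ι ι R, IsUnit P.det ∧ P * S * Pᵀ = S + p • (Y * S) := by
  obtain ⟨q, hq⟩ : ∃ q : Polynomial R, q ^ 2 = 1 + Polynomial.C p * Polynomial.X := by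
    have hn : IsNilpotent (Polynomial.C p * Polynomial.X) :=
      Commute.isNilpotent_mul_right (Commute.all _ _) (hp.map Polynomial.C)
    obtain ⟨q, ⟨-, hq⟩, -⟩ := Polynomial.existsUnique_nilpotent_sub_and_aeval_eq_zero
      (R := Polynomial R) (S := Polynomial R)
      (P := Polynomial.X ^ 2 - Polynomial.C (1 + Polynomial.C p * Polynomial.X)) (x := 1)
      (by simpa using hn)
      (by
        have h : IsUnit (Polynomial.C (2 : R)) := h2.map Polynomial.C
        have h' : Polynomial.C (2 : R) = 1 + 1 := by rw [← one_add_one_eq_two]; simp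
        simpa [h'] using h)
    refine ⟨q, ?_⟩
    simpa [sub_eq_zero] using hq
  have hsemi : ∀ q : Polynomial R,
      Polynomial.aeval Y q * S = S * (Polynomial.aeval Y q)ᵀ := by
    intro q
    induction q using Polynomial.induction_on' with
    | add a b ha hb => simp [add_mul, mul_add, ha, hb]
    | monomial n a =>
      have h : SemiconjBy S Yᵀ Y := hY.symm
      have h' := (h.pow_right n).eq
      simp [Polynomial.aeval_monomial, ← Algebra.smul_def, Matrix.transpose_pow, h']
  have hW : Polynomial.aeval Y q * Polynomial.aeval Y q = 1 + p • Y := by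
    rw [← map_mul, ← sq, hq]
    simp [Algebra.smul_def]
  refine ⟨Polynomial.aeval Y q, ?_, ?_⟩
  · have := det_isUnit_one_add hp Y
    rw [← hW, Matrix.det_mul] at this
    exact isUnit_of_mul_isUnit_left this
  · rw [mul_assoc, ← hsemi, ← mul_assoc, hW, add_mul, one_mul, smul_mul_assoc]

/-- Equivalent Gram matrices give equinumerous sets of isometries onto a fixed third one. -/
lemma card_isom_left {S S' T : Matrix ι ι R} (P : Matrix ι ι R) (hP : IsUnit P.det)
    (h : P * S * Pᵀ = S') : Nat.card (Isom S' T) = Nat.card (Isom S T) := by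
  have h1 := Matrix.nonsing_inv_mul P hP
  have h2 := Matrix.mul_nonsing_inv P hP
  refine Nat.card_congr
    { toFun := fun D => ⟨D.1 * P, by rw [Matrix.det_mul]; exact D.2.1.mul hP, ?_⟩
      invFun := fun D => ⟨D.1 * P⁻¹, ?_, ?_⟩
      left_inv := fun D => Subtype.ext (by simp [mul_assoc, h2])
      right_inv := fun D => Subtype.ext (by simp [mul_assoc, h1]) }
  · refine Eq.trans ?_ D.2.2
    subst h; simp only [Matrix.transpose_mul, mul_assoc]
  · rw [Matrix.det_mul]; exact D.2.1.mul (Matrix.isUnit_nonsing_inv_det P hP)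
  · have h3 : Pᵀ * P⁻¹ᵀ = 1 := by rw [← Matrix.transpose_mul, h1, Matrix.transpose_one]
    calc D.1 * P⁻¹ * S' * (D.1 * P⁻¹)ᵀ
        = D.1 * (P⁻¹ * P) * S * (Pᵀ * P⁻¹ᵀ) * D.1ᵀ := by
          rw [← h]; simp only [Matrix.transpose_mul, mul_assoc]
      _ = T := by rw [h1, h3, mul_one, mul_one, D.2.2]

/-- Equivalent Gram matrices give equinumerous sets of isometries from a fixed third one. -/
lemma card_isom_right {S T T' : Matrix ι ι R} (P : Matrix ι ι R) (hP : IsUnit P.det)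
    (h : P * T * Pᵀ = T') : Nat.card (Isom S T') = Nat.card (Isom S T) := by
  have h1 := Matrix.nonsing_inv_mul P hP
  have h2 := Matrix.mul_nonsing_inv P hP
  refine Nat.card_congr
    { toFun := fun D => ⟨P⁻¹ * D.1, ?_, ?_⟩
      invFun := fun D => ⟨P * D.1, by rw [Matrix.det_mul]; exact hP.mul D.2.1, ?_⟩
      left_inv := fun D => Subtype.ext (by simp [← mul_assoc, h2])
      right_inv := fun D => Subtype.ext (by simp [← mul_assoc, h1]) }
  · rw [Matrix.det_mul]; exact (Matrix.isUnit_nonsing_inv_det P hP).mul D.2.1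
  · have h3 : Pᵀ * P⁻¹ᵀ = 1 := by rw [← Matrix.transpose_mul, h1, Matrix.transpose_one]
    calc P⁻¹ * D.1 * S * (P⁻¹ * D.1)ᵀ
        = P⁻¹ * (D.1 * S * D.1ᵀ) * P⁻¹ᵀ := by simp only [Matrix.transpose_mul, mul_assoc]
      _ = (P⁻¹ * P) * T * (Pᵀ * P⁻¹ᵀ) := by rw [D.2.2, ← h]; simp only [mul_assoc]
      _ = T := by rw [h1, h3, mul_one, one_mul]
  · rw [← h]
    refine Eq.trans ?_ (congrArg (fun Z => P * Z * Pᵀ) D.2.2)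
    simp only [Matrix.transpose_mul, mul_assoc]

/-- Reindexing does not change the order of the orthogonal group. -/
lemma cnt_submatrix (e : ι ≃ κ) (S : Matrix κ κ R) : cnt (S.submatrix e e) = cnt S := by
  refine Nat.card_congr
    { toFun := fun D => ⟨D.1.submatrix e.symm e.symm, ?_, ?_⟩
      invFun := fun D => ⟨D.1.submatrix e e, ?_, ?_⟩
      left_inv := fun D => Subtype.ext (by ext; simp)
      right_inv := fun D => Subtype.ext (by ext; simp) }
  · rw [Matrix.det_submatrix_equiv_self]; exact D.2.1
  · have := congrArg (fun M => M.submatrix e.symm e.symm) D.2.2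
    simp only [← Matrix.submatrix_mul_equiv _ _ e.symm e.symm e.symm] at this
    simpa using this
  · rw [Matrix.det_submatrix_equiv_self]; exact D.2.1
  · have := congrArg (fun M => M.submatrix e e) D.2.2
    simp only [← Matrix.submatrix_mul_equiv _ _ e e e] at this
    simpa using this

lemma cnt_of_isEmpty [IsEmpty ι] (S : Matrix ι ι R) : cnt S = 1 := by
  have : Unique (Isom S S) :=
    { default := ⟨1, by simp, Subsingleton.elim _ _⟩
      uniq := fun D => Subtype.ext (Subsingleton.elim _ _) }
  exact Nat.card_unique

/-- The transposed convention `gᵀ S g = S` gives the same count. -/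
lemma card_transpose (S : Matrix ι ι R) :
    Nat.card {g : Matrix ι ι R // IsUnit g.det ∧ gᵀ * S * g = S} = cnt S := by
  refine Nat.card_congr
    { toFun := fun D => ⟨D.1ᵀ, by simpa using D.2.1, by simpa using D.2.2⟩
      invFun := fun D => ⟨D.1ᵀ, by simpa using D.2.1, by simpa using D.2.2⟩
      left_inv := fun D => Subtype.ext (by simp)
      right_inv := fun D => Subtype.ext (by simp) }

/-- Splitting off the unimodular block. An isometry of `diag(U, pM)` with blocks `A, B, C, E` has
`A` invertible and factors uniquely as `diag(A, E) * (1, X; -Y, 1)` with `X = A⁻¹B` arbitrary and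
`Y = p M Xᵀ U⁻¹` forced. The Gram matrices `U + p X M Xᵀ` and `pM + p² M Xᵀ U⁻¹ X M` which `A` and
`E` have to carry to `U` and `pM` are equivalent to `U` and `pM`. -/
lemma cnt_fromBlocks [Finite R] {p : R} (hp : IsNilpotent p) (h2 : IsUnit (2 : R))
    (U V : Matrix α α R) (M : Matrix β β R) (hUV : U * V = 1) (hU : Uᵀ = U) (hM : Mᵀ = M) :
    cnt (Matrix.fromBlocks U 0 0 (p • M)) =
      Nat.card R ^ (Fintype.card α * Fintype.card β) * (cnt U * cnt (p • M)) := by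
  have hVU : V * U = 1 := mul_eq_one_comm.mp hUV
  have hV : Vᵀ = V := by
    calc Vᵀ = Vᵀ * (U * V) := by rw [hUV, mul_one]
      _ = (U * V)ᵀ * V := by rw [Matrix.transpose_mul, hU, mul_assoc]
      _ = V := by rw [hUV, Matrix.transpose_one, one_mul]
  let Y : Matrix α β R → Matrix β α R := fun X => p • (M * Xᵀ * V)
  let T : Matrix α β R → Matrix (α ⊕ β) (α ⊕ β) R := fun X => Matrix.fromBlocks 1 X (-Y X) 1
  let G₁ : Matrix α β R → Matrix α α R := fun X => U + p • (X * M * Xᵀ)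
  let G₂ : Matrix α β R → Matrix β β R := fun X => p • M + p • (M * Xᵀ * V * X * (p • M))
  have hVU' : ∀ {γ : Type} (Z : Matrix α γ R), V * (U * Z) = Z := fun Z => by
    rw [← Matrix.mul_assoc, hVU, Matrix.one_mul]
  have hUV' : ∀ {γ : Type} (Z : Matrix α γ R), U * (V * Z) = Z := fun Z => by
    rw [← Matrix.mul_assoc, hUV, Matrix.one_mul]
  have hTdet : ∀ X, IsUnit (T X).det := fun X => by
    simp only [T, Y]
    rw [Matrix.det_fromBlocks_one₁₁, Matrix.neg_mul, sub_neg_eq_add, Matrix.smul_mul]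
    exact det_isUnit_one_add hp _
  have hT : ∀ X, T X * Matrix.fromBlocks U 0 0 (p • M) * (T X)ᵀ =
      Matrix.fromBlocks (G₁ X) 0 0 (G₂ X) := fun X => by
    simp only [T, Y, G₁, G₂, Matrix.fromBlocks_transpose, Matrix.fromBlocks_multiply,
      Matrix.fromBlocks_inj]
    refine ⟨?_, ?_, ?_, ?_⟩ <;>
      simp [Matrix.mul_assoc, hV, hM, hUV', hVU, add_comm]
  have hfac : ∀ (A : Matrix α α R) (E : Matrix β β R) (X : Matrix α β R),
      Matrix.fromBlocks A (A * X) (-(E * Y X)) E = Matrix.fromBlocks A 0 0 E * T X := by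
    intro A E X
    simp [T, Matrix.fromBlocks_multiply]
  have hcond : ∀ (A : Matrix α α R) (E : Matrix β β R) (X : Matrix α β R),
      Matrix.fromBlocks A (A * X) (-(E * Y X)) E * Matrix.fromBlocks U 0 0 (p • M) *
        (Matrix.fromBlocks A (A * X) (-(E * Y X)) E)ᵀ =
      Matrix.fromBlocks (A * G₁ X * Aᵀ) 0 0 (E * G₂ X * Eᵀ) := by
    intro A E X
    rw [hfac, Matrix.transpose_mul]
    calc _ = Matrix.fromBlocks A 0 0 E * (T X * Matrix.fromBlocks U 0 0 (p • M) * (T X)ᵀ) *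
          (Matrix.fromBlocks A 0 0 E)ᵀ := by simp only [mul_assoc]
      _ = _ := by
        rw [hT]
        simp [Matrix.fromBlocks_transpose, Matrix.fromBlocks_multiply]
  have hdet : ∀ (A : Matrix α α R) (E : Matrix β β R) (X : Matrix α β R),
      IsUnit (Matrix.fromBlocks A (A * X) (-(E * Y X)) E).det ↔ IsUnit A.det ∧ IsUnit E.det := by
    intro A E X
    rw [hfac, Matrix.det_mul, Matrix.det_fromBlocks_zero₂₁, IsUnit.mul_iff, IsUnit.mul_iff]
    simp [hTdet]
  -- the shape of an isometry, read off from its first block row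
  have hshape : ∀ D : Isom (Matrix.fromBlocks U 0 0 (p • M)) (Matrix.fromBlocks U 0 0 (p • M)),
      IsUnit D.1.toBlocks₁₁.det ∧
      Matrix.fromBlocks D.1.toBlocks₁₁ (D.1.toBlocks₁₁ * (D.1.toBlocks₁₁⁻¹ * D.1.toBlocks₁₂))
        (-(D.1.toBlocks₂₂ * Y (D.1.toBlocks₁₁⁻¹ * D.1.toBlocks₁₂))) D.1.toBlocks₂₂ = D.1 := by
    rintro ⟨D, hD1, hD2⟩
    obtain ⟨A, B, C, E, rfl⟩ : ∃ A B C E, D = Matrix.fromBlocks A B C E :=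
      ⟨_, _, _, _, (Matrix.fromBlocks_toBlocks D).symm⟩
    simp only [Matrix.toBlocks_fromBlocks₁₁, Matrix.toBlocks_fromBlocks₁₂,
      Matrix.toBlocks_fromBlocks₂₂]
    simp only [Matrix.fromBlocks_transpose, Matrix.fromBlocks_multiply,
      Matrix.fromBlocks_inj, Matrix.mul_zero, add_zero, zero_add] at hD2
    obtain ⟨e1, e2, -, -⟩ := hD2
    have hA : IsUnit A.det := by
      have h : A * (U * Aᵀ * V) = 1 + p • (-(B * M * Bᵀ * V)) := by
        have := congrArg (· * V) (eq_sub_of_add_eq e1)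
        simp only [sub_mul, hUV] at this
        simpa [mul_assoc, Matrix.mul_assoc, sub_eq_add_neg] using this
      have h' := det_isUnit_one_add hp (-(B * M * Bᵀ * V))
      rw [← h, Matrix.det_mul] at h'
      exact isUnit_of_mul_isUnit_left h'
    refine ⟨hA, ?_⟩
    have hX := Matrix.mul_nonsing_inv_cancel_left (A := A) B hA
    refine Matrix.fromBlocks_inj.mpr ⟨rfl, hX, ?_, rfl⟩
    have h : Cᵀ = -(V * (A⁻¹ * (B * (p • M) * Eᵀ))) := by
      rw [← eq_neg_iff_add_eq_zero] at e2
      have := congrArg (fun Z => V * (A⁻¹ * Z)) e2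
      simp only [Matrix.mul_assoc, Matrix.mul_neg] at this ⊢
      rwa [Matrix.nonsing_inv_mul_cancel_left (A := A) _ hA, hVU'] at this
    rw [← Matrix.transpose_transpose C, h]
    simp [Y, Matrix.transpose_mul, Matrix.mul_assoc, hV, hM]
  let f : (Σ X : Matrix α β R, Isom (G₁ X) U × Isom (G₂ X) (p • M)) →
      Isom (Matrix.fromBlocks U 0 0 (p • M)) (Matrix.fromBlocks U 0 0 (p • M)) :=
    fun s => ⟨Matrix.fromBlocks s.2.1.1 (s.2.1.1 * s.1) (-(s.2.2.1 * Y s.1)) s.2.2.1,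
      (hdet _ _ _).mpr ⟨s.2.1.2.1, s.2.2.2.1⟩, by rw [hcond, s.2.1.2.2, s.2.2.2.2]⟩
  have hf : Function.Bijective f := by
    constructor
    · rintro ⟨X, ⟨A, hA, hA'⟩, ⟨E, hE, hE'⟩⟩ ⟨X', ⟨A', hA₁, hA₁'⟩, ⟨E', hE₁, hE₁'⟩⟩ h
      obtain ⟨h1, h2, -, h4⟩ := Matrix.fromBlocks_inj.mp (congrArg Subtype.val h)
      simp only at h1 h2 h4
      subst h1 h4
      obtain rfl : X = X' := by
        rw [← Matrix.nonsing_inv_mul_cancel_left (A := A) X hA, h2,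
          Matrix.nonsing_inv_mul_cancel_left (A := A) X' hA]
      rfl
    · intro D
      have hD := hshape D
      have hu := (hdet D.1.toBlocks₁₁ D.1.toBlocks₂₂
        (D.1.toBlocks₁₁⁻¹ * D.1.toBlocks₁₂)).mp (by rw [hD.2]; exact D.2.1)
      have hc := Matrix.fromBlocks_inj.mp ((hcond D.1.toBlocks₁₁ D.1.toBlocks₂₂
        (D.1.toBlocks₁₁⁻¹ * D.1.toBlocks₁₂)).symm.trans ((congrArg (fun Z => Z *
          Matrix.fromBlocks U 0 0 (p • M) * Zᵀ) hD.2).trans D.2.2))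
      exact ⟨⟨D.1.toBlocks₁₁⁻¹ * D.1.toBlocks₁₂,
        ⟨D.1.toBlocks₁₁, hu.1, hc.1⟩, ⟨D.1.toBlocks₂₂, hu.2, hc.2.2.2⟩⟩, Subtype.ext hD.2⟩
  have hG₁ : ∀ X, Nat.card (Isom (G₁ X) U) = cnt U := fun X => by
    obtain ⟨P, hP, hP'⟩ := exists_isom hp h2 U (X * M * Xᵀ * V)
      (by simp [Matrix.mul_assoc, hV, hM, hUV', hVU])
    refine card_isom_left P hP (hP'.trans ?_)
    simp [G₁, Matrix.mul_assoc, hVU]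
  have hG₂ : ∀ X, Nat.card (Isom (G₂ X) (p • M)) = cnt (p • M) := fun X => by
    obtain ⟨P, hP, hP'⟩ := exists_isom hp h2 (p • M) (M * Xᵀ * V * X)
      (by simp [Matrix.mul_assoc, hV, hM])
    exact card_isom_left P hP hP'
  have := Fintype.ofFinite R
  have hfin : ∀ {γ : Type} [Fintype γ] [DecidableEq γ] (S T : Matrix γ γ R),
      Finite (Isom S T) := fun S T => Subtype.finite
  rw [cnt, ← Nat.card_congr (Equiv.ofBijective f hf), Nat.card_sigma]
  simp only [Nat.card_prod, hG₁, hG₂, Finset.sum_const, Finset.card_univ, smul_eq_mul]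
  rw [← Nat.card_eq_fintype_card, card_matrix]

end Generic

/-! ### Reduction along a surjective ring homomorphism -/

section Reduction

variable {R R' : Type} [CommRing R] [CommRing R'] {ι α β : Type}
  [Fintype ι] [DecidableEq ι] [Fintype α] [Fintype β]

/-- Matrices whose reduction satisfies `P`: every fibre of the entrywise reduction along a
surjective `f` is a copy of the matrices with entries in the kernel of `f`. -/
lemma card_matrix_map (f : R →+* R') (hf : Function.Surjective f) (P : Matrix α β R' → Prop) :
    Nat.card {D : Matrix α β R // P (D.map f)} =
      Nat.card (RingHom.ker f) ^ (Fintype.card α * Fintype.card β) *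
        Nat.card {D : Matrix α β R' // P D} := by
  obtain ⟨g, hg⟩ := hf.hasRightInverse
  have hm : ∀ D : Matrix α β R', (D.map g).map f = D := fun D => by ext; simp [hg _]
  rw [← card_matrix, ← Nat.card_prod]
  refine Nat.card_congr
    { toFun := fun D => (Matrix.of fun i j => ⟨D.1 i j - g (f (D.1 i j)), by
          simp [RingHom.mem_ker, hg _]⟩, ⟨D.1.map f, D.2⟩)
      invFun := fun s => ⟨Matrix.of fun i j => (s.1 i j : R) + g (s.2.1 i j), ?_⟩
      left_inv := fun D => Subtype.ext (by ext; simp)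
      right_inv := ?_ }
  · convert s.2.2 using 1
    ext i j
    simp [hg _, RingHom.mem_ker.mp (s.1 i j).2]
  · rintro ⟨T, D, hD⟩
    have h : ∀ i j, f (T i j : R) = 0 := fun i j => RingHom.mem_ker.mp (T i j).2
    ext i j
    · simp [h, hg _]
    · simp [h, hg _]

lemma isUnit_of_map (f : R →+* R') (hf : Function.Surjective f)
    (hn : ∀ x, f x = 0 → IsNilpotent x) (x : R) : IsUnit (f x) ↔ IsUnit x := by
  refine ⟨fun h => ?_, fun h => h.map f⟩
  obtain ⟨y', hy'⟩ := h.exists_right_inv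
  obtain ⟨y, rfl⟩ := hf y'
  have h := (hn (x * y - 1) (by simp [hy'])).isUnit_one_add
  rw [add_sub_cancel] at h
  exact isUnit_of_mul_isUnit_left h

/-- If the kernel of the reduction `f` is the annihilator of `p`, then the isometries of `pM` are
exactly the lifts of the isometries of the reduction of `M`. -/
lemma cnt_smul (f : R →+* R') (hf : Function.Surjective f)
    (hn : ∀ x, f x = 0 → IsNilpotent x) (p : R) (hp : ∀ x, p * x = 0 ↔ f x = 0)
    (M : Matrix ι ι R) :
    cnt (p • M) = Nat.card (RingHom.ker f) ^ (Fintype.card ι * Fintype.card ι) *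
      cnt (M.map f) := by
  rw [cnt, cnt, Isom, Isom, ← card_matrix_map f hf
    (fun D => IsUnit D.det ∧ D * M.map f * Dᵀ = M.map f)]
  refine Nat.card_congr (Equiv.subtypeEquivRight fun D => and_congr ?_ ?_)
  · rw [← isUnit_of_map f hf hn, RingHom.map_det, RingHom.mapMatrix_apply]
  · rw [← Matrix.transpose_map, ← Matrix.map_mul, ← Matrix.map_mul, mul_smul_comm, smul_mul_assoc,
      ← sub_eq_zero, ← smul_sub, ← sub_eq_zero (b := M.map f)]
    simp only [← Matrix.ext_iff, Matrix.smul_apply, smul_eq_mul, hp, Matrix.sub_apply,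
      Matrix.map_apply, map_sub, Matrix.zero_apply]

/-- Lifting a unimodular form along `f`. The matrices reducing to isometries of the reduction of
`U` are distributed by `g ↦ g U gᵀ` over the symmetric matrices congruent to `U`. All of these are
equivalent to `U`, so all fibres have the size of the orthogonal group of `U`. -/
lemma cnt_lift [Finite R] (f : R →+* R') (hf : Function.Surjective f) {p : R} (hp : IsNilpotent p)
    (hker : ∀ x, f x = 0 ↔ ∃ y, x = p * y) (h2 : IsUnit (2 : R))
    (U V : Matrix ι ι R) (hUV : U * V = 1) (hU : Uᵀ = U) :
    Nat.card (RingHom.ker f) ^ ((Fintype.card ι + 1).choose 2) * cnt U =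
      Nat.card (RingHom.ker f) ^ (Fintype.card ι * Fintype.card ι) * cnt (U.map f) := by
  have hVU : V * U = 1 := mul_eq_one_comm.mp hUV
  have hn : ∀ x, f x = 0 → IsNilpotent x := fun x hx => by
    obtain ⟨y, rfl⟩ := (hker x).mp hx
    exact Commute.isNilpotent_mul_right (Commute.all _ _) hp
  rw [cnt, cnt, Isom, Isom, ← card_matrix_map f hf
    (fun D => IsUnit D.det ∧ D * U.map f * Dᵀ = U.map f)]
  let Sy := {T : ι → ι → RingHom.ker f // ∀ a b, T a b = T b a}
  let G : Sy → Matrix ι ι R := fun T => U + Matrix.of fun a b => (T.1 a b : R)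
  have hG : ∀ T, Nat.card (Isom U (G T)) = cnt U := fun T => by
    -- dividing entrywise by `p` through a fixed choice function preserves symmetry
    have hdiv : ∀ x : RingHom.ker f, ∃ y, (x : R) = p * y := fun x =>
      (hker x).mp (RingHom.mem_ker.mp x.2)
    choose d hd using hdiv
    let Q : Matrix ι ι R := Matrix.of fun a b => d (T.1 a b)
    have hQ : Qᵀ = Q := by ext a b; simp [Q, T.2 a b]
    have hV : Vᵀ * U = 1 := by rw [← Matrix.transpose_one, ← hUV, Matrix.transpose_mul, hU]
    obtain ⟨P, hP, hP'⟩ := exists_isom hp h2 U (Q * V) (by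
      rw [Matrix.transpose_mul, hQ, mul_assoc, hVU, ← mul_assoc, mul_eq_one_comm.mp hV,
        mul_one, one_mul])
    refine card_isom_right P hP (hP'.trans ?_)
    rw [mul_assoc, hVU, mul_one]
    ext a b
    simp [G, Q, hd]
  have hGf : ∀ T, (G T).map f = U.map f := fun T => by
    ext a b
    simp [G, RingHom.mem_ker.mp (T.1 a b).2]
  let φ : (Σ T : Sy, Isom U (G T)) → {D : Matrix ι ι R // IsUnit (D.map f).det ∧
      D.map f * U.map f * (D.map f)ᵀ = U.map f} := fun s => ⟨s.2.1, by
    have := s.2.2.1.map f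
    rwa [RingHom.map_det, RingHom.mapMatrix_apply] at this, by
    rw [← Matrix.transpose_map, ← Matrix.map_mul, ← Matrix.map_mul, s.2.2.2, hGf]⟩
  have hφ : Function.Bijective φ := by
    constructor
    · rintro ⟨T, D, hD, hD'⟩ ⟨T', D', hD₁, hD₁'⟩ h
      obtain rfl : D = D' := congrArg Subtype.val h
      obtain rfl : T = T' := by
        have h := add_left_cancel (hD'.symm.trans hD₁')
        ext a b
        exact congrFun (congrFun h a) b
      rfl
    · rintro ⟨D, hD, hD'⟩
      rw [← Matrix.transpose_map, ← Matrix.map_mul, ← Matrix.map_mul] at hD'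
      rw [← RingHom.mapMatrix_apply, ← RingHom.map_det, isUnit_of_map f hf hn] at hD
      have hs : (D * U * Dᵀ)ᵀ = D * U * Dᵀ := by
        simp only [Matrix.transpose_mul, Matrix.transpose_transpose, hU, mul_assoc]
      refine ⟨⟨⟨fun a b => ⟨(D * U * Dᵀ) a b - U a b, ?_⟩, fun a b => ?_⟩, D, hD, ?_⟩, rfl⟩
      · have := congrFun (congrFun hD' a) b
        simp only [Matrix.map_apply] at this
        rw [RingHom.mem_ker, map_sub, this, sub_self]
      · have h1 := congrFun (congrFun hs a) b
        have h2 := congrFun (congrFun hU a) b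
        rw [Matrix.transpose_apply] at h1 h2
        exact Subtype.ext (congrArg₂ (· - ·) h1.symm h2.symm)
      · ext a b
        simp [G]
  have hSy : Nat.card Sy = Nat.card (RingHom.ker f) ^ ((Fintype.card ι + 1).choose 2) := by
    rw [Nat.card_congr (Sym2.lift (α := ι) (β := RingHom.ker f)), Nat.card_fun,
      Nat.card_eq_fintype_card (α := Sym2 ι), Sym2.card]
  have : Fintype Sy := Fintype.ofFinite _
  rw [← Nat.card_congr (Equiv.ofBijective φ hφ), Nat.card_sigma]
  simp only [hG, Finset.sum_const, Finset.card_univ, smul_eq_mul]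
  rw [← Nat.card_eq_fintype_card (α := Sy), hSy]
  rfl

end Reduction

/-! ### Diagonal forms over `ℤ / ℓ ^ N` -/

section ZModPow

variable {ι : Type} [Fintype ι] [DecidableEq ι]

lemma castHom_eq_zero_iff (ℓ : ℕ) (a b : ℕ) (x : ZMod (ℓ ^ (a + b))) :
    ZMod.castHom (pow_dvd_pow ℓ (Nat.le_add_right a b)) (ZMod (ℓ ^ a)) x = 0 ↔
      ∃ y, x = (ℓ : ZMod (ℓ ^ (a + b))) ^ a * y := by
  constructor
  · obtain ⟨m, rfl⟩ := ZMod.intCast_surjective x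
    rw [map_intCast, ZMod.intCast_zmod_eq_zero_iff_dvd]
    rintro ⟨c, rfl⟩
    exact ⟨c, by push_cast; rfl⟩
  · rintro ⟨y, rfl⟩
    rw [map_mul, map_pow, map_natCast, ← Nat.cast_pow, ZMod.natCast_self, zero_mul]

lemma mul_eq_zero_iff (ℓ : ℕ) (hℓ : ℓ ≠ 0) (a : ℕ) (x : ZMod (ℓ ^ (a + 1))) :
    (ℓ : ZMod (ℓ ^ (a + 1))) * x = 0 ↔
      ZMod.castHom (pow_dvd_pow ℓ (Nat.le_add_right a 1)) (ZMod (ℓ ^ a)) x = 0 := by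
  obtain ⟨m, rfl⟩ := ZMod.intCast_surjective x
  have h : (ℓ : ZMod (ℓ ^ (a + 1))) * (m : ZMod (ℓ ^ (a + 1))) = ((ℓ * m : ℤ) : _) := by
    push_cast; rfl
  rw [h, map_intCast, ZMod.intCast_zmod_eq_zero_iff_dvd, ZMod.intCast_zmod_eq_zero_iff_dvd]
  push_cast
  rw [pow_succ', mul_dvd_mul_iff_left (by exact_mod_cast hℓ)]

lemma card_ker_castHom (ℓ : ℕ) (hℓ : ℓ ≠ 0) (a b : ℕ) :
    Nat.card (RingHom.ker
      (ZMod.castHom (pow_dvd_pow ℓ (Nat.le_add_right a b)) (ZMod (ℓ ^ a)))) = ℓ ^ b := by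
  have h := card_matrix_map (α := Unit) (β := Unit)
    (ZMod.castHom (pow_dvd_pow ℓ (Nat.le_add_right a b)) (ZMod (ℓ ^ a)))
    (ZMod.castHom_surjective _) (fun _ => True)
  have h1 : ∀ R : Type, Nat.card {D : Matrix Unit Unit R // True} = Nat.card R := fun R => by
    rw [Nat.card_congr (Equiv.subtypeUnivEquiv fun _ => trivial), card_matrix]
    simp
  rw [h1, h1, Nat.card_zmod, Nat.card_zmod, Fintype.card_unit, one_mul, pow_one] at h
  have h := (pow_add ℓ b a).symm.trans ((congrArg (ℓ ^ ·) (add_comm b a)).trans h)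
  exact (Nat.eq_of_mul_eq_mul_right (pow_pos (Nat.pos_of_ne_zero hℓ) a) h).symm

lemma isNilpotent_cast (ℓ N : ℕ) : IsNilpotent (ℓ : ZMod (ℓ ^ N)) :=
  ⟨N, by rw [← Nat.cast_pow, ZMod.natCast_self]⟩

lemma isUnit_intCast (ℓ N : ℕ) [hp : Fact ℓ.Prime] (m : ℤ) (hm : ¬ (ℓ : ℤ) ∣ m) :
    IsUnit (m : ZMod (ℓ ^ N)) := by
  have h : IsCoprime m ((ℓ ^ N : ℕ) : ℤ) := by
    push_cast
    exact (((Nat.prime_iff_prime_int.mp hp.1).irreducible.coprime_iff_not_dvd).mpr hm).symm.pow_right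
  exact (ZMod.coe_int_isUnit_iff_isCoprime m (ℓ ^ N)).mpr h.symm

lemma isUnit_two (ℓ N : ℕ) [hp : Fact ℓ.Prime] (hℓ : ℓ ≠ 2) : IsUnit (2 : ZMod (ℓ ^ N)) := by
  have h : ¬ (ℓ : ℤ) ∣ 2 := by
    intro h
    have : ℓ ∣ 2 := by exact_mod_cast h
    exact hℓ ((Nat.prime_dvd_prime_iff_eq hp.1 Nat.prime_two).mp this)
  simpa using isUnit_intCast ℓ N 2 h

/-- Dividing a form by `ℓ` lowers the modulus by one power of `ℓ`. The target modulus is a positive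
power of `ℓ`, so that the reduction has nilpotent kernel and invertibility can be tested on it. -/
lemma cnt_scale (ℓ N : ℕ) (hℓ : ℓ ≠ 0) (d : ι → ℤ) :
    cnt ((ℓ : ZMod (ℓ ^ (N + 2))) • Matrix.diagonal fun a => (d a : ZMod (ℓ ^ (N + 2)))) =
      ℓ ^ (Fintype.card ι * Fintype.card ι) *
        cnt (Matrix.diagonal fun a => (d a : ZMod (ℓ ^ (N + 1)))) := by
  have hn : ∀ x : ZMod (ℓ ^ (N + 1 + 1)),
      ZMod.castHom (pow_dvd_pow ℓ (Nat.le_add_right (N + 1) 1)) (ZMod (ℓ ^ (N + 1))) x = 0 →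
        IsNilpotent x := fun x hx => by
    obtain ⟨y, rfl⟩ := (castHom_eq_zero_iff ℓ (N + 1) 1 x).mp hx
    exact Commute.isNilpotent_mul_right (Commute.all _ _)
      ((isNilpotent_cast ℓ _).pow_of_pos (Nat.succ_ne_zero N))
  have h := cnt_smul (ι := ι) _ (ZMod.castHom_surjective _) hn (ℓ : ZMod (ℓ ^ (N + 1 + 1)))
    (mul_eq_zero_iff ℓ hℓ (N + 1)) (Matrix.diagonal fun a => (d a : ZMod (ℓ ^ (N + 1 + 1))))
  rw [card_ker_castHom ℓ hℓ (N + 1) 1, pow_one, Matrix.diagonal_map (map_zero _)] at h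
  simpa only [map_intCast, Function.comp_def] using h

lemma half_add_half (c : ℕ) : c * (c + 1) / 2 + c * (c - 1) / 2 = c * c := by
  have h1 := Nat.even_mul_succ_self c
  have h2 := Nat.even_mul_pred_self c
  obtain ⟨x, hx⟩ := h1
  obtain ⟨y, hy⟩ := h2
  have h3 : c * (c + 1) + c * (c - 1) = 2 * (c * c) := by
    cases c with
    | zero => rfl
    | succ c => simp; ring
  omega

lemma cnt_unimodular (ℓ N : ℕ) [hp : Fact ℓ.Prime] (hℓ : ℓ ≠ 2) (u : ι → ℤ)
    (hu : ∀ a, ¬ (ℓ : ℤ) ∣ u a) :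
    cnt (Matrix.diagonal fun a => (u a : ZMod (ℓ ^ (N + 1)))) =
      ℓ ^ (N * (Fintype.card ι * (Fintype.card ι - 1) / 2)) *
        cnt (Matrix.diagonal fun a => (u a : ZMod ℓ)) := by
  have h0 := hp.1.ne_zero
  have : NeZero (ℓ ^ (1 + N)) := ⟨pow_ne_zero _ h0⟩
  have hinv : ∀ a, ∃ v, (u a : ZMod (ℓ ^ (1 + N))) * v = 1 := fun a =>
    (isUnit_intCast ℓ _ (u a) (hu a)).exists_right_inv
  choose v hv using hinv
  have h := cnt_lift (ι := ι)
    (ZMod.castHom (pow_dvd_pow ℓ (Nat.le_add_right 1 N)) (ZMod (ℓ ^ 1)))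
    (ZMod.castHom_surjective _) (p := (ℓ : ZMod (ℓ ^ (1 + N))))
    (isNilpotent_cast ℓ _) (fun x => by simpa using castHom_eq_zero_iff ℓ 1 N x)
    (isUnit_two ℓ _ hℓ) (Matrix.diagonal fun a => (u a : ZMod (ℓ ^ (1 + N))))
    (Matrix.diagonal v) (by simp [Matrix.diagonal_mul_diagonal, hv]) (by simp)
  rw [card_ker_castHom ℓ h0 1 N, Matrix.diagonal_map (map_zero _), Nat.choose_two_right,
    Nat.add_sub_cancel, mul_comm (_ + 1), ← half_add_half,
    pow_add (ℓ ^ N), mul_assoc] at h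
  have h := Nat.eq_of_mul_eq_mul_left (pow_pos (pow_pos hp.1.pos _) _) h
  simp only [map_intCast] at h
  rw [← pow_mul, add_comm 1 N] at h
  rw [h]
  have h1 : ∀ m, m = ℓ → cnt (Matrix.diagonal fun a => (u a : ZMod m)) =
    cnt (Matrix.diagonal fun a => (u a : ZMod ℓ)) := fun m hm => by subst hm; rfl
  rw [h1 _ (pow_one ℓ)]

/-- The right-hand side of the counting formula modulo `ℓ ^ N`, as a function of the multiplicity
`c v` of the scale `ℓ ^ v` and of the order `O v` of the corresponding residual orthogonal group. -/
def formula (ℓ N : ℕ) (c O : ℕ → ℕ) : ℕ :=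
  (∏ v ∈ Finset.range N, ∏ v' ∈ Finset.range N,
      if v' < v then ℓ ^ ((N + v') * (c v * c v')) else 1) *
    ∏ v ∈ Finset.range N,
      ℓ ^ (v * (c v * (c v + 1) / 2) + (N - 1) * (c v * (c v - 1) / 2)) * O v

lemma sum_mul_self_eq (N : ℕ) (c : ℕ → ℕ) :
    (∑ v ∈ Finset.range N, c v) * (∑ v ∈ Finset.range N, c v) =
      (∑ v ∈ Finset.range N, ∑ v' ∈ Finset.range N, if v' < v then 2 * (c v * c v') else 0) +
        ∑ v ∈ Finset.range N, c v * c v := by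
  induction N with
  | zero => simp
  | succ N ih =>
    have h1 : ∀ v ∈ Finset.range N, (∑ v' ∈ Finset.range (N + 1),
        if v' < v then 2 * (c v * c v') else 0) =
        ∑ v' ∈ Finset.range N, if v' < v then 2 * (c v * c v') else 0 := fun v hv => by
      rw [Finset.sum_range_succ, if_neg (Finset.mem_range.mp hv).le.not_gt, add_zero]
    have h2 : (∑ v' ∈ Finset.range (N + 1), if v' < N then 2 * (c N * c v') else 0) =
        2 * (c N * ∑ v' ∈ Finset.range N, c v') := by
      rw [Finset.sum_range_succ, if_neg (lt_irrefl _), add_zero, Finset.mul_sum, Finset.mul_sum]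
      exact Finset.sum_congr rfl fun v' hv => if_pos (Finset.mem_range.mp hv)
    rw [Finset.sum_range_succ (fun v => ∑ v' ∈ Finset.range (N + 1), _), h2,
      Finset.sum_congr rfl h1, Finset.sum_range_succ c, Finset.sum_range_succ (fun v => c v * c v)]
    linarith

/-- The recursion satisfied by `formula` when the unimodular part is split off and the remaining
form is divided by `ℓ`. -/
lemma formula_succ (ℓ N : ℕ) (c O : ℕ → ℕ) (n : ℕ)
    (hn : n = ∑ v ∈ Finset.range N, c (v + 1)) :
    formula ℓ (N + 1) c O = ℓ ^ ((N + 1) * (c 0 * n)) *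
      ((ℓ ^ (N * (c 0 * (c 0 - 1) / 2)) * O 0) *
        (ℓ ^ (n * n) * formula ℓ N (fun v => c (v + 1)) (fun v => O (v + 1)))) := by
  have hA : (∏ v ∈ Finset.range (N + 1), ∏ v' ∈ Finset.range (N + 1),
      if v' < v then ℓ ^ ((N + 1 + v') * (c v * c v')) else 1) =
      ((∏ v ∈ Finset.range N, ∏ v' ∈ Finset.range N,
        if v' < v then ℓ ^ ((N + v') * (c (v + 1) * c (v' + 1))) else 1) *
      ℓ ^ (∑ v ∈ Finset.range N, ∑ v' ∈ Finset.range N,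
        if v' < v then 2 * (c (v + 1) * c (v' + 1)) else 0)) * ℓ ^ ((N + 1) * (c 0 * n)) := by
    rw [Finset.prod_range_succ']
    simp only [Finset.prod_range_succ', not_lt_zero, if_false, Finset.prod_const_one, mul_one,
      Nat.add_lt_add_iff_right, Nat.zero_lt_succ, if_true, add_zero, Finset.prod_mul_distrib]
    congr 1
    · simp only [← Finset.prod_pow_eq_pow_sum, ← Finset.prod_mul_distrib]
      refine Finset.prod_congr rfl fun v _ => Finset.prod_congr rfl fun v' _ => ?_
      split_ifs
      · rw [← pow_add]; congr 1; ring
      · simp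
    · rw [Finset.prod_pow_eq_pow_sum, hn, Finset.mul_sum, Finset.mul_sum]
      congr 1
      exact Finset.sum_congr rfl fun v _ => by ring
  have hB : (∏ v ∈ Finset.range (N + 1),
      ℓ ^ (v * (c v * (c v + 1) / 2) + (N + 1 - 1) * (c v * (c v - 1) / 2)) * O v) =
      ((∏ v ∈ Finset.range N, ℓ ^ (v * (c (v + 1) * (c (v + 1) + 1) / 2) +
        (N - 1) * (c (v + 1) * (c (v + 1) - 1) / 2)) * O (v + 1)) *
      ℓ ^ (∑ v ∈ Finset.range N, c (v + 1) * c (v + 1))) *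
      (ℓ ^ (N * (c 0 * (c 0 - 1) / 2)) * O 0) := by
    rw [Finset.prod_range_succ']
    congr 1
    · rw [← Finset.prod_pow_eq_pow_sum, ← Finset.prod_mul_distrib]
      refine Finset.prod_congr rfl fun v hv => ?_
      obtain ⟨M, rfl⟩ : ∃ M, N = M + 1 := ⟨N - 1, by have := Finset.mem_range.mp hv; omega⟩
      rw [mul_right_comm, ← pow_add, ← half_add_half (c (v + 1))]
      congr 2
      simp only [Nat.add_sub_cancel]
      ring
    · simp
  rw [formula, formula, hA, hB, hn, sum_mul_self_eq, pow_add]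
  ring

omit [DecidableEq ι] in
lemma card_eq_sum_fibres (N : ℕ) (w : ι → ℕ) (hw : ∀ a, w a < N) :
    Fintype.card ι = ∑ v ∈ Finset.range N, Fintype.card {a // w a = v} := by
  rw [← Finset.card_univ, Finset.card_eq_sum_card_fiberwise (f := w) (t := Finset.range N)
    (fun a _ => by simpa using hw a)]
  exact Finset.sum_congr rfl fun v _ => (Fintype.card_subtype _).symm

/-- The count for an arbitrary diagonal form `∑ ℓ ^ (w a) u_a x_a²` modulo `ℓ ^ N`, where `N` is
any exponent exceeding all `w a`. -/
theorem cnt_diagonal (ℓ : ℕ) [hp : Fact ℓ.Prime] (hℓ : ℓ ≠ 2) (N : ℕ) :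
    ∀ (ι : Type) [Fintype ι] [DecidableEq ι] (w : ι → ℕ) (u : ι → ℤ),
      (∀ a, w a < N) → (∀ a, ¬ (ℓ : ℤ) ∣ u a) →
      cnt (Matrix.diagonal fun a => (((ℓ : ℤ) ^ w a * u a : ℤ) : ZMod (ℓ ^ N))) =
        formula ℓ N (fun v => Fintype.card {a // w a = v})
          (fun v => cnt (Matrix.diagonal fun a : {a // w a = v} => (u a.1 : ZMod ℓ))) := by
  induction N with
  | zero =>
    intro ι _ _ w u hw hu
    have : IsEmpty ι := ⟨fun a => absurd (hw a) (Nat.not_lt_zero _)⟩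
    rw [cnt_of_isEmpty]
    simp [formula]
  | succ N ih =>
    intro ι _ _ w u hw hu
    have : NeZero (ℓ ^ (N + 1)) := ⟨pow_ne_zero _ hp.1.ne_zero⟩
    let w' : {a // ¬ w a = 0} → ℕ := fun a => w a.1 - 1
    let u' : {a // ¬ w a = 0} → ℤ := fun a => u a.1
    have hw' : ∀ a, w' a < N := fun a => by
      have h1 := hw a.1
      have h2 := a.2
      simp only [w']
      omega
    have hsplit : (Matrix.diagonal fun a =>
        (((ℓ : ℤ) ^ w a * u a : ℤ) : ZMod (ℓ ^ (N + 1)))).submatrix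
        (Equiv.sumCompl fun a => w a = 0) (Equiv.sumCompl fun a => w a = 0) =
        Matrix.fromBlocks (Matrix.diagonal fun a : {a // w a = 0} => (u a.1 : ZMod (ℓ ^ (N + 1))))
          0 0 ((ℓ : ZMod (ℓ ^ (N + 1))) • Matrix.diagonal fun a =>
            (((ℓ : ℤ) ^ w' a * u' a : ℤ) : ZMod (ℓ ^ (N + 1)))) := by
      rw [Matrix.submatrix_diagonal_equiv, ← Matrix.diagonal_smul, Matrix.fromBlocks_diagonal]
      congr 1
      funext a
      rcases a with a | a
      · simp [a.2]
      · obtain ⟨m, hm⟩ := Nat.exists_eq_succ_of_ne_zero a.2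
        simp [w', u', hm, pow_succ']
        ring
    have hinv : ∀ a, ∃ v, (u a : ZMod (ℓ ^ (N + 1))) * v = 1 := fun a =>
      (isUnit_intCast ℓ _ (u a) (hu a)).exists_right_inv
    choose v hv using hinv
    rw [← cnt_submatrix (Equiv.sumCompl fun a => w a = 0), hsplit,
      cnt_fromBlocks (isNilpotent_cast ℓ _) (isUnit_two ℓ _ hℓ) _
        (Matrix.diagonal fun a : {a // w a = 0} => v a.1) _
        (by simp [Matrix.diagonal_mul_diagonal, hv]) (by simp) (by simp),
      cnt_unimodular ℓ N hℓ (fun a : {a // w a = 0} => u a.1) (fun a => hu a.1), Nat.card_zmod, ← pow_mul]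
    -- if `N = 0`, the reduction to `ℤ / ℓ ^ 0` does not detect units, but then no scale is positive
    have hscale : cnt ((ℓ : ZMod (ℓ ^ (N + 1))) • Matrix.diagonal fun a =>
        (((ℓ : ℤ) ^ w' a * u' a : ℤ) : ZMod (ℓ ^ (N + 1)))) =
        ℓ ^ (Fintype.card {a // ¬ w a = 0} * Fintype.card {a // ¬ w a = 0}) *
        cnt (Matrix.diagonal fun a => (((ℓ : ℤ) ^ w' a * u' a : ℤ) : ZMod (ℓ ^ N))) := by
      cases N with
      | zero =>
        have : IsEmpty {a // ¬ w a = 0} := ⟨fun a => absurd (hw' a) (Nat.not_lt_zero _)⟩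
        rw [cnt_of_isEmpty, cnt_of_isEmpty]
        simp
      | succ M => exact cnt_scale ℓ M hp.1.ne_zero _
    let ε : ∀ v, {a // w' a = v} ≃ {a // w a = v + 1} := fun v =>
      { toFun := fun a => ⟨a.1.1, by have h1 := a.1.2; have h2 := a.2; simp only [w'] at h2; omega⟩
        invFun := fun a => ⟨⟨a.1, by have := a.2; omega⟩, by have := a.2; simp only [w']; omega⟩
        left_inv := fun a => rfl
        right_inv := fun a => rfl }
    have hcard : ∀ v, Fintype.card {a // w' a = v} = Fintype.card {a // w a = v + 1} :=
      fun v => Fintype.card_congr (ε v)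
    have hO : ∀ v, cnt (Matrix.diagonal fun a : {a // w' a = v} => (u' a.1 : ZMod ℓ)) =
        cnt (Matrix.diagonal fun a : {a // w a = v + 1} => (u a.1 : ZMod ℓ)) := fun v => by
      rw [← cnt_submatrix (ε v), Matrix.submatrix_diagonal_equiv]
      rfl
    rw [hscale, ih _ w' u' hw' (fun a => hu a.1), formula_succ ℓ N _ _
      (Fintype.card {a // ¬ w a = 0}) (by
        rw [card_eq_sum_fibres N w' hw']
        exact Finset.sum_congr rfl fun v _ => hcard v)]
    simp only [hcard, hO]

end ZModPow

theorem stmt_7 (ℓ : ℕ) [Fact ℓ.Prime] (hℓ : ℓ ≠ 2)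
    -- an integer `z` which is a non-residue mod `ℓ`
    (z : ℤ) (hznsq : ¬ ∃ y : ZMod ℓ, y * y = (z : ZMod ℓ))
    -- the data of a standard block form with `n₁ + ⋯ + n_r = 4`
    (r : ℕ) (hr : 0 < r) (k : Fin r → ℕ) (hk : StrictMono k)
    (n : Fin r → ℕ) (hn : ∀ i, 0 < n i) (hsum : ∑ i, n i = 4)
    (Λb : ∀ i : Fin r, Matrix (Fin (n i)) (Fin (n i)) ℤ)
    (hΛb : ∀ i, Λb i = 1 ∨
      Λb i = Matrix.diagonal (fun j : Fin (n i) => if (j : ℕ) = n i - 1 then z else 1))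
    -- `Λ` regarded as a `4×4` matrix via an identification of the index set with `Fin 4`
    (e : ((i : Fin r) × Fin (n i)) ≃ Fin 4) :
    Nat.card {D : Matrix (Fin 4) (Fin 4) (ZMod (ℓ ^ (k ⟨r - 1, Nat.sub_lt hr Nat.one_pos⟩ + 1))) //
        IsUnit D.det ∧
        D * (Matrix.reindex e e (stdBlockFormZ ℓ r k n Λb)).map
            (Int.cast : ℤ → ZMod (ℓ ^ (k ⟨r - 1, Nat.sub_lt hr Nat.one_pos⟩ + 1))) * Dᵀ =
          (Matrix.reindex e e (stdBlockFormZ ℓ r k n Λb)).map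
            (Int.cast : ℤ → ZMod (ℓ ^ (k ⟨r - 1, Nat.sub_lt hr Nat.one_pos⟩ + 1)))} =
      (∏ i : Fin r, ∏ j : Fin r,
          if j < i then
            ℓ ^ ((k ⟨r - 1, Nat.sub_lt hr Nat.one_pos⟩ + 1 + k j) * (n i * n j))
          else 1) *
        ∏ i : Fin r,
          ℓ ^ (k i * (n i * (n i + 1) / 2) +
              k ⟨r - 1, Nat.sub_lt hr Nat.one_pos⟩ * (n i * (n i - 1) / 2)) *
            Nat.card {g : Matrix (Fin (n i)) (Fin (n i)) (ZMod ℓ) //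
              IsUnit g.det ∧
              gᵀ * (Λb i).map (Int.cast : ℤ → ZMod ℓ) * g =
                (Λb i).map (Int.cast : ℤ → ZMod ℓ)} := by
    classical
  have hp : Fact ℓ.Prime := inferInstance
  generalize hK : k ⟨r - 1, Nat.sub_lt hr Nat.one_pos⟩ = K
  have hkK : ∀ i, k i < K + 1 := fun i => by
    rw [← hK, Nat.lt_succ_iff]
    exact hk.monotone (Fin.mk_le_mk.mpr (Nat.le_sub_one_of_lt i.2))
  have hzl : ¬ (ℓ : ℤ) ∣ z := fun h =>
    hznsq ⟨0, by rw [(ZMod.intCast_zmod_eq_zero_iff_dvd z ℓ).mpr h, mul_zero]⟩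
  have h1l : ¬ (ℓ : ℤ) ∣ 1 := fun h =>
    hp.1.one_lt.ne' (by exact_mod_cast Int.eq_one_of_dvd_one (by positivity) h)
  have hdiag : ∀ i, ∃ u : Fin (n i) → ℤ, Λb i = Matrix.diagonal u ∧ ∀ j, ¬ (ℓ : ℤ) ∣ u j := by
    intro i
    rcases hΛb i with h | h
    · exact ⟨fun _ => 1, by rw [h, Matrix.diagonal_one], fun _ => h1l⟩
    · refine ⟨_, h, fun j => ?_⟩
      split_ifs
      · exact hzl
      · exact h1l
  choose u hu hul using hdiag
  have hLam : (Matrix.reindex e e (stdBlockFormZ ℓ r k n Λb)).map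
      (Int.cast : ℤ → ZMod (ℓ ^ (K + 1))) =
      (Matrix.diagonal fun a : (i : Fin r) × Fin (n i) =>
        (((ℓ : ℤ) ^ k a.1 * u a.1 a.2 : ℤ) : ZMod (ℓ ^ (K + 1)))).submatrix e.symm e.symm := by
    have h : stdBlockFormZ ℓ r k n Λb = Matrix.diagonal fun a : (i : Fin r) × Fin (n i) =>
        (ℓ : ℤ) ^ k a.1 * u a.1 a.2 := by
      rw [stdBlockFormZ, ← Matrix.blockDiagonal'_diagonal
        (fun i j => (ℓ : ℤ) ^ k i * u i j)]
      congr 1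
      funext i
      rw [hu, ← Matrix.diagonal_smul]
      rfl
    rw [Matrix.reindex_apply, ← Matrix.submatrix_map, h, Matrix.diagonal_map Int.cast_zero]
  rw [hLam]
  refine (cnt_submatrix e.symm _).trans ?_
  rw [cnt_diagonal ℓ hℓ (K + 1) ((i : Fin r) × Fin (n i)) (fun a => k a.1)
    (fun a => u a.1 a.2) (fun a => hkK a.1)
    (fun a => hul a.1 a.2)]
  let ε : ∀ i, Fin (n i) ≃ {a : (i : Fin r) × Fin (n i) // k a.1 = k i} := fun i =>
    Equiv.ofBijective (fun j => ⟨⟨i, j⟩, rfl⟩) (by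
      constructor
      · intro j j' h
        simpa using h
      · rintro ⟨⟨i', j⟩, h⟩
        obtain rfl := hk.injective h
        exact ⟨j, rfl⟩)
  have hc : ∀ i, Fintype.card {a : (i : Fin r) × Fin (n i) // k a.1 = k i} = n i := fun i => by
    rw [← Fintype.card_congr (ε i), Fintype.card_fin]
  have hO : ∀ i, cnt (Matrix.diagonal fun a : {a : (i : Fin r) × Fin (n i) // k a.1 = k i} =>
      (u a.1.1 a.1.2 : ZMod ℓ)) = Nat.card {g : Matrix (Fin (n i)) (Fin (n i)) (ZMod ℓ) //
        IsUnit g.det ∧ gᵀ * (Λb i).map (Int.cast : ℤ → ZMod ℓ) * g =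
          (Λb i).map (Int.cast : ℤ → ZMod ℓ)} := fun i => by
    rw [card_transpose, ← cnt_submatrix (ε i), Matrix.submatrix_diagonal_equiv, hu,
      Matrix.diagonal_map Int.cast_zero]
    rfl
  -- scales which do not occur contribute trivial factors
  have hempty : ∀ v, (∀ i, k i ≠ v) →
      IsEmpty {a : (i : Fin r) × Fin (n i) // k a.1 = v} := fun v hv => ⟨fun a => hv a.1.1 a.2⟩
  have hmaps : Set.MapsTo k ↑(Finset.univ : Finset (Fin r)) ↑(Finset.range (K + 1)) :=
    fun i _ => by simpa using hkK i
  have hinj : Set.InjOn k ↑(Finset.univ : Finset (Fin r)) := hk.injective.injOn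
  rw [formula]
  symm
  congr 1
  · refine Finset.prod_of_injOn k hinj hmaps (fun v _ hv => ?_) (fun i _ => ?_)
    · have := hempty v fun i hi => hv ⟨i, by simp, hi⟩
      simp
    · refine Finset.prod_of_injOn k hinj hmaps (fun v _ hv => ?_) (fun j _ => ?_)
      · have := hempty v fun i hi => hv ⟨i, by simp, hi⟩
        simp
      · simp only [hc, hk.lt_iff_lt]
  · refine Finset.prod_of_injOn k hinj hmaps (fun v _ hv => ?_) (fun i _ => ?_)
    · have := hempty v fun i hi => hv ⟨i, by simp, hi⟩
      simp [cnt_of_isEmpty]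
    · rw [hc, ← hO, Nat.add_sub_cancel]
end

section
/- Fix an odd prime ℓ and a non-square unit z ∈ ℤ_ℓ^×, and let Λ = diag(ℓ^{k₁}Λ₁, …, ℓ^{k_r}Λ_r) be a standard block form with 0 ≤ k₁ < ⋯ < k_r, block sizes n_i with n₁ + ⋯ + n_r = 4. Then the congruence class E(Λ) = {B ∈ Sym₄(ℤ_ℓ) : ∃ D ∈ GL₄(ℤ_ℓ), B = D Λ Dᵀ} is an open and closed subset of Sym₄(ℤ_ℓ), and its measure under the Haar probability measure μ on Sym₄(ℤ_ℓ) equals μ(E(Λ)) = ℓ^{−10(k_r+1)} · #{B̄ ∈ Sym₄(ℤ/ℓ^{k_r+1}) : ∃ D̄ ∈ GL₄(ℤ/ℓ^{k_r+1}), B̄ = D̄ Λ̄ D̄ᵀ}, where Λ̄ is the reduction of Λ modulo ℓ^{k_r+1}. -/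
/-!
Congruence to `Λ` depends only on the reduction modulo `ℓ ^ (K + 1)`, where `K = k_r`. Since `Λ` is
diagonal with entries dividing `ℓ ^ K`, the matrix `Λ' = ℓ ^ K Λ⁻¹` is integral
(`exists_scaled_inverse`). If a symmetric `B` equals `D Λ Dᵀ + ℓ ^ m S` with `m > K` and `D`
invertible, then replacing `D` by `D + ½ ℓ ^ (m - K) S D⁻ᵀ Λ'` kills the term `ℓ ^ m S` and leaves
an error divisible by `ℓ ^ (2 m - K)`, hence by `ℓ ^ (m + 1)` (`newton_step`; this uses that `2` is
a unit). So `B` lies in the closure of the congruence class, which is the continuous image of the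
compact group `GL₄(ℤ_ℓ)` and therefore closed (`exists_congr_of_map_eq`).

Invertible matrices modulo `ℓ ^ (K + 1)` lift to invertible matrices, so the congruence class is the
preimage under reduction of the congruence class of `Λ` modulo `ℓ ^ (K + 1)`; in particular it is
clopen. The `ℓ ^ (10 (K + 1))` residue classes are translates of one another, so each has measure
`ℓ ^ (-10 (K + 1))` (`measure_redSymm_preimage`).
-/

open Matrix MeasureTheory

noncomputable instance (p : ℕ) [Fact p.Prime] :
    MeasurableSpace (Matrix (Fin 4) (Fin 4) ℤ_[p]) := borel _

instance (p : ℕ) [Fact p.Prime] :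
    BorelSpace (Matrix (Fin 4) (Fin 4) ℤ_[p]) := ⟨rfl⟩

/-- `Sym₄(ℤ_ℓ)`: the compact additive group of symmetric `4×4` matrices over `ℤ_ℓ`. -/
abbrev Sym4 (ℓ : ℕ) [Fact ℓ.Prime] := {A : Matrix (Fin 4) (Fin 4) ℤ_[ℓ] // A.IsSymm}

section Congruence

/-! ### Reduction modulo powers of `p` -/

variable {p : ℕ} [Fact p.Prime]

instance : CompactSpace (Matrix (Fin 4) (Fin 4) ℤ_[p]) :=
  inferInstanceAs (CompactSpace (Fin 4 → Fin 4 → ℤ_[p]))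

theorem map_toZModPow_eq_iff (m : ℕ) (A B : Matrix (Fin 4) (Fin 4) ℤ_[p]) :
    A.map (PadicInt.toZModPow m) = B.map (PadicInt.toZModPow m) ↔
      ∃ S : Matrix (Fin 4) (Fin 4) ℤ_[p], A = B + (p : ℤ_[p]) ^ m • S := by
  have key : ∀ x y : ℤ_[p], PadicInt.toZModPow m x = PadicInt.toZModPow m y ↔
      ∃ s, x = y + (p : ℤ_[p]) ^ m * s := by
    intro x y
    rw [← sub_eq_zero, ← map_sub, ← RingHom.mem_ker, PadicInt.ker_toZModPow,
      Ideal.mem_span_singleton]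
    exact exists_congr fun s => by rw [sub_eq_iff_eq_add']
  constructor
  · intro h
    have h' : ∀ i j, ∃ s, A i j = B i j + (p : ℤ_[p]) ^ m * s := fun i j =>
      (key _ _).1 (congrFun (congrFun h i) j)
    choose S hS using h'
    exact ⟨S, by ext i j; exact hS i j⟩
  · rintro ⟨S, rfl⟩
    ext i j
    exact (key _ _).2 ⟨S i j, rfl⟩

theorem toZModPow_surjective (m : ℕ) :
    Function.Surjective (PadicInt.toZModPow m : ℤ_[p] →+* ZMod (p ^ m)) :=
  ZMod.ringHom_surjective _

theorem isUnit_of_isUnit_toZModPow {m : ℕ} (hm : m ≠ 0) {x : ℤ_[p]}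
    (h : IsUnit (PadicInt.toZModPow m x)) : IsUnit x := by
  have : Fact (1 < p ^ m) := ⟨Nat.one_lt_pow hm (Fact.out : p.Prime).one_lt⟩
  have := (toZModPow_surjective (p := p) m).isLocalHom
  exact isUnit_of_map_unit _ _ h

theorem isUnit_det_of_map {m : ℕ} (hm : m ≠ 0) {A : Matrix (Fin 4) (Fin 4) ℤ_[p]}
    (h : IsUnit (A.map (PadicInt.toZModPow m)).det) : IsUnit A.det := by
  refine isUnit_of_isUnit_toZModPow hm ?_
  rwa [RingHom.map_det]

theorem map_congr_mul (m : ℕ) (D Λ : Matrix (Fin 4) (Fin 4) ℤ_[p]) :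
    (D * Λ * Dᵀ).map (PadicInt.toZModPow m) =
      D.map (PadicInt.toZModPow m) * Λ.map (PadicInt.toZModPow m) *
        (D.map (PadicInt.toZModPow m))ᵀ := by
  rw [Matrix.map_mul, Matrix.map_mul, Matrix.transpose_map]

theorem isUnit_two_s8 (hp : p ≠ 2) : IsUnit (2 : ℤ_[p]) := by
  have h : IsUnit ((2 : ℕ) : ℤ_[p]) := by
    rw [PadicInt.isUnit_iff, PadicInt.norm_natCast_eq_one_iff]
    exact (Nat.coprime_primes Fact.out Nat.prime_two).2 hp
  simpa using h

/-! ### Lifting congruences from `ℤ/p^(K+1)` to `ℤ_p` -/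

/-- One step of Newton's method for `D Λ Dᵀ = B`. When `Λ'` is `p ^ K` times the inverse of `Λ`,
the correction `X = ½ p ^ (m - K) S D⁻ᵀ Λ'` cancels the error `p ^ m S` to first order, and the
quadratic remainder `X Λ Xᵀ` is divisible by `p ^ (2 m - K)`. -/
theorem newton_step_s8 (hp : p ≠ 2) {K m : ℕ} (hm : K + 1 ≤ m)
    {Λ Λ' : Matrix (Fin 4) (Fin 4) ℤ_[p]} (hΛ : Λ.IsSymm)
    (hinv : Λ' * Λ = (p : ℤ_[p]) ^ K • (1 : Matrix (Fin 4) (Fin 4) ℤ_[p]))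
    {B D : Matrix (Fin 4) (Fin 4) ℤ_[p]} (hB : B.IsSymm) (hD : IsUnit D.det)
    (h : B.map (PadicInt.toZModPow m) = (D * Λ * Dᵀ).map (PadicInt.toZModPow m)) :
    ∃ D₁ : Matrix (Fin 4) (Fin 4) ℤ_[p], IsUnit D₁.det ∧
      B.map (PadicInt.toZModPow (m + 1)) =
        (D₁ * Λ * D₁ᵀ).map (PadicInt.toZModPow (m + 1)) := by
  obtain ⟨t, rfl⟩ : ∃ t, m = K + 1 + t := ⟨m - (K + 1), by omega⟩
  obtain ⟨S, hS⟩ := (map_toZModPow_eq_iff _ _ _).1 h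
  have hp0 : (p : ℤ_[p]) ^ (K + 1 + t) ≠ 0 :=
    pow_ne_zero _ (Nat.cast_ne_zero.2 (Fact.out : p.Prime).ne_zero)
  have hSsymm : Sᵀ = S := by
    have h1 : (p : ℤ_[p]) ^ (K + 1 + t) • Sᵀ = (p : ℤ_[p]) ^ (K + 1 + t) • S := by
      have h2 := congrArg Matrix.transpose hS
      rw [hB.eq, Matrix.transpose_add, Matrix.transpose_smul, Matrix.transpose_mul,
        Matrix.transpose_mul, Matrix.transpose_transpose, hΛ.eq, ← Matrix.mul_assoc] at h2
      exact add_left_cancel (h2.symm.trans hS)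
    exact smul_right_injective _ hp0 h1
  obtain ⟨c, hc⟩ := (isUnit_two_s8 hp).exists_left_inv
  have hDD' : D⁻¹ᵀ * Dᵀ = 1 := by
    rw [← Matrix.transpose_mul, Matrix.mul_nonsing_inv _ hD, Matrix.transpose_one]
  set Y : Matrix (Fin 4) (Fin 4) ℤ_[p] := S * D⁻¹ᵀ * Λ' with hY
  set a : ℤ_[p] := c * (p : ℤ_[p]) ^ (1 + t) with ha
  have hYΛ : Y * Λ = (p : ℤ_[p]) ^ K • (S * D⁻¹ᵀ) := by
    rw [hY, Matrix.mul_assoc, hinv, Matrix.mul_smul, Matrix.mul_one]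
  have hYD : Y * Λ * Dᵀ = (p : ℤ_[p]) ^ K • S := by
    rw [hYΛ, Matrix.smul_mul, Matrix.mul_assoc, hDD', Matrix.mul_one]
  have hDY : D * Λ * Yᵀ = (p : ℤ_[p]) ^ K • S := by
    have := congrArg Matrix.transpose hYD
    rwa [Matrix.transpose_mul, Matrix.transpose_mul, Matrix.transpose_transpose, hΛ.eq,
      Matrix.transpose_smul, hSsymm, ← Matrix.mul_assoc] at this
  refine ⟨D + a • Y, ?_, ?_⟩
  · -- the correction vanishes modulo `p`, so the determinant stays a unit
    refine isUnit_det_of_map one_ne_zero ?_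
    have : (D + a • Y).map (PadicInt.toZModPow 1) = D.map (PadicInt.toZModPow 1) := by
      rw [map_toZModPow_eq_iff]
      refine ⟨(c * (p : ℤ_[p]) ^ t) • Y, ?_⟩
      rw [smul_smul, ha]
      congr 2
      ring
    rw [this]
    have := hD.map (PadicInt.toZModPow (p := p) 1)
    rwa [RingHom.map_det] at this
  · rw [map_toZModPow_eq_iff]
    refine ⟨-((c * c * (p : ℤ_[p]) ^ t) • (S * D⁻¹ᵀ * Yᵀ)), ?_⟩
    have e1 : (D + a • Y) * Λ * (D + a • Y)ᵀ = D * Λ * Dᵀ + a • (Y * Λ * Dᵀ)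
        + a • (D * Λ * Yᵀ) + (a * a) • (Y * Λ * Yᵀ) := by
      simp only [Matrix.transpose_add, Matrix.transpose_smul, Matrix.add_mul, Matrix.mul_add,
        Matrix.smul_mul, Matrix.mul_smul, smul_add, mul_smul]
      abel
    rw [e1, hYD, hDY, hYΛ, hS, Matrix.smul_mul]
    have e2 : (p : ℤ_[p]) ^ (K + 1 + t) = a * (p : ℤ_[p]) ^ K + a * (p : ℤ_[p]) ^ K := by
      rw [ha]
      linear_combination -(p : ℤ_[p]) ^ (K + 1 + t) * hc
    rw [e2, add_smul, smul_smul, smul_smul, smul_neg, smul_smul]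
    have e3 : (p : ℤ_[p]) ^ (K + 1 + t + 1) * (c * c * (p : ℤ_[p]) ^ t)
        = a * a * (p : ℤ_[p]) ^ K := by
      rw [ha]; ring
    rw [e3]
    abel

/-- The congruence class is a continuous image of the compact set of invertible matrices. -/
theorem isClosed_congruenceClass (Λ : Matrix (Fin 4) (Fin 4) ℤ_[p]) :
    IsClosed {B : Matrix (Fin 4) (Fin 4) ℤ_[p] | ∃ D : Matrix (Fin 4) (Fin 4) ℤ_[p],
      IsUnit D.det ∧ B = D * Λ * Dᵀ} := by
  have hcl : IsClosed {D : Matrix (Fin 4) (Fin 4) ℤ_[p] | IsUnit D.det} := by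
    simp only [PadicInt.isUnit_iff]
    exact isClosed_eq (continuous_id.matrix_det.norm) continuous_const
  have hcont : Continuous fun D : Matrix (Fin 4) (Fin 4) ℤ_[p] => D * Λ * Dᵀ :=
    (continuous_id.matrix_mul continuous_const).matrix_mul continuous_id.matrix_transpose
  convert (hcl.isCompact.image hcont).isClosed using 1
  ext B
  simp [eq_comm]

/-- Congruence to `Λ` is decided modulo `p ^ (K + 1)`: Newton's method approximates `B` by elements
of the congruence class to any precision, and the class is closed. -/
theorem exists_congr_of_map_eq (hp : p ≠ 2) {K : ℕ}
    {Λ Λ' : Matrix (Fin 4) (Fin 4) ℤ_[p]} (hΛ : Λ.IsSymm)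
    (hinv : Λ' * Λ = (p : ℤ_[p]) ^ K • (1 : Matrix (Fin 4) (Fin 4) ℤ_[p]))
    {B : Matrix (Fin 4) (Fin 4) ℤ_[p]} (hB : B.IsSymm)
    (h : ∃ D : Matrix (Fin 4) (Fin 4) ℤ_[p], IsUnit D.det ∧
      B.map (PadicInt.toZModPow (K + 1)) = (D * Λ * Dᵀ).map (PadicInt.toZModPow (K + 1))) :
    ∃ D : Matrix (Fin 4) (Fin 4) ℤ_[p], IsUnit D.det ∧ B = D * Λ * Dᵀ := by
  have happrox : ∀ t : ℕ, ∃ D : Matrix (Fin 4) (Fin 4) ℤ_[p], IsUnit D.det ∧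
      B.map (PadicInt.toZModPow (K + 1 + t)) =
        (D * Λ * Dᵀ).map (PadicInt.toZModPow (K + 1 + t)) := by
    intro t
    induction t with
    | zero => exact h
    | succ t ih =>
      obtain ⟨D, hD, hBD⟩ := ih
      exact newton_step_s8 hp (Nat.le_add_right _ _) hΛ hinv hB hD hBD
  choose D hD hBD using happrox
  choose S hS using fun t => (map_toZModPow_eq_iff _ _ _).1 (hBD t)
  have hlim : Filter.Tendsto (fun t => D t * Λ * (D t)ᵀ) Filter.atTop (nhds B) := by
    refine tendsto_pi_nhds.2 fun i => tendsto_pi_nhds.2 fun j => ?_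
    rw [tendsto_iff_norm_sub_tendsto_zero]
    have hp1 : 1 < (p : ℝ) := by exact_mod_cast (Fact.out : p.Prime).one_lt
    refine squeeze_zero (g := fun t => ((p : ℝ)⁻¹) ^ t) (fun _ => norm_nonneg _) (fun t => ?_)
      (tendsto_pow_atTop_nhds_zero_of_lt_one (by positivity) (inv_lt_one_of_one_lt₀ hp1))
    have e : (D t * Λ * (D t)ᵀ) i j - B i j = -((p : ℤ_[p]) ^ (K + 1 + t) * S t i j) := by
      conv_lhs => rw [hS t]
      simp
    rw [e, norm_neg, norm_mul, norm_pow, PadicInt.norm_p]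
    calc (p : ℝ)⁻¹ ^ (K + 1 + t) * ‖S t i j‖ ≤ (p : ℝ)⁻¹ ^ (K + 1 + t) * 1 := by
          gcongr; exact PadicInt.norm_le_one _
      _ ≤ (p : ℝ)⁻¹ ^ t := by
          rw [mul_one]
          exact pow_le_pow_of_le_one (by positivity) (inv_le_one_of_one_le₀ hp1.le) (by omega)
  exact (isClosed_congruenceClass Λ).mem_of_tendsto hlim
    (Filter.Eventually.of_forall fun t => ⟨D t, hD t, rfl⟩)

/-! ### The measure of a union of residue classes -/

/-- A symmetric matrix is a function on unordered pairs of indices. -/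
def symmEquiv (R : Type*) : {A : Matrix (Fin 4) (Fin 4) R // A.IsSymm} ≃ (Sym2 (Fin 4) → R) :=
  (Equiv.subtypeEquivRight fun _ =>
    ⟨fun h a b => h.apply b a, fun h => Matrix.IsSymm.ext fun a b => h b a⟩).trans Sym2.lift

theorem card_symm (R : Type*) [Finite R] :
    Nat.card {A : Matrix (Fin 4) (Fin 4) R // A.IsSymm} = Nat.card R ^ 10 := by
  rw [Nat.card_congr (symmEquiv R), Nat.card_fun, Nat.card_eq_fintype_card (α := Sym2 (Fin 4)),
    Sym2.card]
  rfl

/-- Entrywise reduction modulo `p ^ m` of symmetric matrices. -/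
noncomputable def redSymm (m : ℕ) (A : Sym4 p) :
    {A : Matrix (Fin 4) (Fin 4) (ZMod (p ^ m)) // A.IsSymm} :=
  ⟨A.1.map (PadicInt.toZModPow m), A.2.map _⟩

theorem redSymm_surjective (m : ℕ) : Function.Surjective (redSymm (p := p) m) := by
  rintro ⟨A, hA⟩
  obtain ⟨s, hs⟩ := (toZModPow_surjective (p := p) m).hasRightInverse
  refine ⟨⟨A.map s, hA.map _⟩, Subtype.ext ?_⟩
  ext i j
  exact hs _

theorem isClopen_redSymm_preimage (m : ℕ)
    (T : Set {A : Matrix (Fin 4) (Fin 4) (ZMod (p ^ m)) // A.IsSymm}) :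
    IsClopen (redSymm (p := p) m ⁻¹' T) := by
  have hentry : Continuous (PadicInt.toZModPow m : ℤ_[p] → ZMod (p ^ m)) := by
    refine ((IsLocallyConstant.iff_eventually_eq _).2 fun x => ?_).continuous
    have hp0 : 0 < (p : ℝ) := by exact_mod_cast (Fact.out : p.Prime).pos
    refine Metric.eventually_nhds_iff.2 ⟨(p : ℝ) ^ (-(m : ℤ)), by positivity, fun y hy => ?_⟩
    rw [dist_eq_norm] at hy
    rw [← sub_eq_zero, ← map_sub, ← RingHom.mem_ker, PadicInt.ker_toZModPow,
      ← PadicInt.norm_le_pow_iff_mem_span_pow]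
    exact hy.le
  have hc : Continuous (redSymm (p := p) m) :=
    Continuous.subtype_mk (continuous_subtype_val.matrix_map hentry) _
  have : DiscreteTopology (Matrix (Fin 4) (Fin 4) (ZMod (p ^ m))) :=
    inferInstanceAs (DiscreteTopology (Fin 4 → Fin 4 → ZMod (p ^ m)))
  exact (isClopen_discrete T).preimage hc

/-- Under a translation-invariant probability measure the `p ^ (10 m)` residue classes modulo
`p ^ m` are equally likely. -/
theorem measure_redSymm_preimage (m : ℕ) (μ : Measure (Sym4 p)) [IsProbabilityMeasure μ]
    (hμ : ∀ B : Sym4 p,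
      μ.map (fun A : Sym4 p => (⟨A.1 + B.1, A.2.add B.2⟩ : Sym4 p)) = μ)
    (T : Set {A : Matrix (Fin 4) (Fin 4) (ZMod (p ^ m)) // A.IsSymm}) :
    μ (redSymm m ⁻¹' T) = (Nat.card T : ENNReal) / (p : ENNReal) ^ (10 * m) := by
  classical
  have : NeZero (p ^ m) := ⟨pow_ne_zero _ (Fact.out : p.Prime).ne_zero⟩
  have : Fintype {A : Matrix (Fin 4) (Fin 4) (ZMod (p ^ m)) // A.IsSymm} := Fintype.ofFinite _
  have hmeas : ∀ T, MeasurableSet (redSymm (p := p) m ⁻¹' T) := fun T =>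
    (isClopen_redSymm_preimage m T).isOpen.measurableSet
  -- all residue classes are translates of the zero class
  have hfib : ∀ c, μ (redSymm m ⁻¹' {c}) = μ (redSymm m ⁻¹' {⟨0, Matrix.isSymm_zero⟩}) := by
    intro c
    obtain ⟨B, rfl⟩ := redSymm_surjective m c
    have hf : Measurable (fun A : Sym4 p => (⟨A.1 + B.1, A.2.add B.2⟩ : Sym4 p)) :=
      (Continuous.subtype_mk (continuous_subtype_val.add continuous_const) _).measurable
    conv_lhs => rw [← hμ B, Measure.map_apply hf (hmeas _)]
    congr 1
    ext A
    simp [redSymm, Subtype.ext_iff, Matrix.map_add]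
  have hsum : ∀ T : Finset {A : Matrix (Fin 4) (Fin 4) (ZMod (p ^ m)) // A.IsSymm},
      μ (redSymm m ⁻¹' (T : Set _)) = T.card * μ (redSymm m ⁻¹' {⟨0, Matrix.isSymm_zero⟩}) := by
    intro T
    rw [← sum_measure_preimage_singleton T fun y _ => hmeas {y}, Finset.sum_congr rfl
      fun c _ => hfib c, Finset.sum_const, nsmul_eq_mul]
  have huniv := hsum Finset.univ
  rw [Finset.coe_univ, Set.preimage_univ, measure_univ, Finset.card_univ,
    ← Nat.card_eq_fintype_card, card_symm, Nat.card_zmod, ← pow_mul, mul_comm m] at huniv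
  have hT := hsum T.toFinset
  rw [Set.coe_toFinset, Set.toFinset_card, ← Nat.card_eq_fintype_card] at hT
  rw [hT, div_eq_mul_inv]
  congr 1
  rw [Nat.cast_pow] at huniv
  exact ENNReal.eq_inv_of_mul_eq_one_left (by rw [mul_comm]; exact huniv.symm)

end Congruence

/-! ### The integral matrix `p ^ K Λ⁻¹` -/

/-- A standard block form is diagonal with entries dividing `p ^ K`, so `p ^ K` times its inverse is
integral. -/
theorem exists_scaled_inverse {p : ℕ} [Fact p.Prime] {z : ℤ_[p]} (hz : IsUnit z)
    {r : ℕ} {k n : Fin r → ℕ} {K : ℕ} (hK : ∀ i, k i ≤ K)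
    {Λb : ∀ i : Fin r, Matrix (Fin (n i)) (Fin (n i)) ℤ_[p]}
    (hΛb : ∀ i, Λb i = 1 ∨
      Λb i = Matrix.diagonal (fun j : Fin (n i) => if (j : ℕ) = n i - 1 then z else 1))
    (e : ((i : Fin r) × Fin (n i)) ≃ Fin 4) :
    ∃ Λ' : Matrix (Fin 4) (Fin 4) ℤ_[p],
      (Matrix.reindex e e (stdBlockForm p r k n Λb)).IsSymm ∧
      Λ' * Matrix.reindex e e (stdBlockForm p r k n Λb) = (p : ℤ_[p]) ^ K • 1 := by
  have hu : ∀ i, ∃ u : Fin (n i) → ℤ_[p], (∀ j, IsUnit (u j)) ∧ Λb i = Matrix.diagonal u := by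
    intro i
    rcases hΛb i with h | h
    · exact ⟨fun _ => 1, fun _ => isUnit_one, by rw [h, Matrix.diagonal_one]⟩
    · exact ⟨_, fun j => by split_ifs <;> simp [hz], h⟩
  choose u hu hΛu using hu
  choose v hv using fun i j => (hu i j).exists_left_inv
  have hdiag : Matrix.reindex e e (stdBlockForm p r k n Λb) =
      Matrix.diagonal fun x => (p : ℤ_[p]) ^ k (e.symm x).1 * u (e.symm x).1 (e.symm x).2 := by
    have : stdBlockForm p r k n Λb =
        Matrix.diagonal fun y => (p : ℤ_[p]) ^ k y.1 * u y.1 y.2 := by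
      refine Eq.trans ?_
        (Matrix.blockDiagonal'_diagonal fun (i : Fin r) j => (p : ℤ_[p]) ^ k i * u i j)
      rw [stdBlockForm]
      congr 1
      funext i
      rw [hΛu i, ← Matrix.diagonal_smul]
      rfl
    rw [this, Matrix.reindex_apply, Matrix.submatrix_diagonal_equiv]
    rfl
  refine ⟨Matrix.diagonal fun x => (p : ℤ_[p]) ^ (K - k (e.symm x).1) *
    v (e.symm x).1 (e.symm x).2, ?_, ?_⟩
  · rw [hdiag]
    exact Matrix.isSymm_diagonal _
  · rw [hdiag, Matrix.diagonal_mul_diagonal, ← Matrix.diagonal_one, ← Matrix.diagonal_smul]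
    congr 1
    funext x
    have h1 := hv (e.symm x).1 (e.symm x).2
    have h2 : (p : ℤ_[p]) ^ (K - k (e.symm x).1) * (p : ℤ_[p]) ^ k (e.symm x).1 =
        (p : ℤ_[p]) ^ K := by
      rw [← pow_add, Nat.sub_add_cancel (hK _)]
    simp only [Pi.smul_apply, smul_eq_mul, mul_one]
    linear_combination (p : ℤ_[p]) ^ (K - k (e.symm x).1) * (p : ℤ_[p]) ^ k (e.symm x).1 * h1 + h2

theorem stmt_8 (ℓ : ℕ) [Fact ℓ.Prime] (hℓ : ℓ ≠ 2)
    -- a non-square unit `z ∈ ℤ_ℓ^×`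
    (z : ℤ_[ℓ]) (hz : IsUnit z) (hznsq : ¬ ∃ y : ℤ_[ℓ], y * y = z)
    -- the data of a standard block form with `n₁ + ⋯ + n_r = 4`
    (r : ℕ) (hr : 0 < r) (k : Fin r → ℕ) (hk : StrictMono k)
    (n : Fin r → ℕ) (hn : ∀ i, 0 < n i) (hsum : ∑ i, n i = 4)
    (Λb : ∀ i : Fin r, Matrix (Fin (n i)) (Fin (n i)) ℤ_[ℓ])
    (hΛb : ∀ i, Λb i = 1 ∨
      Λb i = Matrix.diagonal (fun j : Fin (n i) => if (j : ℕ) = n i - 1 then z else 1))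
    -- `Λ` regarded as a `4×4` matrix via an identification of the index set with `Fin 4`
    (e : ((i : Fin r) × Fin (n i)) ≃ Fin 4)
    (Λ : Matrix (Fin 4) (Fin 4) ℤ_[ℓ])
    (hΛ : Λ = Matrix.reindex e e (stdBlockForm ℓ r k n Λb))
    -- the congruence class `E(Λ) ⊆ Sym₄(ℤ_ℓ)`
    (EΛ : Set (Sym4 ℓ))
    (hEΛ : EΛ = {B : Sym4 ℓ | ∃ D : Matrix (Fin 4) (Fin 4) ℤ_[ℓ],
      IsUnit D.det ∧ (B : Matrix (Fin 4) (Fin 4) ℤ_[ℓ]) = D * Λ * Dᵀ}) :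
    -- `E(Λ)` is open and closed in `Sym₄(ℤ_ℓ)`
    IsOpen EΛ ∧ IsClosed EΛ ∧
    -- and for the Haar probability measure `μ` on `Sym₄(ℤ_ℓ)` (characterized as a
    -- translation-invariant Borel probability measure) one has
    -- `μ(E(Λ)) = ℓ^{−10(k_r+1)} · #{B̄ ∈ Sym₄(ℤ/ℓ^{k_r+1}) : B̄ congruent to Λ̄}`
    (∀ μ : Measure (Sym4 ℓ), IsProbabilityMeasure μ →
      (∀ B : Sym4 ℓ, μ.map (fun A : Sym4 ℓ => (⟨A.1 + B.1, A.2.add B.2⟩ : Sym4 ℓ)) = μ) →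
      μ EΛ =
        (Nat.card {Bbar : Matrix (Fin 4) (Fin 4)
            (ZMod (ℓ ^ (k ⟨r - 1, Nat.sub_lt hr Nat.one_pos⟩ + 1))) //
          Bbar.IsSymm ∧
          ∃ D : Matrix (Fin 4) (Fin 4) (ZMod (ℓ ^ (k ⟨r - 1, Nat.sub_lt hr Nat.one_pos⟩ + 1))),
            IsUnit D.det ∧
            Bbar = D * Λ.map (PadicInt.toZModPow (k ⟨r - 1, Nat.sub_lt hr Nat.one_pos⟩ + 1)) * Dᵀ}
          : ENNReal) /
        (ℓ : ENNReal) ^ (10 * (k ⟨r - 1, Nat.sub_lt hr Nat.one_pos⟩ + 1))) := by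
  generalize hK : k ⟨r - 1, Nat.sub_lt hr Nat.one_pos⟩ = K
  have hle : ∀ i, k i ≤ K := fun i => by
    rw [← hK]
    exact hk.monotone (Fin.mk_le_mk.2 (Nat.le_sub_one_of_lt i.2) : i ≤ _)
  obtain ⟨Λ', hΛs, hinv⟩ := exists_scaled_inverse hz hle hΛb e
  rw [← hΛ] at hΛs hinv
  set T : Set {A : Matrix (Fin 4) (Fin 4) (ZMod (ℓ ^ (K + 1))) // A.IsSymm} :=
    {A | ∃ D : Matrix (Fin 4) (Fin 4) (ZMod (ℓ ^ (K + 1))), IsUnit D.det ∧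
      A.1 = D * Λ.map (PadicInt.toZModPow (K + 1)) * Dᵀ} with hT
  -- the congruence class is the full preimage of its reduction modulo `ℓ ^ (K + 1)`
  have hE : EΛ = redSymm (K + 1) ⁻¹' T := by
    rw [hEΛ]
    ext B
    constructor
    · rintro ⟨D, hD, hB⟩
      refine ⟨D.map (PadicInt.toZModPow (K + 1)), ?_, ?_⟩
      · have := hD.map (PadicInt.toZModPow (p := ℓ) (K + 1))
        rwa [RingHom.map_det] at this
      · rw [← map_congr_mul, ← hB]
        rfl
    · rintro ⟨Dbar, hDbar, hB⟩
      obtain ⟨s, hs⟩ := (toZModPow_surjective (p := ℓ) (K + 1)).hasRightInverse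
      have hlift : (Dbar.map s).map (PadicInt.toZModPow (K + 1)) = Dbar := by
        ext i j
        exact hs _
      refine exists_congr_of_map_eq hℓ hΛs hinv B.2 ⟨Dbar.map s, ?_, ?_⟩
      · exact isUnit_det_of_map (Nat.succ_ne_zero K) (by rwa [hlift])
      · rw [map_congr_mul, hlift]
        exact hB
  have hclopen := isClopen_redSymm_preimage (p := ℓ) (K + 1) T
  rw [hE]
  refine ⟨hclopen.isOpen, hclopen.isClosed, fun μ _ hμ => ?_⟩
  rw [measure_redSymm_preimage (K + 1) μ hμ T]
  congr 2
  exact Nat.card_congr (Equiv.subtypeSubtypeEquivSubtypeInter Matrix.IsSymm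
    fun A : Matrix (Fin 4) (Fin 4) (ZMod (ℓ ^ (K + 1))) =>
      ∃ D : Matrix (Fin 4) (Fin 4) (ZMod (ℓ ^ (K + 1))), IsUnit D.det ∧
        A = D * Λ.map (PadicInt.toZModPow (K + 1)) * Dᵀ)
end
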